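/- Assume rᵐsⁿ = 1 implies m = n = 0 (r ≠ s). Every K-algebra endomorphism of the localized down-up algebra A_S(r+s, -rs) is an algebra automorphism. -/

import Mathlib

noncomputable section

/-- The defining relations of the localized down-up algebra
`A_S(r+s, -rs)`: generators `0 = d`, `1 = u`, `2 = x⁻¹`, `3 = y⁻¹`, with the
down-up relations together with the relations making `2` a two-sided inverse of
`x = du - r·ud` and `3` a two-sided inverse of `y = ud - s·du`. -/
inductive DULRel (K : Type) [CommRing K] (r s : K) :
    FreeAlgebra K (Fin 4) → FreeAlgebra K (Fin 4) → Prop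
  | rel1 : DULRel K r s
      (FreeAlgebra.ι K 0 * FreeAlgebra.ι K 0 * FreeAlgebra.ι K 1)
      ((r + s) • (FreeAlgebra.ι K 0 * FreeAlgebra.ι K 1 * FreeAlgebra.ι K 0)
        - (r * s) • (FreeAlgebra.ι K 1 * FreeAlgebra.ι K 0 * FreeAlgebra.ι K 0))
  | rel2 : DULRel K r s
      (FreeAlgebra.ι K 0 * FreeAlgebra.ι K 1 * FreeAlgebra.ι K 1)
      ((r + s) • (FreeAlgebra.ι K 1 * FreeAlgebra.ι K 0 * FreeAlgebra.ι K 1)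
        - (r * s) • (FreeAlgebra.ι K 1 * FreeAlgebra.ι K 1 * FreeAlgebra.ι K 0))
  | xinvr : DULRel K r s
      ((FreeAlgebra.ι K 0 * FreeAlgebra.ι K 1
          - r • (FreeAlgebra.ι K 1 * FreeAlgebra.ι K 0)) * FreeAlgebra.ι K 2) 1
  | xinvl : DULRel K r s
      (FreeAlgebra.ι K 2 * (FreeAlgebra.ι K 0 * FreeAlgebra.ι K 1
          - r • (FreeAlgebra.ι K 1 * FreeAlgebra.ι K 0))) 1
  | yinvr : DULRel K r s
      ((FreeAlgebra.ι K 1 * FreeAlgebra.ι K 0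
          - s • (FreeAlgebra.ι K 0 * FreeAlgebra.ι K 1)) * FreeAlgebra.ι K 3) 1
  | yinvl : DULRel K r s
      (FreeAlgebra.ι K 3 * (FreeAlgebra.ι K 1 * FreeAlgebra.ι K 0
          - s • (FreeAlgebra.ι K 0 * FreeAlgebra.ι K 1))) 1

/-- The localized down-up algebra `A_S(r+s, -rs)`, the localization of
`A(r+s, -rs)` at the Ore set `S = {xⁱyʲ}` generated by the normal elements
`x` and `y` (presented as the universal algebra inverting `x` and `y`). -/
abbrev DUL (K : Type) [CommRing K] (r s : K) : Type := RingQuot (DULRel K r s)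

/-- The generator `d` of `A_S(r+s, -rs)`. -/
def DUL.d (K : Type) [CommRing K] (r s : K) : DUL K r s :=
  RingQuot.mkAlgHom K (DULRel K r s) (FreeAlgebra.ι K 0)

/-- The generator `u` of `A_S(r+s, -rs)`. -/
def DUL.u (K : Type) [CommRing K] (r s : K) : DUL K r s :=
  RingQuot.mkAlgHom K (DULRel K r s) (FreeAlgebra.ι K 1)

/-- The element `x = du - r·ud` of `A_S(r+s, -rs)` (a unit there). -/
def DUL.x (K : Type) [CommRing K] (r s : K) : DUL K r s :=
  DUL.d K r s * DUL.u K r s - r • (DUL.u K r s * DUL.d K r s)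

/-- The element `y = ud - s·du` of `A_S(r+s, -rs)` (a unit there). -/
def DUL.y (K : Type) [CommRing K] (r s : K) : DUL K r s :=
  DUL.u K r s * DUL.d K r s - s • (DUL.d K r s * DUL.u K r s)

/-! ### The twisted Laurent algebra over `K⟦t⟧` -/

/-- Finite sums `∑ f x^i d^n` with `f ∈ K⟦t⟧`. -/
def TW (K : Type) [Field K] (_q _s : Kˣ) : Type := (ℤ × ℤ) →₀ PowerSeries K

namespace TW
variable {K : Type} [Field K] {q s : Kˣ}

instance : AddCommGroup (TW K q s) := inferInstanceAs (AddCommGroup ((ℤ × ℤ) →₀ PowerSeries K))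
instance : Module K (TW K q s) := inferInstanceAs (Module K ((ℤ × ℤ) →₀ PowerSeries K))

/-- The monomial `f x^i d^n`. -/
def sg (g : ℤ × ℤ) (f : PowerSeries K) : TW K q s := Finsupp.single g f

/-- coefficient -/
def co (a : TW K q s) (g : ℤ × ℤ) : PowerSeries K := (show (ℤ × ℤ) →₀ PowerSeries K from a) g

/-- support -/
def su (a : TW K q s) : Finset (ℤ × ℤ) := (show (ℤ × ℤ) →₀ PowerSeries K from a).support

theorem mem_su (a : TW K q s) (g) : g ∈ a.su ↔ a.co g ≠ 0 := Finsupp.mem_support_iff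

@[ext] theorem ext {a b : TW K q s} (h : ∀ g, a.co g = b.co g) : a = b := Finsupp.ext h

@[simp] theorem co_add (a b : TW K q s) (g) : (a + b).co g = a.co g + b.co g := Finsupp.add_apply _ _ _
@[simp] theorem co_sub (a b : TW K q s) (g) : (a - b).co g = a.co g - b.co g := Finsupp.sub_apply _ _ _
@[simp] theorem co_neg (a : TW K q s) (g) : (-a).co g = - a.co g := Finsupp.neg_apply _ _
@[simp] theorem co_zero (g) : (0 : TW K q s).co g = 0 := rfl
@[simp] theorem co_smul (k : K) (a : TW K q s) (g) : (k • a).co g = k • a.co g :=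
  Finsupp.smul_apply _ _ _

theorem co_sg (g : ℤ × ℤ) (f : PowerSeries K) (h) :
    (sg g f : TW K q s).co h = if g = h then f else 0 := by
  classical
  exact Finsupp.single_apply

@[simp] theorem co_sg_self (g : ℤ × ℤ) (f : PowerSeries K) :
    (sg g f : TW K q s).co g = f := by rw [co_sg, if_pos rfl]

theorem sg_add (g : ℤ × ℤ) (f f' : PowerSeries K) :
    (sg g (f + f') : TW K q s) = sg g f + sg g f' := Finsupp.single_add _ _ _
theorem sg_sub (g : ℤ × ℤ) (f f' : PowerSeries K) :
    (sg g (f - f') : TW K q s) = sg g f - sg g f' := Finsupp.single_sub _ _ _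
@[simp] theorem sg_zero (g : ℤ × ℤ) : (sg g 0 : TW K q s) = 0 := Finsupp.single_zero _
theorem smul_sg (k : K) (g : ℤ × ℤ) (f : PowerSeries K) :
    k • (sg g f : TW K q s) = sg g (k • f) := Finsupp.smul_single _ _ _

theorem induct {p : TW K q s → Prop} (a : TW K q s) (h0 : p 0) (ha : ∀ a b, p a → p b → p (a + b))
    (hs : ∀ g f, p (sg g f)) : p a :=
  Finsupp.induction_linear (motive := p) a h0 ha hs

variable (q) in
/-- the twist -/
def act (n : ℤ) : PowerSeries K →+* PowerSeries K := PowerSeries.rescale ((q ^ n : Kˣ) : K)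

theorem act_add (m n : ℤ) (f : PowerSeries K) : act q (m + n) f = act q m (act q n f) := by
  ext k
  simp [act, zpow_add, mul_pow, mul_assoc, PowerSeries.coeff_rescale]

@[simp] theorem act_zero (f : PowerSeries K) : act q 0 f = f := by
  simp [act]

@[simp] theorem act_C (m : ℤ) (k : K) : act q m (PowerSeries.C k) = PowerSeries.C k := by
  ext j
  rcases j with _ | j <;> simp [act, PowerSeries.coeff_rescale, PowerSeries.coeff_C]

@[simp] theorem act_X (m : ℤ) :
    act q m (PowerSeries.X : PowerSeries K) = PowerSeries.C ((q ^ m : Kˣ) : K) * PowerSeries.X := by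
  simp [act, PowerSeries.rescale_X]

@[simp] theorem act_smul (m : ℤ) (k : K) (f : PowerSeries K) : act q m (k • f) = k • act q m f := by
  rw [PowerSeries.smul_eq_C_mul, map_mul, act_C, PowerSeries.smul_eq_C_mul]

theorem act_inj (m : ℤ) {f : PowerSeries K} (h : act q m f = 0) : f = 0 := by
  have := act_add (q := q) (-m) m f
  rw [h] at this
  simpa using this

theorem act_ne (m : ℤ) {f : PowerSeries K} (h : f ≠ 0) : act q m f ≠ 0 := fun h' => h (act_inj m h')

variable (s) in
/-- the cocycle -/
def chi (g h : ℤ × ℤ) : PowerSeries K := PowerSeries.C ((s ^ (g.2 * h.1) : Kˣ) : K)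

theorem chi_ne (g h : ℤ × ℤ) : (chi s g h : PowerSeries K) ≠ 0 := by
  unfold chi
  intro h'
  have := congrArg PowerSeries.constantCoeff h'
  simp at this
  exact absurd this (zpow_ne_zero _ s.ne_zero)

variable (q s) in
/-- inner multiplication -/
def mulAux (g h : ℤ × ℤ) (f : PowerSeries K) : PowerSeries K →+ ((ℤ × ℤ) →₀ PowerSeries K) where
  toFun f' := Finsupp.single (g + h) (f * act q g.2 f' * chi s g h)
  map_zero' := by simp only [map_zero, mul_zero, zero_mul, Finsupp.single_zero]
  map_add' a b := by rw [map_add, mul_add, add_mul, Finsupp.single_add]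

variable (q s) in
/-- outer multiplication -/
def mulAux2 (g : ℤ × ℤ) :
    PowerSeries K →+ (((ℤ × ℤ) →₀ PowerSeries K) →+ ((ℤ × ℤ) →₀ PowerSeries K)) where
  toFun f := Finsupp.liftAddHom fun h => mulAux q s g h f
  map_zero' := by
    refine Finsupp.addHom_ext fun h f' => ?_
    rw [Finsupp.liftAddHom_apply_single, AddMonoidHom.zero_apply]
    change Finsupp.single _ _ = _
    simp only [zero_mul, Finsupp.single_zero]
  map_add' a b := by
    refine Finsupp.addHom_ext fun h f' => ?_
    rw [AddMonoidHom.add_apply, Finsupp.liftAddHom_apply_single, Finsupp.liftAddHom_apply_single,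
      Finsupp.liftAddHom_apply_single]
    change Finsupp.single _ _ = Finsupp.single _ _ + Finsupp.single _ _
    rw [add_mul, add_mul, Finsupp.single_add]

variable (q s) in
/-- the multiplication on finitely supported functions -/
def mulAux3 :
    ((ℤ × ℤ) →₀ PowerSeries K) →+ (((ℤ × ℤ) →₀ PowerSeries K) →+ ((ℤ × ℤ) →₀ PowerSeries K)) :=
  Finsupp.liftAddHom (mulAux2 q s)

/-- the multiplication as a biadditive map -/
def mulHom : TW K q s →+ TW K q s →+ TW K q s := mulAux3 q s

instance : Mul (TW K q s) := ⟨fun a b => mulHom a b⟩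
instance : One (TW K q s) := ⟨sg 0 1⟩

theorem one_def : (1 : TW K q s) = sg 0 1 := rfl

theorem sg_mul (g h : ℤ × ℤ) (f f' : PowerSeries K) :
    (sg g f * sg h f' : TW K q s) = sg (g + h) (f * act q g.2 f' * chi s g h) := by
  change mulHom (sg g f) (sg h f') = _
  change mulAux3 q s (Finsupp.single g f) (Finsupp.single h f') = _
  unfold mulAux3
  rw [Finsupp.liftAddHom_apply_single]
  change (Finsupp.liftAddHom fun h => mulAux q s g h f) (Finsupp.single h f') = _
  rw [Finsupp.liftAddHom_apply_single]
  rfl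

theorem mul_add' (a b c : TW K q s) : a * (b + c) = a * b + a * c := map_add (mulHom a) b c
theorem add_mul' (a b c : TW K q s) : (a + b) * c = a * c + b * c := by
  change mulHom (a + b) c = _
  rw [map_add]; rfl
theorem zero_mul' (a : TW K q s) : 0 * a = 0 := by
  change mulHom 0 a = 0
  rw [map_zero]; rfl
theorem mul_zero' (a : TW K q s) : a * 0 = 0 := map_zero (mulHom a)

theorem mul_assoc' (a b c : TW K q s) : a * b * c = a * (b * c) := by
  induction a using induct with
  | h0 => simp only [zero_mul']
  | ha a a' h h' => simp only [add_mul', h, h']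
  | hs g f =>
  induction b using induct with
  | h0 => simp only [zero_mul', mul_zero']
  | ha a a' h h' => simp only [add_mul', mul_add', h, h']
  | hs g' f' =>
  induction c using induct with
  | h0 => simp only [mul_zero']
  | ha a a' h h' => simp only [mul_add', h, h']
  | hs g'' f'' =>
    simp only [sg_mul, map_mul, Prod.snd_add, act_add, chi, act_C, add_assoc, Prod.fst_add]
    congr 1
    have : ((s ^ (g.2 * g'.1) : Kˣ) : K) * ((s ^ ((g.2 + g'.2) * g''.1) : Kˣ) : K) =
      ((s ^ (g'.2 * g''.1) : Kˣ) : K) * ((s ^ (g.2 * (g'.1 + g''.1)) : Kˣ) : K) := by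
      rw [← Units.val_mul, ← Units.val_mul, ← zpow_add, ← zpow_add]
      congr 2; ring
    have h2 := congrArg (PowerSeries.C (R := K)) this
    rw [map_mul, map_mul] at h2
    linear_combination (f * act q g.2 f' * act q g.2 (act q g'.2 f'')) * h2

instance : Ring (TW K q s) :=
  { (inferInstance : AddCommGroup (TW K q s)) with
    mul := (· * ·)
    one := 1
    left_distrib := mul_add'
    right_distrib := add_mul'
    zero_mul := zero_mul'
    mul_zero := mul_zero'
    mul_assoc := mul_assoc'
    one_mul := fun a => by
      induction a using induct with
      | h0 => exact mul_zero' _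
      | ha a a' h h' => rw [mul_add', h, h']
      | hs g f => rw [one_def, sg_mul]; simp [chi]
    mul_one := fun a => by
      induction a using induct with
      | h0 => exact zero_mul' _
      | ha a a' h h' => rw [add_mul', h, h']
      | hs g f => rw [one_def, sg_mul]; simp [chi] }

instance : Algebra K (TW K q s) := Algebra.ofModule
  (fun k a b => by
    induction a using induct with
    | h0 => simp
    | ha a a' h h' => simp only [add_mul, h, h', smul_add]
    | hs g f =>
    induction b using induct with
    | h0 => simp
    | ha a a' h h' => simp only [mul_add, h, h', smul_add]
    | hs g' f' => simp only [smul_sg, sg_mul, smul_mul_assoc])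
  (fun k a b => by
    induction a using induct with
    | h0 => simp
    | ha a a' h h' => simp only [add_mul, h, h', smul_add]
    | hs g f =>
    induction b using induct with
    | h0 => simp
    | ha a a' h h' => simp only [mul_add, h, h', smul_add]
    | hs g' f' => simp only [smul_sg, sg_mul, smul_mul_assoc, act_smul, mul_smul_comm])

theorem algebraMap_def (k : K) : algebraMap K (TW K q s) k = sg 0 (PowerSeries.C k) := by
  rw [Algebra.algebraMap_eq_smul_one, one_def, smul_sg, PowerSeries.smul_eq_C_mul, mul_one]

theorem eq_sum (a : TW K q s) : a = ∑ g ∈ a.su, sg g (a.co g) :=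
  (Finsupp.sum_single (show (ℤ × ℤ) →₀ PowerSeries K from a)).symm

theorem co_sum {ι : Type*} (S : Finset ι) (F : ι → TW K q s) (g) :
    (∑ i ∈ S, F i).co g = ∑ i ∈ S, (F i).co g :=
  map_sum (AddMonoidHom.mk' (fun a : TW K q s => a.co g) (fun a b => co_add a b g)) F S

theorem co_mul (a b : TW K q s) (k : ℤ × ℤ) :
    (a * b).co k = ∑ g ∈ a.su, ∑ h ∈ b.su,
      if g + h = k then a.co g * act q g.2 (b.co h) * chi s g h else 0 := by
  conv_lhs => rw [eq_sum a, eq_sum b]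
  rw [Finset.sum_mul_sum, co_sum]
  refine Finset.sum_congr rfl fun g _ => ?_
  rw [co_sum]
  refine Finset.sum_congr rfl fun h _ => ?_
  rw [sg_mul, co_sg]

theorem co_mul_unique (a b : TW K q s) (g h : ℤ × ℤ) (hg : g ∈ a.su) (hh : h ∈ b.su)
    (hu : UniqueAdd a.su b.su g h) :
    (a * b).co (g + h) = a.co g * act q g.2 (b.co h) * chi s g h := by
  rw [co_mul, Finset.sum_eq_single g, Finset.sum_eq_single h, if_pos rfl]
  · intro h' hh' hne
    rw [if_neg]
    intro he
    exact hne (hu hg hh' he).2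
  · intro h'; exact absurd hh h'
  · intro g' hg' hne
    refine Finset.sum_eq_zero fun h' hh' => ?_
    rw [if_neg]
    intro he
    exact hne (hu hg' hh' he).1
  · intro h'; exact absurd hg h'

theorem co_mul_unique_ne (a b : TW K q s) (g h : ℤ × ℤ) (hg : g ∈ a.su) (hh : h ∈ b.su)
    (hu : UniqueAdd a.su b.su g h) : (a * b).co (g + h) ≠ 0 := by
  rw [co_mul_unique a b g h hg hh hu]
  rw [mem_su] at hg hh
  exact mul_ne_zero (mul_ne_zero hg (act_ne _ hh)) (chi_ne _ _)

theorem su_nonempty {a : TW K q s} (h : a ≠ 0) : a.su.Nonempty := Finsupp.support_nonempty_iff.2 h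

instance : NoZeroDivisors (TW K q s) := ⟨fun {a b} hab => by
  by_contra hne
  push Not at hne
  obtain ⟨g, hg, h, hh, hu⟩ := UniqueSums.uniqueAdd_of_nonempty (su_nonempty hne.1) (su_nonempty hne.2)
  apply co_mul_unique_ne a b g h hg hh hu
  rw [hab]; rfl⟩

instance : Nontrivial (TW K q s) := ⟨⟨0, 1, fun h => by
  have := congrArg (fun a => co a 0) h
  simp [one_def] at this⟩⟩

/-- factors of monomials are monomials -/
theorem mono_of_mul {a b : TW K q s} {g0 : ℤ × ℤ} {f0 : PowerSeries K} (hf : f0 ≠ 0)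
    (h : a * b = sg g0 f0) :
    ∃ g h f f', f ≠ 0 ∧ f' ≠ 0 ∧ a = sg g f ∧ b = sg h f' ∧ g + h = g0 ∧
      f * act q g.2 f' * chi s g h = f0 := by
  have hne : a * b ≠ 0 := by
    rw [h]; intro h0
    have := congrArg (fun a => co a g0) h0
    simp at this; exact hf this
  have ha : a ≠ 0 := left_ne_zero_of_mul hne
  have hb : b ≠ 0 := right_ne_zero_of_mul hne
  have hcard : a.su.card * b.su.card ≤ 1 := by
    by_contra hc
    push Not at hc
    obtain ⟨p1, h1, p2, h2, hne, u1, u2⟩ := TwoUniqueSums.uniqueAdd_of_one_lt_card hc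
    rw [Finset.mem_product] at h1 h2
    have e1 := co_mul_unique_ne a b _ _ h1.1 h1.2 u1
    have e2 := co_mul_unique_ne a b _ _ h2.1 h2.2 u2
    rw [h, co_sg] at e1 e2
    have e1' : g0 = p1.1 + p1.2 := by by_contra hc; simp [hc] at e1
    have e2' : g0 = p2.1 + p2.2 := by by_contra hc; simp [hc] at e2
    have := u1 h2.1 h2.2 (by rw [← e1', ← e2'])
    exact hne (Prod.ext this.1.symm this.2.symm)
  have pa := Finset.card_pos.2 (su_nonempty ha)
  have pb := Finset.card_pos.2 (su_nonempty hb)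
  have ca : a.su.card = 1 := by nlinarith
  have cb : b.su.card = 1 := by nlinarith
  obtain ⟨g, hg⟩ := Finset.card_eq_one.1 ca
  obtain ⟨k, hk⟩ := Finset.card_eq_one.1 cb
  have ea : a = sg g (a.co g) := by conv_lhs => rw [eq_sum a, hg, Finset.sum_singleton]
  have eb : b = sg k (b.co k) := by conv_lhs => rw [eq_sum b, hk, Finset.sum_singleton]
  have fa : a.co g ≠ 0 := by rw [← mem_su, hg]; simp
  have fb : b.co k ≠ 0 := by rw [← mem_su, hk]; simp
  have e : sg (g + k) (a.co g * act q g.2 (b.co k) * chi s g k) = (sg g0 f0 : TW K q s) := by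
    rw [← sg_mul, ← ea, ← eb, h]
  have hgk : g + k = g0 := by
    by_contra hc
    have := congrArg (fun a => co a g0) e
    simp only [co_sg, if_neg hc, if_pos] at this
    exact hf this.symm
  refine ⟨g, k, _, _, fa, fb, ea, eb, hgk, ?_⟩
  have := congrArg (fun a => co a g0) e
  rw [hgk] at this
  simpa using this

theorem sg_inj {g h : ℤ × ℤ} {f f' : PowerSeries K} (hf : f ≠ 0)
    (e : (sg g f : TW K q s) = sg h f') : g = h ∧ f = f' := by
  have := congrArg (fun a => co a g) e
  simp only [co_sg_self, co_sg] at this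
  by_cases hh : h = g
  · subst hh; simpa using this
  · rw [if_neg hh] at this; exact absurd this hf

end TW

/-! ### The relation data -/

/-- A system of elements satisfying the relations. -/
structure RD {K : Type} [Field K] (q s : Kˣ) (κ c : K) (B : Type) [Ring B] [Algebra K B] where
  d : B
  u : B
  x : B
  xi : B
  t : B
  ti : B
  dx : d * x = (s : K) • (x * d)
  xu : x * u = (s : K) • (u * x)
  dt : d * t = (q : K) • (t * d)
  tu : t * u = (q : K) • (u * t)
  xt : x * t = t * x
  ud : u * d = κ • (x * (t - 1))
  du : d * u = (κ * s) • (x * ((q : K) • t - 1))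
  x_xi : x * xi = 1
  xi_x : xi * x = 1
  t_ti : (t - c • (1 : B)) * ti = 1
  ti_t : ti * (t - c • (1 : B)) = 1

namespace RD
variable {K : Type} [Field K] {q s : Kˣ} {κ c : K} {B : Type} [Ring B] [Algebra K B]

/-- image under an algebra map -/
def map {C : Type} [Ring C] [Algebra K C] (R : RD q s κ c B) (f : B →ₐ[K] C) : RD q s κ c C where
  d := f R.d
  u := f R.u
  x := f R.x
  xi := f R.xi
  t := f R.t
  ti := f R.ti
  dx := by simpa using congrArg f R.dx
  xu := by simpa using congrArg f R.xu
  dt := by simpa using congrArg f R.dt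
  tu := by simpa using congrArg f R.tu
  xt := by simpa using congrArg f R.xt
  ud := by simpa using congrArg f R.ud
  du := by simpa using congrArg f R.du
  x_xi := by simpa using congrArg f R.x_xi
  xi_x := by simpa using congrArg f R.xi_x
  t_ti := by simpa using congrArg f R.t_ti
  ti_t := by simpa using congrArg f R.ti_t

/-- generation -/
def Gen (R : RD q s κ c B) : Prop := Algebra.adjoin K {R.d, R.u, R.x, R.xi, R.t, R.ti} = ⊤

/-- universality -/
def Univ (R : RD q s κ c B) : Prop :=
  ∀ (C : Type) [Ring C] [Algebra K C] (S : RD q s κ c C),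
    ∃ f : B →ₐ[K] C, f R.d = S.d ∧ f R.u = S.u ∧ f R.x = S.x ∧ f R.t = S.t

theorem ux (R : RD q s κ c B) : R.u * R.x = ((s⁻¹ : Kˣ) : K) • (R.x * R.u) := by
  rw [R.xu, smul_smul, ← Units.val_mul]; simp

theorem ut (R : RD q s κ c B) : R.u * R.t = ((q⁻¹ : Kˣ) : K) • (R.t * R.u) := by
  rw [R.tu, smul_smul, ← Units.val_mul]; simp

theorem td (R : RD q s κ c B) : R.t * R.d = ((q⁻¹ : Kˣ) : K) • (R.d * R.t) := by
  rw [R.dt, smul_smul, ← Units.val_mul]; simp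

theorem xd (R : RD q s κ c B) : R.x * R.d = ((s⁻¹ : Kˣ) : K) • (R.d * R.x) := by
  rw [R.dx, smul_smul, ← Units.val_mul]; simp

theorem isUnit_x (R : RD q s κ c B) : IsUnit R.x := ⟨⟨R.x, R.xi, R.x_xi, R.xi_x⟩, rfl⟩
theorem isUnit_tc (R : RD q s κ c B) : IsUnit (R.t - c • (1 : B)) := ⟨⟨_, R.ti, R.t_ti, R.ti_t⟩, rfl⟩

/-- the swapped data -/
def swap (R : RD q s κ c B) : RD q⁻¹ s⁻¹ (κ * s) (c * q) B where
  d := R.u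
  u := R.d
  x := R.x
  xi := R.xi
  t := (q : K) • R.t
  ti := ((q⁻¹ : Kˣ) : K) • R.ti
  dx := R.ux
  xu := R.xd
  dt := by rw [mul_smul_comm, R.ut, smul_mul_assoc, smul_comm]
  tu := by rw [mul_smul_comm, smul_mul_assoc, R.td, smul_comm]
  xt := by rw [mul_smul_comm, smul_mul_assoc, R.xt]
  ud := R.du
  du := by
    rw [R.ud, smul_smul, ← Units.val_mul, inv_mul_cancel, Units.val_one, one_smul, mul_assoc,
      ← Units.val_mul, mul_inv_cancel, Units.val_one, mul_one]
  x_xi := R.x_xi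
  xi_x := R.xi_x
  t_ti := by
    rw [mul_comm c, mul_smul, ← smul_sub, smul_mul_smul_comm, R.t_ti, ← Units.val_mul]; simp
  ti_t := by
    rw [mul_comm c, mul_smul, ← smul_sub, smul_mul_smul_comm, R.ti_t, ← Units.val_mul]; simp

theorem swap_gen {R : RD q s κ c B} (h : R.Gen) : R.swap.Gen := by
  unfold Gen at *
  rw [eq_top_iff, ← h]
  apply Algebra.adjoin_le
  intro z hz
  have hm : ∀ w ∈ ({R.swap.d, R.swap.u, R.swap.x, R.swap.xi, R.swap.t, R.swap.ti} : Set B),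
     w ∈ Algebra.adjoin K {R.swap.d, R.swap.u, R.swap.x, R.swap.xi, R.swap.t, R.swap.ti} :=
    fun w hw => Algebra.subset_adjoin hw
  simp only [Set.mem_insert_iff, Set.mem_singleton_iff] at hz
  rcases hz with rfl | rfl | rfl | rfl | rfl | rfl
  · exact hm R.swap.u (by simp)
  · exact hm R.swap.d (by simp)
  · exact hm R.swap.x (by simp)
  · exact hm R.swap.xi (by simp)
  · have := Subalgebra.smul_mem _ (hm R.swap.t (by simp)) ((q⁻¹ : Kˣ) : K)
    simpa [swap] using this
  · have := Subalgebra.smul_mem _ (hm R.swap.ti (by simp)) (q : K)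
    simpa [swap] using this

theorem swap_univ {R : RD q s κ c B} (h : R.Univ) : R.swap.Univ := by
  intro C _ _ S
  have key : ∀ {q' s' : Kˣ} {κ' c' : K} (S' : RD q' s' κ' c' C) (h1 : q' = q) (h2 : s' = s)
      (h3 : κ' = κ) (h4 : c' = c), ∃ f : B →ₐ[K] C, f R.d = S'.d ∧ f R.u = S'.u ∧ f R.x = S'.x ∧
        f R.t = S'.t := by
    intro q' s' κ' c' S' h1 h2 h3 h4
    subst h1; subst h2; subst h3; subst h4
    exact h C S'
  have h1 : q⁻¹⁻¹ = q := inv_inv q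
  have h2 : s⁻¹⁻¹ = s := inv_inv s
  have h3 : κ * s * ((s⁻¹ : Kˣ) : K) = κ := by rw [mul_assoc, ← Units.val_mul]; simp
  have h4 : c * q * ((q⁻¹ : Kˣ) : K) = c := by rw [mul_assoc, ← Units.val_mul]; simp
  obtain ⟨f, e1, e2, e3, e4⟩ := key S.swap h1 h2 h3 h4
  refine ⟨f, e2, e1, e3, ?_⟩
  change f ((q : K) • R.t) = _
  rw [map_smul, e4]
  simp [swap]

/-- moving units up -/
theorem unit_up (R : RD q s κ c B) (hκ : κ ≠ 0) {a : K} (ha : (q : K) * a ≠ 1)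
    (h : IsUnit (R.t - a • (1 : B))) : IsUnit (R.t - ((q : K) * a) • (1 : B)) := by
  obtain ⟨g, hg⟩ := h
  have e1 : (R.t - ((q : K) * a) • (1 : B)) * R.u = (q : K) • (R.u * g) := by
    rw [hg, sub_mul, R.tu, mul_sub, smul_sub, smul_mul_assoc, one_mul, mul_smul_comm, mul_one,
      smul_smul]
  have e2 : R.d * (R.t - ((q : K) * a) • (1 : B)) = (q : K) • (g * R.d) := by
    rw [hg, mul_sub, R.dt, sub_mul, smul_sub, smul_mul_assoc, one_mul, mul_smul_comm, mul_one,
      smul_smul]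
  set z := R.u * ((g⁻¹ : Bˣ) : B) * R.d with hz
  have z1 : (R.t - ((q : K) * a) • (1 : B)) * z = (q : K) • (R.u * R.d) := by
    rw [hz, ← mul_assoc, ← mul_assoc, e1]
    simp [mul_assoc]
  have z2 : z * (R.t - ((q : K) * a) • (1 : B)) = (q : K) • (R.u * R.d) := by
    rw [hz, mul_assoc, e2]
    simp [mul_assoc]
  have hk : (1 - q * a : K) ≠ 0 := sub_ne_zero.2 (Ne.symm ha)
  have hX : R.xi * (R.u * R.d) = κ • (R.t - 1) := by
    rw [R.ud, mul_smul_comm, ← mul_assoc, R.xi_x, one_mul]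
  have hX' : (R.u * R.d) * R.xi = κ • (R.t - 1) := by
    rw [R.ud, smul_mul_assoc, mul_sub, mul_one, R.xt, sub_mul, mul_assoc, R.x_xi, mul_one]
  have hxi : (R.t - ((q : K) * a) • (1 : B)) * R.xi = R.xi * (R.t - ((q : K) * a) • (1 : B)) := by
    have : R.t * R.xi = R.xi * R.t := by
      calc R.t * R.xi = R.xi * (R.x * R.t) * R.xi := by rw [← mul_assoc, R.xi_x, one_mul]
        _ = _ := by rw [R.xt, mul_assoc, mul_assoc, R.x_xi, mul_one]
    rw [sub_mul, mul_sub, this]; simp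
  have hq : (q : K) ≠ 0 := q.ne_zero
  refine ⟨⟨_, (1 - q * a : K)⁻¹ • ((1 : B) - ((q : K) * κ)⁻¹ • (R.xi * z)), ?_, ?_⟩, rfl⟩
  · have : (R.t - ((q : K) * a) • (1 : B)) * ((q * κ : K)⁻¹ • (R.xi * z)) = R.t - 1 := by
      rw [mul_smul_comm, ← mul_assoc, hxi, mul_assoc, z1, mul_smul_comm, hX, smul_smul, smul_smul,
        mul_assoc, inv_mul_cancel₀ (mul_ne_zero hq hκ), one_smul]
    rw [mul_smul_comm, mul_sub, this, mul_one, inv_smul_eq_iff₀ hk]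
    module
  · have : ((q * κ : K)⁻¹ • (R.xi * z)) * (R.t - ((q : K) * a) • (1 : B)) = R.t - 1 := by
      rw [smul_mul_assoc, mul_assoc, z2, mul_smul_comm, hX, smul_smul, smul_smul,
        mul_assoc, inv_mul_cancel₀ (mul_ne_zero hq hκ), one_smul]
    rw [smul_mul_assoc, sub_mul, this, one_mul, inv_smul_eq_iff₀ hk]
    module

/-- moving units down -/
theorem unit_down (R : RD q s κ c B) (hκ : κ ≠ 0) {a : K} (ha : a ≠ 1)
    (h : IsUnit (R.t - a • (1 : B))) : IsUnit (R.t - (((q⁻¹ : Kˣ) : K) * a) • (1 : B)) := by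
  have hq : IsUnit ((q : K) • (1 : B)) := by
    refine ⟨⟨_, ((q⁻¹ : Kˣ) : K) • (1 : B), ?_, ?_⟩, rfl⟩ <;>
    · rw [smul_mul_smul_comm, ← Units.val_mul]; simp
  have h' : IsUnit (R.swap.t - ((q : K) * a) • (1 : B)) := by
    have := hq.mul h
    rw [smul_mul_assoc, one_mul, smul_sub, smul_smul] at this
    exact this
  have hs : κ * s ≠ 0 := mul_ne_zero hκ s.ne_zero
  have e : ((q⁻¹ : Kˣ) : K) * ((q : K) * a) = a := by simp
  have := R.swap.unit_up hs (a := (q : K) * a) (by rwa [e]) h'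
  rw [e] at this
  have hq' : IsUnit (((q⁻¹ : Kˣ) : K) • (1 : B)) := by
    refine ⟨⟨_, (q : K) • (1 : B), ?_, ?_⟩, rfl⟩ <;>
    · rw [smul_mul_smul_comm, ← Units.val_mul]; simp
  have h3 := hq'.mul this
  rw [smul_mul_assoc, one_mul, smul_sub, smul_smul] at h3
  simpa [swap] using h3

end RD

/-! ### The two representations -/

namespace RD
variable {K : Type} [Field K] {q s : Kˣ} {κ c : K}

open TW PowerSeries in
variable (q s κ c) in
/-- data in the twisted Laurent algebra -/
def tw (hc : c ≠ 0) : RD q s κ c (TW K q s) where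
  d := sg (0, 1) 1
  u := sg (1, -1) (C κ * (X - 1))
  x := sg (1, 0) 1
  xi := sg (-1, 0) 1
  t := sg (0, 0) X
  ti := sg (0, 0) (X - C c)⁻¹
  dx := by simp [sg_mul, chi, smul_sg, smul_eq_C_mul]
  xu := by
    simp only [sg_mul, chi, smul_sg, smul_eq_C_mul]
    have h : C (s : K) * C ((s : K)⁻¹) = 1 := by rw [← map_mul]; simp
    simp
    congr 1; linear_combination (- C κ * (X - 1)) * h
  dt := by simp [sg_mul, chi, smul_sg, smul_eq_C_mul]
  tu := by
    simp only [sg_mul, chi, smul_sg, smul_eq_C_mul]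
    have h : C (q : K) * C ((q : K)⁻¹) = 1 := by rw [← map_mul]; simp
    simp
    congr 1; linear_combination (- C κ * (X - 1) * X) * h
  xt := by simp [sg_mul, chi]
  ud := by
    rw [one_def, Prod.zero_eq_mk, ← sg_sub]
    simp [sg_mul, chi, smul_sg, smul_eq_C_mul]
  du := by
    rw [one_def, Prod.zero_eq_mk, smul_sg, ← sg_sub]
    simp [sg_mul, chi, smul_sg, smul_eq_C_mul]
    congr 1; ring
  x_xi := by simp [sg_mul, chi, one_def, Prod.zero_eq_mk]
  xi_x := by simp [sg_mul, chi, one_def, Prod.zero_eq_mk]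
  t_ti := by
    rw [one_def, Prod.zero_eq_mk, smul_sg, ← sg_sub, smul_eq_C_mul, mul_one, sg_mul]
    have : (X - C c : PowerSeries K) * (X - C c)⁻¹ = 1 := PowerSeries.mul_inv_cancel _ (by simpa)
    simp [chi, this]
  ti_t := by
    rw [one_def, Prod.zero_eq_mk, smul_sg, ← sg_sub, smul_eq_C_mul, mul_one, sg_mul]
    have : (X - C c : PowerSeries K)⁻¹ * (X - C c) = 1 := PowerSeries.inv_mul_cancel _ (by simpa)
    simp [chi, this]

end RD

/-- the space -/
abbrev VV (K : Type) [Field K] : Type := ℕ →₀ RatFunc K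

namespace VV
variable {K : Type} [Field K]

/-- basis vectors -/
abbrev e (k : ℕ) : VV K := Finsupp.single k 1

/-- linear maps from values -/
def lmk (f : ℕ → VV K) : Module.End (RatFunc K) (VV K) := Finsupp.linearCombination _ f

@[simp] theorem lmk_e (f : ℕ → VV K) (k : ℕ) : lmk f (e k) = f k := by simp [lmk]

theorem hom_ext {f g : Module.End (RatFunc K) (VV K)} (h : ∀ k, f (e k) = g (e k)) : f = g := by
  ext k : 2
  simpa using h k

/-- scalars -/
abbrev Cc : K →+* RatFunc K := algebraMap K (RatFunc K)

theorem ksmul (k : K) (v : VV K) : k • v = Cc k • v := (algebraMap_smul _ _ _).symm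

end VV

namespace RD
variable {K : Type} [Field K] {q s : Kˣ} {κ c : K}
open VV

theorem Cne (q : Kˣ) : (Cc (q : K)) ≠ 0 := by
  intro h
  exact q.ne_zero ((map_eq_zero _).1 h)

variable (q s κ) in
/-- the action of `u` -/
def uf : ℕ → VV K
  | 0 => 0
  | k + 1 => (Cc κ * RatFunc.X * (Cc (s : K))⁻¹ ^ k * ((Cc (q : K))⁻¹ ^ (k + 1) - 1)) • e k

theorem uf_zero : uf q s κ 0 = 0 := rfl
theorem uf_succ (k : ℕ) : uf q s κ (k + 1) =
    (Cc κ * RatFunc.X * (Cc (s : K))⁻¹ ^ k * ((Cc (q : K))⁻¹ ^ (k + 1) - 1)) • e k := rfl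

variable (q s κ c) in
/-- The weight representation. -/
def rep (hc : ∀ k : ℕ, c ≠ ((q : K)⁻¹) ^ (k + 1)) :
    RD q s κ c (Module.End (RatFunc K) (VV K)) where
  d := lmk fun k => e (k + 1)
  u := lmk (uf q s κ)
  x := lmk fun k => (RatFunc.X * (Cc (s : K))⁻¹ ^ k) • e k
  xi := lmk fun k => (RatFunc.X * (Cc (s : K))⁻¹ ^ k)⁻¹ • e k
  t := lmk fun k => ((Cc (q : K))⁻¹ ^ (k + 1)) • e k
  ti := lmk fun k => ((Cc (q : K))⁻¹ ^ (k + 1) - Cc c)⁻¹ • e k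
  dx := hom_ext fun k => by
    have h := mul_inv_cancel₀ (Cne s)
    simp only [Module.End.mul_apply, lmk_e, map_smul, LinearMap.smul_apply, ksmul, smul_smul, map_zero,
      smul_zero, uf_zero, uf_succ, LinearMap.sub_apply, Module.End.one_apply, ← sub_smul, map_sub, map_mul]
    congr 1; linear_combination (- RatFunc.X * (Cc (s : K))⁻¹ ^ k) * h
  xu := hom_ext fun k => by
    have h := mul_inv_cancel₀ (Cne s)
    rcases k with _ | k <;>
    simp only [Module.End.mul_apply, lmk_e, map_smul, LinearMap.smul_apply, ksmul, smul_smul, map_zero,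
      smul_zero, uf_zero, uf_succ, LinearMap.sub_apply, Module.End.one_apply, ← sub_smul, map_sub, map_mul]
    congr 1
    linear_combination (- (Cc κ * RatFunc.X * (Cc (s : K))⁻¹ ^ k * ((Cc (q : K))⁻¹ ^ (k + 1) - 1) *
      (RatFunc.X * (Cc (s : K))⁻¹ ^ k))) * h
  dt := hom_ext fun k => by
    have h := mul_inv_cancel₀ (Cne q)
    simp only [Module.End.mul_apply, lmk_e, map_smul, LinearMap.smul_apply, ksmul, smul_smul, map_zero,
      smul_zero, uf_zero, uf_succ, LinearMap.sub_apply, Module.End.one_apply, ← sub_smul, map_sub, map_mul]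
    congr 1; linear_combination (- (Cc (q : K))⁻¹ ^ (k + 1)) * h
  tu := hom_ext fun k => by
    have h := mul_inv_cancel₀ (Cne q)
    rcases k with _ | k <;>
    simp only [Module.End.mul_apply, lmk_e, map_smul, LinearMap.smul_apply, ksmul, smul_smul, map_zero,
      smul_zero, uf_zero, uf_succ, LinearMap.sub_apply, Module.End.one_apply, ← sub_smul, map_sub, map_mul]
    congr 1
    linear_combination (- (Cc κ * RatFunc.X * (Cc (s : K))⁻¹ ^ k * ((Cc (q : K))⁻¹ ^ (k + 1) - 1) *
      (Cc (q : K))⁻¹ ^ (k + 1))) * h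
  xt := hom_ext fun k => by
    simp only [Module.End.mul_apply, lmk_e, map_smul, LinearMap.smul_apply, ksmul, smul_smul, map_zero,
      smul_zero, uf_zero, uf_succ, LinearMap.sub_apply, Module.End.one_apply, ← sub_smul, map_sub, map_mul]
    congr 1; ring
  ud := hom_ext fun k => by
    simp only [Module.End.mul_apply, lmk_e, map_smul, LinearMap.smul_apply, ksmul, smul_smul, map_zero,
      smul_zero, uf_zero, uf_succ, LinearMap.sub_apply, Module.End.one_apply, ← sub_smul, map_sub, map_mul]
    congr 1; ring
  du := hom_ext fun k => by
    have h := mul_inv_cancel₀ (Cne q)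
    have h' := mul_inv_cancel₀ (Cne s)
    rcases k with _ | k <;>
    simp only [Module.End.mul_apply, lmk_e, map_smul, LinearMap.smul_apply, ksmul, smul_smul, map_zero,
      smul_zero, uf_zero, uf_succ, LinearMap.sub_apply, Module.End.one_apply, ← sub_smul, map_sub, map_mul]
    · rw [zero_add, pow_one, h]; simp
    · congr 1
      linear_combination (- Cc κ * RatFunc.X * (Cc (s : K))⁻¹ ^ k * (Cc (q : K) * (Cc (q : K))⁻¹ ^ (k + 2) - 1)) * h' -
        (Cc κ * RatFunc.X * (Cc (s : K))⁻¹ ^ k * (Cc (q : K))⁻¹ ^ (k + 1)) * h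
  x_xi := hom_ext fun k => by
    have := Cne s
    have := RatFunc.X_ne_zero (K := K)
    simp only [Module.End.mul_apply, lmk_e, map_smul, smul_smul, Module.End.one_apply]
    rw [inv_mul_cancel₀ (by positivity), one_smul]
  xi_x := hom_ext fun k => by
    have := Cne s
    have := RatFunc.X_ne_zero (K := K)
    simp only [Module.End.mul_apply, lmk_e, map_smul, smul_smul, Module.End.one_apply]
    rw [mul_inv_cancel₀ (by positivity), one_smul]
  t_ti := hom_ext fun k => by
    have : (Cc (q : K))⁻¹ ^ (k + 1) - Cc c ≠ 0 := by
      rw [← map_inv₀, ← map_pow, ← map_sub]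
      exact fun h => hc k (sub_eq_zero.1 ((map_eq_zero _).1 h)).symm
    simp only [Module.End.mul_apply, lmk_e, map_smul, smul_smul, Module.End.one_apply,
      LinearMap.smul_apply, LinearMap.sub_apply, ksmul, ← sub_smul]
    rw [inv_mul_cancel₀ this, one_smul]
  ti_t := hom_ext fun k => by
    have : (Cc (q : K))⁻¹ ^ (k + 1) - Cc c ≠ 0 := by
      rw [← map_inv₀, ← map_pow, ← map_sub]
      exact fun h => hc k (sub_eq_zero.1 ((map_eq_zero _).1 h)).symm
    simp only [Module.End.mul_apply, lmk_e, map_smul, smul_smul, Module.End.one_apply,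
      LinearMap.smul_apply, LinearMap.sub_apply, ksmul, ← sub_smul]
    rw [mul_inv_cancel₀ this, one_smul]

end RD

/-! ### Frames -/

open TW VV

/-- `V_m` -/
def VV.low (K : Type) [Field K] (m : ℕ) : Submodule (RatFunc K) (VV K) :=
  Finsupp.supported (RatFunc K) (RatFunc K) (Set.Iio m)

/-- A frame -/
structure Frame {K : Type} [Field K] {q s : Kˣ} {κ c : K} {B : Type} [Ring B] [Algebra K B]
    (R : RD q s κ c B) where
  gen : R.Gen
  hind : ∀ a b : ℤ, q ^ a * s ^ b = 1 → a = 0 ∧ b = 0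
  hκ : κ ≠ 0
  hc0 : c ≠ 0
  hc1 : c ≠ 1
  hcr : ∀ k : ℕ, c ≠ ((q : K)⁻¹) ^ (k + 1)
  ι : B →ₐ[K] TW K q s
  ιd : ι R.d = sg (0, 1) 1
  ιu : ι R.u = sg (1, -1) (PowerSeries.C κ * (PowerSeries.X - 1))
  ιx : ι R.x = sg (1, 0) 1
  ιt : ι R.t = sg (0, 0) PowerSeries.X
  ρ : B →ₐ[K] Module.End (RatFunc K) (VV K)
  ρd : ρ R.d = (RD.rep q s κ c hcr).d
  ρu : ρ R.u = (RD.rep q s κ c hcr).u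
  ρx : ρ R.x = (RD.rep q s κ c hcr).x
  ρt : ρ R.t = (RD.rep q s κ c hcr).t
  I : Submodule K B
  hl : ∀ b, ∀ i ∈ I, b * i ∈ I
  hr : ∀ b, ∀ i ∈ I, i * b ∈ I
  ιI : ∀ i ∈ I, ι i = 0
  ρI : ∀ i ∈ I, ∃ N : ℕ, (∀ v, ρ i v ∈ VV.low K N) ∧ ∀ k, N ≤ k → ρ i (e k) = 0
  g : ℤ → B
  gunit : ∀ k, IsUnit (g k)
  gcomm : ∀ a b, g a * g b = g b * g a
  gx : ∀ a, g a * R.x = R.x * g a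
  gt : ∀ a, g a * R.t = R.t * g a
  g0 : g 0 = R.t - c • (1 : B)
  gI : ∀ k, g k - (R.t - (c * ((q ^ k : Kˣ) : K)) • (1 : B)) ∈ I

namespace Frame
variable {K : Type} [Field K] {q s : Kˣ} {κ c : K} {B : Type} [Ring B] [Algebra K B]
  {R : RD q s κ c B} (F : Frame R)

/-- generators of the denominators -/
def MS : Set B := insert R.x (Set.range F.g ∪ Set.range fun k : Kˣ => algebraMap K B k)

/-- the denominators -/
def M : Submonoid B := Submonoid.closure F.MS

theorem x_mem : R.x ∈ F.M := Submonoid.subset_closure (Or.inl rfl)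
theorem g_mem (k : ℤ) : F.g k ∈ F.M := Submonoid.subset_closure (Or.inr (Or.inl ⟨k, rfl⟩))
theorem k_mem (k : Kˣ) : algebraMap K B k ∈ F.M := Submonoid.subset_closure (Or.inr (Or.inr ⟨k, rfl⟩))

theorem smul_mem {k : K} (hk : k ≠ 0) {δ : B} (h : δ ∈ F.M) : k • δ ∈ F.M := by
  rw [Algebra.smul_def]
  exact F.M.mul_mem (F.k_mem (Units.mk0 k hk)) h

theorem M_induct {p : B → Prop} (hx : p R.x) (hg : ∀ k, p (F.g k))
    (hk : ∀ k : Kˣ, p (algebraMap K B k)) (h1 : p 1)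
    (hm : ∀ a b, a ∈ F.M → b ∈ F.M → p a → p b → p (a * b)) {δ : B} (h : δ ∈ F.M) : p δ := by
  refine Submonoid.closure_induction (motive := fun x _ => p x) ?_ h1
    (fun a b ha hb => hm a b ha hb) h
  rintro y (rfl | ⟨k, rfl⟩ | ⟨k, rfl⟩)
  exacts [hx, hg k, hk k]

theorem M_unit {δ : B} (h : δ ∈ F.M) : IsUnit δ :=
  F.M_induct R.isUnit_x F.gunit (fun k => (k.isUnit).map (algebraMap K B)) isUnit_one
    (fun _ _ _ _ => IsUnit.mul) h

theorem M_x {δ : B} (h : δ ∈ F.M) : Commute δ R.x :=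
  F.M_induct (p := fun δ => Commute δ R.x) (Commute.refl _) F.gx
    (fun k => Algebra.commute_algebraMap_left _ _) (Commute.one_left _)
    (fun _ _ _ _ h h' => h.mul_left h') h

theorem M_t {δ : B} (h : δ ∈ F.M) : Commute δ R.t :=
  F.M_induct (p := fun δ => Commute δ R.t) R.xt F.gt
    (fun k => Algebra.commute_algebraMap_left _ _) (Commute.one_left _)
    (fun _ _ _ _ h h' => h.mul_left h') h

theorem M_g {δ : B} (h : δ ∈ F.M) (k : ℤ) : Commute δ (F.g k) :=
  F.M_induct (p := fun δ => Commute δ (F.g k)) (F.gx k).symm (fun j => F.gcomm j k)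
    (fun k => Algebra.commute_algebraMap_left _ _) (Commute.one_left _)
    (fun _ _ _ _ h h' => h.mul_left h') h

theorem M_comm {δ δ' : B} (h : δ ∈ F.M) (h' : δ' ∈ F.M) : Commute δ δ' :=
  F.M_induct (p := fun δ' => Commute δ δ') (F.M_x h) (F.M_g h)
    (fun k => Algebra.commute_algebraMap_right _ _) (Commute.one_right _)
    (fun _ _ _ _ h h' => h.mul_right h') h'

theorem ιg (k : ℤ) : F.ι (F.g k) =
    sg (0, 0) (PowerSeries.X - PowerSeries.C (c * ((q ^ k : Kˣ) : K))) := by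
  have := F.ιI _ (F.gI k)
  rw [map_sub, sub_eq_zero] at this
  rw [this, map_sub, F.ιt, map_smul, map_one, one_def, smul_sg, sg_sub, PowerSeries.smul_eq_C_mul,
    mul_one]
  rfl

theorem M_ι {δ : B} (h : δ ∈ F.M) : ∃ i f, f ≠ 0 ∧ F.ι δ = sg (i, 0) f := by
  refine F.M_induct (p := fun δ => ∃ i f, f ≠ 0 ∧ F.ι δ = sg (i, 0) f) ?_ ?_ ?_ ?_ ?_ h
  · exact ⟨1, 1, one_ne_zero, F.ιx⟩
  · intro k
    refine ⟨0, _, ?_, F.ιg k⟩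
    intro h0
    have := congrArg (PowerSeries.coeff 1) h0
    simp [PowerSeries.coeff_C] at this
  · intro k
    refine ⟨0, PowerSeries.C (k : K), ?_, ?_⟩
    · intro h
      have := congrArg (PowerSeries.constantCoeff) h
      simp at this
    · rw [AlgHom.commutes, algebraMap_def]; rfl
  · exact ⟨0, 1, one_ne_zero, map_one _⟩
  · rintro a b - - ⟨i, f, hf, ha⟩ ⟨j, f', hf', hb⟩
    exact ⟨i + j, _, mul_ne_zero (mul_ne_zero hf (act_ne _ hf')) (chi_ne _ _), by
      rw [map_mul, ha, hb, sg_mul]; rfl⟩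

theorem M_d {δ : B} (h : δ ∈ F.M) : ∃ δ' ∈ F.M, δ' * R.d - R.d * δ ∈ F.I := by
  refine F.M_induct (p := fun δ => ∃ δ' ∈ F.M, δ' * R.d - R.d * δ ∈ F.I) ?_ ?_ ?_ ?_ ?_ h
  · refine ⟨(s : K) • R.x, F.smul_mem s.ne_zero F.x_mem, ?_⟩
    rw [R.dx, smul_mul_assoc, sub_self]; exact F.I.zero_mem
  · intro k
    refine ⟨(q : K) • F.g (k - 1), F.smul_mem q.ne_zero (F.g_mem _), ?_⟩
    have h1 := F.I.smul_mem (q : K) (F.hr R.d _ (F.gI (k - 1)))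
    have h2 := F.hl R.d _ (F.gI k)
    have := F.I.sub_mem h1 h2
    convert this using 1
    simp only [sub_mul, mul_sub, R.dt, smul_sub, smul_mul_assoc, mul_smul_comm, one_mul, mul_one,
      smul_smul]
    have e : (q : K) * (c * ((q ^ (k - 1) : Kˣ) : K)) = c * ((q ^ k : Kˣ) : K) := by
      rw [mul_left_comm, ← Units.val_mul, ← zpow_one_add]; congr 3; ring
    rw [e]; abel
  · intro k
    refine ⟨_, F.k_mem k, ?_⟩
    rw [Algebra.commutes, sub_self]; exact F.I.zero_mem
  · refine ⟨1, F.M.one_mem, ?_⟩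
    rw [one_mul, mul_one, sub_self]; exact F.I.zero_mem
  · rintro a b - - ⟨a', ha', ha⟩ ⟨b', hb', hb⟩
    refine ⟨a' * b', F.M.mul_mem ha' hb', ?_⟩
    convert F.I.add_mem (F.hl a' _ hb) (F.hr b _ ha) using 1
    noncomm_ring

theorem M_u {δ : B} (h : δ ∈ F.M) : ∃ δ' ∈ F.M, δ' * R.u - R.u * δ ∈ F.I := by
  refine F.M_induct (p := fun δ => ∃ δ' ∈ F.M, δ' * R.u - R.u * δ ∈ F.I) ?_ ?_ ?_ ?_ ?_ h
  · refine ⟨((s⁻¹ : Kˣ) : K) • R.x, F.smul_mem s⁻¹.ne_zero F.x_mem, ?_⟩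
    rw [R.ux, smul_mul_assoc, sub_self]; exact F.I.zero_mem
  · intro k
    refine ⟨((q⁻¹ : Kˣ) : K) • F.g (k + 1), F.smul_mem q⁻¹.ne_zero (F.g_mem _), ?_⟩
    have h1 := F.I.smul_mem ((q⁻¹ : Kˣ) : K) (F.hr R.u _ (F.gI (k + 1)))
    have h2 := F.hl R.u _ (F.gI k)
    have := F.I.sub_mem h1 h2
    convert this using 1
    simp only [sub_mul, mul_sub, R.ut, smul_sub, smul_mul_assoc, mul_smul_comm, one_mul, mul_one,
      smul_smul]
    have e : ((q⁻¹ : Kˣ) : K) * (c * ((q ^ (k + 1) : Kˣ) : K)) = c * ((q ^ k : Kˣ) : K) := by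
      rw [mul_left_comm, ← Units.val_mul, zpow_add_one, mul_comm q⁻¹, mul_inv_cancel_right]
    rw [e]; abel
  · intro k
    refine ⟨_, F.k_mem k, ?_⟩
    rw [Algebra.commutes, sub_self]; exact F.I.zero_mem
  · refine ⟨1, F.M.one_mem, ?_⟩
    rw [one_mul, mul_one, sub_self]; exact F.I.zero_mem
  · rintro a b - - ⟨a', ha', ha⟩ ⟨b', hb', hb⟩
    refine ⟨a' * b', F.M.mul_mem ha' hb', ?_⟩
    convert F.I.add_mem (F.hl a' _ hb) (F.hr b _ ha) using 1
    noncomm_ring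

end Frame

namespace RD
variable {K : Type} [Field K] {q s : Kˣ} {κ c : K} {B : Type} [Ring B] [Algebra K B]
  (R : RD q s κ c B)

/-- powers of `d` and `u` -/
def D : ℤ → B
  | Int.ofNat n => R.d ^ n
  | Int.negSucc n => R.u ^ (n + 1)

/-- polynomials in `x` and `t` -/
def P0 : Subalgebra K B := Algebra.adjoin K {R.x, R.t}

theorem x_P0 : R.x ∈ R.P0 := Algebra.subset_adjoin (by simp)
theorem t_P0 : R.t ∈ R.P0 := Algebra.subset_adjoin (by simp)

theorem P0_induct {p : B → Prop} (hx : p R.x) (ht : p R.t) (hk : ∀ k : K, p (algebraMap K B k))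
    (ha : ∀ a b, p a → p b → p (a + b)) (hm : ∀ a b, p a → p b → p (a * b)) {z : B}
    (hz : z ∈ R.P0) : p z := by
  refine Algebra.adjoin_induction (p := fun z _ => p z) ?_ hk (fun a b _ _ => ha a b)
    (fun a b _ _ => hm a b) hz
  rintro y (rfl | rfl)
  exacts [hx, ht]

theorem P0_comm_of {b z : B} (hx : Commute b R.x) (ht : Commute b R.t) (hz : z ∈ R.P0) :
    Commute b z :=
  R.P0_induct (p := fun z => Commute b z) hx ht (fun k => Algebra.commute_algebraMap_right _ _)
    (fun _ _ => Commute.add_right) (fun _ _ => Commute.mul_right) hz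

theorem P0_comm {b z : B} (hb : b ∈ R.P0) (hz : z ∈ R.P0) : Commute b z := by
  refine R.P0_comm_of ?_ ?_ hz
  · exact (R.P0_comm_of (Commute.refl _) R.xt hb).symm
  · exact (R.P0_comm_of R.xt.symm (Commute.refl _) hb).symm

theorem P0_d {p : B} (hp : p ∈ R.P0) : ∃ p' ∈ R.P0, R.d * p = p' * R.d := by
  refine R.P0_induct (p := fun p => ∃ p' ∈ R.P0, R.d * p = p' * R.d) ?_ ?_ ?_ ?_ ?_ hp
  · exact ⟨(s : K) • R.x, R.P0.smul_mem R.x_P0 _, by rw [R.dx, smul_mul_assoc]⟩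
  · exact ⟨(q : K) • R.t, R.P0.smul_mem R.t_P0 _, by rw [R.dt, smul_mul_assoc]⟩
  · intro k
    exact ⟨_, R.P0.algebraMap_mem k, (Algebra.commutes _ _).symm⟩
  · rintro a b ⟨a', ha', ha⟩ ⟨b', hb', hb⟩
    exact ⟨a' + b', R.P0.add_mem ha' hb', by rw [mul_add, add_mul, ha, hb]⟩
  · rintro a b ⟨a', ha', ha⟩ ⟨b', hb', hb⟩
    exact ⟨a' * b', R.P0.mul_mem ha' hb', by rw [← mul_assoc, ha, mul_assoc, hb, mul_assoc]⟩

theorem P0_u {p : B} (hp : p ∈ R.P0) : ∃ p' ∈ R.P0, R.u * p = p' * R.u := by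
  refine R.P0_induct (p := fun p => ∃ p' ∈ R.P0, R.u * p = p' * R.u) ?_ ?_ ?_ ?_ ?_ hp
  · exact ⟨((s⁻¹ : Kˣ) : K) • R.x, R.P0.smul_mem R.x_P0 _, by rw [R.ux, smul_mul_assoc]⟩
  · exact ⟨((q⁻¹ : Kˣ) : K) • R.t, R.P0.smul_mem R.t_P0 _, by rw [R.ut, smul_mul_assoc]⟩
  · intro k
    exact ⟨_, R.P0.algebraMap_mem k, (Algebra.commutes _ _).symm⟩
  · rintro a b ⟨a', ha', ha⟩ ⟨b', hb', hb⟩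
    exact ⟨a' + b', R.P0.add_mem ha' hb', by rw [mul_add, add_mul, ha, hb]⟩
  · rintro a b ⟨a', ha', ha⟩ ⟨b', hb', hb⟩
    exact ⟨a' * b', R.P0.mul_mem ha' hb', by rw [← mul_assoc, ha, mul_assoc, hb, mul_assoc]⟩

theorem dD (n : ℤ) : ∃ p ∈ R.P0, R.d * R.D n = p * R.D (n + 1) := by
  rcases n with n | n
  · exact ⟨1, R.P0.one_mem, by rw [one_mul]; exact (pow_succ' _ _).symm⟩
  · refine ⟨(κ * s) • (R.x * ((q : K) • R.t - 1)), ?_, ?_⟩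
    · exact R.P0.smul_mem (R.P0.mul_mem R.x_P0 (R.P0.sub_mem (R.P0.smul_mem R.t_P0 _) R.P0.one_mem)) _
    · have : R.D (Int.negSucc n + 1) = R.u ^ n := by
        rcases n with _ | n
        · exact (pow_zero _).trans (pow_zero _).symm
        · rfl
      rw [this, ← R.du]
      change R.d * R.u ^ (n + 1) = _
      rw [pow_succ', mul_assoc]

theorem uD (n : ℤ) : ∃ p ∈ R.P0, R.u * R.D n = p * R.D (n - 1) := by
  rcases n with n | n
  · rcases n with _ | n
    · refine ⟨1, R.P0.one_mem, ?_⟩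
      change R.u * R.d ^ 0 = 1 * R.u ^ (0 + 1)
      simp
    · refine ⟨κ • (R.x * (R.t - 1)), ?_, ?_⟩
      · exact R.P0.smul_mem (R.P0.mul_mem R.x_P0 (R.P0.sub_mem R.t_P0 R.P0.one_mem)) _
      · have : R.D (Int.ofNat (n + 1) - 1) = R.d ^ n := by
          have e : Int.ofNat (n + 1) - 1 = Int.ofNat n := by simp
          rw [e]; rfl
        rw [this, ← R.ud]
        change R.u * R.d ^ (n + 1) = _
        rw [pow_succ', mul_assoc]
  · exact ⟨1, R.P0.one_mem, by rw [one_mul]; exact (pow_succ' _ _).symm⟩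

/-- spanning monomials -/
def mon (i : ℕ × ℕ × ℤ) : B := R.x ^ i.1 * R.t ^ i.2.1 * R.D i.2.2

/-- the span -/
def A0 : Submodule K B := Submodule.span K (Set.range R.mon)

theorem A0_x {a : B} (ha : a ∈ R.A0) : R.x * a ∈ R.A0 := by
  refine Submodule.span_induction (p := fun a _ => R.x * a ∈ R.A0) ?_ (by simp)
    (fun a b _ _ h h' => by rw [mul_add]; exact R.A0.add_mem h h')
    (fun k a _ h => by rw [mul_smul_comm]; exact R.A0.smul_mem _ h) ha
  rintro _ ⟨⟨i, j, n⟩, rfl⟩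
  exact Submodule.subset_span ⟨(i + 1, j, n), by simp [mon, pow_succ', mul_assoc]⟩

theorem A0_t {a : B} (ha : a ∈ R.A0) : R.t * a ∈ R.A0 := by
  refine Submodule.span_induction (p := fun a _ => R.t * a ∈ R.A0) ?_ (by simp)
    (fun a b _ _ h h' => by rw [mul_add]; exact R.A0.add_mem h h')
    (fun k a _ h => by rw [mul_smul_comm]; exact R.A0.smul_mem _ h) ha
  rintro _ ⟨⟨i, j, n⟩, rfl⟩
  refine Submodule.subset_span ⟨(i, j + 1, n), ?_⟩
  have h : R.x ^ i * R.t = R.t * R.x ^ i := (Commute.pow_left R.xt i)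
  simp only [mon, pow_succ']
  rw [← mul_assoc, ← mul_assoc, ← mul_assoc, h]

theorem A0_P0 {p a : B} (hp : p ∈ R.P0) (ha : a ∈ R.A0) : p * a ∈ R.A0 := by
  refine R.P0_induct (p := fun p => ∀ a ∈ R.A0, p * a ∈ R.A0) (fun a => R.A0_x) (fun a => R.A0_t)
    ?_ ?_ ?_ hp a ha
  · intro k a ha
    rw [← Algebra.smul_def]; exact R.A0.smul_mem _ ha
  · intro a b h h' z hz
    rw [add_mul]; exact R.A0.add_mem (h z hz) (h' z hz)
  · intro a b h h' z hz
    rw [mul_assoc]; exact h _ (h' z hz)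

theorem D_A0 (n : ℤ) : R.D n ∈ R.A0 := Submodule.subset_span ⟨(0, 0, n), by simp [mon]⟩

theorem mon_P0 (i j : ℕ) : R.x ^ i * R.t ^ j ∈ R.P0 :=
  R.P0.mul_mem (R.P0.pow_mem R.x_P0 i) (R.P0.pow_mem R.t_P0 j)

theorem A0_d {a : B} (ha : a ∈ R.A0) : R.d * a ∈ R.A0 := by
  refine Submodule.span_induction (p := fun a _ => R.d * a ∈ R.A0) ?_ (by simp)
    (fun a b _ _ h h' => by rw [mul_add]; exact R.A0.add_mem h h')
    (fun k a _ h => by rw [mul_smul_comm]; exact R.A0.smul_mem _ h) ha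
  rintro _ ⟨⟨i, j, n⟩, rfl⟩
  obtain ⟨p, hp, e⟩ := R.P0_d (R.mon_P0 i j)
  obtain ⟨p', hp', e'⟩ := R.dD n
  simp only [mon]
  rw [← mul_assoc, e, mul_assoc, e']
  exact R.A0_P0 hp (R.A0_P0 hp' (R.D_A0 _))

theorem A0_u {a : B} (ha : a ∈ R.A0) : R.u * a ∈ R.A0 := by
  refine Submodule.span_induction (p := fun a _ => R.u * a ∈ R.A0) ?_ (by simp)
    (fun a b _ _ h h' => by rw [mul_add]; exact R.A0.add_mem h h')
    (fun k a _ h => by rw [mul_smul_comm]; exact R.A0.smul_mem _ h) ha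
  rintro _ ⟨⟨i, j, n⟩, rfl⟩
  obtain ⟨p, hp, e⟩ := R.P0_u (R.mon_P0 i j)
  obtain ⟨p', hp', e'⟩ := R.uD n
  simp only [mon]
  rw [← mul_assoc, e, mul_assoc, e']
  exact R.A0_P0 hp (R.A0_P0 hp' (R.D_A0 _))

end RD

namespace Frame
variable {K : Type} [Field K] {q s : Kˣ} {κ c : K} {B : Type} [Ring B] [Algebra K B]
  {R : RD q s κ c B} (F : Frame R)

/-- polynomial part mod `I` -/
def AI : Submodule K B := R.A0 ⊔ F.I

theorem AI_I {a : B} (ha : a ∈ F.I) : a ∈ F.AI := Submodule.mem_sup_right ha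

theorem AI_of {b : B} (hb : ∀ a ∈ R.A0, b * a ∈ F.AI) {a : B} (ha : a ∈ F.AI) : b * a ∈ F.AI := by
  obtain ⟨y, hy, z, hz, rfl⟩ := Submodule.mem_sup.1 ha
  rw [mul_add]
  exact F.AI.add_mem (hb y hy) (F.AI_I (F.hl _ _ hz))

theorem AI_M {δ a : B} (h : δ ∈ F.M) (ha : a ∈ F.AI) : δ * a ∈ F.AI := by
  refine F.M_induct (p := fun δ => ∀ a ∈ F.AI, δ * a ∈ F.AI) ?_ ?_ ?_ ?_ ?_ h a ha
  · intro a ha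
    exact F.AI_of (fun a ha => Submodule.mem_sup_left (R.A0_x ha)) ha
  · intro k a ha
    refine F.AI_of (fun a ha => ?_) ha
    have h1 := F.hr a _ (F.gI k)
    have h2 : (R.t - (c * ((q ^ k : Kˣ) : K)) • (1 : B)) * a ∈ R.A0 := by
      rw [sub_mul, smul_mul_assoc, one_mul]
      exact R.A0.sub_mem (R.A0_t ha) (R.A0.smul_mem _ ha)
    have := F.AI.add_mem (F.AI_I h1) (Submodule.mem_sup_left h2)
    rwa [← add_mul, sub_add_cancel] at this
  · intro k a ha
    rw [← Algebra.smul_def]; exact F.AI.smul_mem _ ha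
  · intro a ha; rwa [one_mul]
  · intro a b _ _ h h' z hz
    rw [mul_assoc]; exact h _ (h' z hz)

theorem span (b : B) : ∃ δ ∈ F.M, δ * b ∈ F.AI := by
  let S : Set B := {b | ∃ δ ∈ F.M, δ * b ∈ F.AI}
  have hadd : ∀ a b, a ∈ S → b ∈ S → a + b ∈ S := by
    rintro a b ⟨δ, hδ, h⟩ ⟨δ', hδ', h'⟩
    refine ⟨δ * δ', F.M.mul_mem hδ hδ', ?_⟩
    rw [mul_add]
    refine F.AI.add_mem ?_ ?_
    · rw [(F.M_comm hδ hδ').eq, mul_assoc]; exact F.AI_M hδ' h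
    · rw [mul_assoc]; exact F.AI_M hδ h'
  have hx : ∀ b ∈ S, R.x * b ∈ S := by
    rintro b ⟨δ, hδ, h⟩
    refine ⟨δ, hδ, ?_⟩
    rw [← mul_assoc, (F.M_x hδ).eq, mul_assoc]
    exact F.AI_of (fun a ha => Submodule.mem_sup_left (R.A0_x ha)) h
  have ht : ∀ b ∈ S, R.t * b ∈ S := by
    rintro b ⟨δ, hδ, h⟩
    refine ⟨δ, hδ, ?_⟩
    rw [← mul_assoc, (F.M_t hδ).eq, mul_assoc]
    exact F.AI_of (fun a ha => Submodule.mem_sup_left (R.A0_t ha)) h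
  have hd : ∀ b ∈ S, R.d * b ∈ S := by
    rintro b ⟨δ, hδ, h⟩
    obtain ⟨δ', hδ', e⟩ := F.M_d hδ
    refine ⟨δ', hδ', ?_⟩
    have h1 := F.AI_of (b := R.d) (fun a ha => Submodule.mem_sup_left (R.A0_d ha)) h
    have := F.AI.add_mem (F.AI_I (F.hr b _ e)) h1
    rwa [sub_mul, ← mul_assoc, sub_add_cancel, mul_assoc] at this
  have hu : ∀ b ∈ S, R.u * b ∈ S := by
    rintro b ⟨δ, hδ, h⟩
    obtain ⟨δ', hδ', e⟩ := F.M_u hδ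
    refine ⟨δ', hδ', ?_⟩
    have h1 := F.AI_of (b := R.u) (fun a ha => Submodule.mem_sup_left (R.A0_u ha)) h
    have := F.AI.add_mem (F.AI_I (F.hr b _ e)) h1
    rwa [sub_mul, ← mul_assoc, sub_add_cancel, mul_assoc] at this
  have hxi : ∀ b ∈ S, R.xi * b ∈ S := by
    rintro b ⟨δ, hδ, h⟩
    refine ⟨δ * R.x, F.M.mul_mem hδ F.x_mem, ?_⟩
    rwa [mul_assoc, ← mul_assoc R.x, R.x_xi, one_mul]
  have hti : ∀ b ∈ S, R.ti * b ∈ S := by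
    rintro b ⟨δ, hδ, h⟩
    refine ⟨δ * F.g 0, F.M.mul_mem hδ (F.g_mem 0), ?_⟩
    rwa [mul_assoc, ← mul_assoc (F.g 0), F.g0, R.t_ti, one_mul]
  have hone : (1 : B) ∈ S := ⟨1, F.M.one_mem, by
    rw [mul_one]
    have := R.D_A0 0
    exact Submodule.mem_sup_left (by simpa [RD.D] using this)⟩
  have key : ∀ b ∈ Algebra.adjoin K {R.d, R.u, R.x, R.xi, R.t, R.ti}, ∀ z ∈ S, b * z ∈ S := by
    intro b hb
    refine Algebra.adjoin_induction (p := fun b _ => ∀ z ∈ S, b * z ∈ S) ?_ ?_ ?_ ?_ hb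
    · rintro y (rfl | rfl | rfl | rfl | rfl | rfl)
      exacts [hd, hu, hx, hxi, ht, hti]
    · rintro k z ⟨δ, hδ, h⟩
      refine ⟨δ, hδ, ?_⟩
      rw [← Algebra.smul_def, mul_smul_comm]
      exact F.AI.smul_mem _ h
    · intro a b _ _ h h' z hz
      rw [add_mul]; exact hadd _ _ (h z hz) (h' z hz)
    · intro a b _ _ h h' z hz
      rw [mul_assoc]; exact h _ (h' z hz)
  have := key b (by rw [show Algebra.adjoin K _ = ⊤ from F.gen]; trivial) 1 hone
  rwa [mul_one] at this

end Frame

open TW VV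

namespace VV
variable {K : Type} [Field K]

theorem mem_low {m : ℕ} {v : VV K} : v ∈ low K m ↔ ∀ k, m ≤ k → v k = 0 := by
  unfold low
  rw [Finsupp.mem_supported']
  simp

theorem e_low {k m : ℕ} (h : k < m) : e k ∈ low K m := by
  rw [mem_low]; intro j hj
  exact Finsupp.single_eq_of_ne (by omega)

theorem low_mono {m m' : ℕ} (h : m ≤ m') : low K m ≤ low K m' := by
  intro v; rw [mem_low, mem_low]; intro hv k hk; exact hv k (by omega)

theorem low_eq_span (m : ℕ) : low K m = Submodule.span _ (e '' Set.Iio m) :=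
  Finsupp.supported_eq_span_single _ _

theorem low_map {m : ℕ} {S : Submodule (RatFunc K) (VV K)} {T : Module.End (RatFunc K) (VV K)}
    (h : ∀ k, k < m → T (e k) ∈ S) {v : VV K} (hv : v ∈ low K m) : T v ∈ S := by
  rw [low_eq_span] at hv
  refine Submodule.span_induction (p := fun v _ => T v ∈ S) ?_ (by simp) ?_ ?_ hv
  · rintro _ ⟨k, hk, rfl⟩; exact h k hk
  · intro a b _ _ h h'; rw [map_add]; exact S.add_mem h h'
  · intro k b _ h; rw [map_smul]; exact S.smul_mem _ h

theorem exists_low (v : VV K) : ∃ m, v ∈ low K m := by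
  refine ⟨v.support.sup id + 1, ?_⟩
  rw [mem_low]
  intro k hk
  by_contra h
  have := Finset.le_sup (f := id) (Finsupp.mem_support_iff.2 h)
  simp at this; omega

instance (m : ℕ) : FiniteDimensional (RatFunc K) (low K m) := by
  rw [low_eq_span]
  exact FiniteDimensional.span_of_finite _ ((Set.finite_Iio m).image _)

theorem finrank_low (m : ℕ) : Module.finrank (RatFunc K) (low K m) = m := by
  have := (Finsupp.supportedEquivFinsupp (M := RatFunc K) (R := RatFunc K) (Set.Iio m)).finrank_eq
  unfold low
  rw [this, Module.finrank_finsupp_self]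
  simp

/-- injective endomorphisms preserving a finite-dimensional subspace reflect membership -/
theorem reflect {m : ℕ} {T : Module.End (RatFunc K) (VV K)} (hT : Function.Injective T)
    (h : ∀ v ∈ low K m, T v ∈ low K m) {v : VV K} (hv : T v ∈ low K m) : v ∈ low K m := by
  let T' : low K m →ₗ[RatFunc K] low K m := T.restrict h
  have hi : Function.Injective T' := by
    intro a b hab
    exact Subtype.ext (hT (congrArg Subtype.val hab))
  obtain ⟨w, hw⟩ := (LinearMap.injective_iff_surjective (K := RatFunc K) (V := low K m) (f := T')).1 hi ⟨_, hv⟩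
  have := hT (congrArg Subtype.val hw)
  rw [← this]; exact w.2

end VV

namespace RD
variable {K : Type} [Field K] {q s : Kˣ} {κ c : K} {B : Type} [Ring B] [Algebra K B]

/-- graded maps to the twisted Laurent algebra -/
def Grad (R : RD q s κ c B) (ψ : B →ₐ[K] TW K q s) : Prop :=
  ∃ (l : K) (a a' : ℤ) (f f' : PowerSeries K), l ≠ 0 ∧ f ≠ 0 ∧ f' ≠ 0 ∧
    ψ R.x = sg (1, 0) (PowerSeries.C l) ∧ ψ R.t = sg (0, 0) PowerSeries.X ∧
    ψ R.d = sg (a, 1) f ∧ ψ R.u = sg (a', -1) f'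

theorem pow_sg (a n : ℤ) (f : PowerSeries K) (hf : f ≠ 0) (k : ℕ) :
    ∃ b h, h ≠ 0 ∧ (sg (a, n) f : TW K q s) ^ k = sg (b, n * k) h := by
  induction k with
  | zero => exact ⟨0, 1, one_ne_zero, by simp [one_def, Prod.zero_eq_mk]⟩
  | succ k ih =>
    obtain ⟨b, h, hh, e⟩ := ih
    refine ⟨b + a, h * act q (n * k) f * chi s (b, n * k) (a, n),
      mul_ne_zero (mul_ne_zero hh (act_ne _ hf)) (chi_ne _ _), ?_⟩
    rw [pow_succ, e, sg_mul]
    congr 1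
    simp [mul_add]

theorem pow_sg0 (a : ℤ) (f : PowerSeries K) (k : ℕ) :
    (sg (a, 0) f : TW K q s) ^ k = sg (k * a, 0) (f ^ k) := by
  induction k with
  | zero => simp [one_def, Prod.zero_eq_mk]
  | succ k ih =>
    rw [pow_succ, ih, sg_mul, pow_succ]
    simp [chi, add_mul]

theorem Grad.D {R : RD q s κ c B} {ψ : B →ₐ[K] TW K q s} (h : R.Grad ψ) (n : ℤ) :
    ∃ a f, f ≠ 0 ∧ ψ (R.D n) = sg (a, n) f := by
  obtain ⟨l, a, a', f, f', hl, hf, hf', hx, ht, hd, hu⟩ := h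
  rcases n with n | n
  · obtain ⟨b, h, hh, e⟩ := pow_sg (q := q) (s := s) a 1 f hf n
    refine ⟨b, h, hh, ?_⟩
    change ψ (R.d ^ n) = _
    rw [map_pow, hd, e, one_mul]; rfl
  · obtain ⟨b, h, hh, e⟩ := pow_sg (q := q) (s := s) a' (-1) f' hf' (n + 1)
    refine ⟨b, h, hh, ?_⟩
    change ψ (R.u ^ (n + 1)) = _
    rw [map_pow, hu, e, neg_one_mul]; rfl

theorem Grad.mon {R : RD q s κ c B} {ψ : B →ₐ[K] TW K q s} (h : R.Grad ψ) :
    ∃ (α : ℤ → ℤ) (w : ℕ → ℤ → PowerSeries K), (∀ i n, w i n ≠ 0) ∧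
      ∀ i j n, ψ (R.mon (i, j, n)) = sg (i + α n, n) (w i n * PowerSeries.X ^ j) := by
  choose α f hf hD using h.D
  obtain ⟨l, a, a', _, _, hl, -, -, hx, ht, hd, hu⟩ := h
  refine ⟨α, fun i n => PowerSeries.C l ^ i * f n, ?_, ?_⟩
  · intro i n
    refine mul_ne_zero (pow_ne_zero _ ?_) (hf n)
    intro h
    exact hl (by simpa using congrArg PowerSeries.constantCoeff h)
  · intro i j n
    simp only [RD.mon, map_mul, map_pow, hx, ht, hD, pow_sg0, sg_mul]
    simp [chi]
    congr 1; ring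

theorem lc_co {R : RD q s κ c B} {ψ : B →ₐ[K] TW K q s} {α : ℤ → ℤ}
    {w : ℕ → ℤ → PowerSeries K} 
    (hψ : ∀ i j n, ψ (R.mon (i, j, n)) = sg (i + α n, n) (w i n * PowerSeries.X ^ j))
    (l : (ℕ × ℕ × ℤ) →₀ K) (i : ℕ) (n : ℤ) :
    (ψ (Finsupp.linearCombination K R.mon l)).co (i + α n, n) =
      w i n * PowerSeries.mk fun j => l (i, j, n) := by
  induction l using Finsupp.induction_linear with
  | zero => 
    rw [map_zero, map_zero]
    have : (PowerSeries.mk fun j => (0 : (ℕ × ℕ × ℤ) →₀ K) (i, j, n)) = 0 := by ext j; simp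
    rw [this]; simp
  | add a b ha hb =>
    rw [map_add, map_add, co_add, ha, hb, ← mul_add]
    congr 1
  | single p k =>
    obtain ⟨i', j', n'⟩ := p
    rw [Finsupp.linearCombination_single, map_smul, hψ, co_smul, co_sg]
    by_cases h : i' = i ∧ n' = n
    · obtain ⟨rfl, rfl⟩ := h
      rw [if_pos rfl]
      have : (PowerSeries.mk fun j => (Finsupp.single (i', j', n') k : (ℕ × ℕ × ℤ) →₀ K) (i', j, n'))
          = k • PowerSeries.X ^ j' := by
        ext j
        rw [PowerSeries.coeff_mk, PowerSeries.coeff_smul, PowerSeries.coeff_X_pow]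
        by_cases hj : j = j'
        · subst hj; simp
        · rw [Finsupp.single_eq_of_ne (by simpa using hj)]; simp [hj]
      rw [this, mul_smul_comm]
    · rw [if_neg, smul_zero]
      · have : (PowerSeries.mk fun j => (Finsupp.single (i', j', n') k : (ℕ × ℕ × ℤ) →₀ K) (i, j, n))
          = 0 := by
          ext j
          rw [PowerSeries.coeff_mk, Finsupp.single_eq_of_ne]; · rfl
          intro h'; simp only [Prod.mk.injEq] at h'; exact h ⟨h'.1.symm, h'.2.2.symm⟩
        rw [this, mul_zero]
      · intro h'
        simp only [Prod.mk.injEq] at h'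
        obtain ⟨h1, rfl⟩ := h'
        exact h ⟨by omega, rfl⟩

theorem lc_zero {R : RD q s κ c B} {ψ : B →ₐ[K] TW K q s} {α : ℤ → ℤ}
    {w : ℕ → ℤ → PowerSeries K} (hw : ∀ i n, w i n ≠ 0)
    (hψ : ∀ i j n, ψ (R.mon (i, j, n)) = sg (i + α n, n) (w i n * PowerSeries.X ^ j))
    (l : (ℕ × ℕ × ℤ) →₀ K) (i : ℕ) (n : ℤ)
    (h : (ψ (Finsupp.linearCombination K R.mon l)).co (i + α n, n) = 0) (j : ℕ) : l (i, j, n) = 0 := by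
  rw [lc_co hψ] at h
  have := (mul_eq_zero.1 h).resolve_left (hw i n)
  simpa using congrArg (PowerSeries.coeff j) this

theorem lc_P0 (R : RD q s κ c B) (l : (ℕ × ℕ × ℤ) →₀ K) (n : ℤ)
    (h : ∀ i j n', n' ≠ n → l (i, j, n') = 0) :
    ∃ p ∈ R.P0, Finsupp.linearCombination K R.mon l = p * R.D n := by
  refine ⟨∑ i ∈ l.support, l i • (R.x ^ i.1 * R.t ^ i.2.1), ?_, ?_⟩
  · exact R.P0.sum_mem fun i _ => R.P0.smul_mem (R.mon_P0 _ _) _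
  · rw [Finsupp.linearCombination_apply, Finsupp.sum, Finset.sum_mul]
    refine Finset.sum_congr rfl fun i hi => ?_
    obtain ⟨i, j, n'⟩ := i
    have : n' = n := by
      by_contra hne
      exact (Finsupp.mem_support_iff.1 hi) (h i j n' hne)
    subst this
    rw [smul_mul_assoc]; rfl

end RD

namespace Frame
variable {K : Type} [Field K] {q s : Kˣ} {κ c : K} {B : Type} [Ring B] [Algebra K B]
  {R : RD q s κ c B} (F : Frame R)

theorem grad_ι : R.Grad F.ι := by
  refine ⟨1, 0, 1, 1, PowerSeries.C κ * (PowerSeries.X - 1), one_ne_zero, one_ne_zero, ?_, ?_, F.ιt,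
    F.ιd, F.ιu⟩
  · intro h
    have := congrArg PowerSeries.constantCoeff h
    simp [F.hκ] at this
  · rw [F.ιx, map_one]

theorem span' (b : B) : ∃ δ ∈ F.M, ∃ l, δ * b - Finsupp.linearCombination K R.mon l ∈ F.I := by
  obtain ⟨δ, hδ, h⟩ := F.span b
  obtain ⟨y, hy, z, hz, e⟩ := Submodule.mem_sup.1 h
  obtain ⟨l, rfl⟩ := (Finsupp.mem_span_range_iff_exists_finsupp).1 hy
  refine ⟨δ, hδ, l, ?_⟩
  rw [← e, Finsupp.linearCombination_apply, add_sub_cancel_left]; exact hz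

theorem ker {ψ : B →ₐ[K] TW K q s} (hψ : R.Grad ψ) (hI : ∀ i ∈ F.I, ψ i = 0) {b : B}
    (hb : ψ b = 0) : b ∈ F.I := by
  obtain ⟨δ, hδ, l, hl⟩ := F.span' b
  obtain ⟨α, w, hw, hm⟩ := hψ.mon
  have h0 : ψ (Finsupp.linearCombination K R.mon l) = 0 := by
    have := hI _ hl
    rw [map_sub, map_mul, hb, mul_zero, zero_sub, neg_eq_zero] at this
    exact this
  have : l = 0 := by
    ext ⟨i, j, n⟩
    exact RD.lc_zero hw hm l i n (by rw [h0]; rfl) j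
  rw [this, map_zero, sub_zero] at hl
  obtain ⟨v, rfl⟩ := F.M_unit hδ
  have := F.hl ((v⁻¹ : Bˣ) : B) _ hl
  simpa using this

theorem ker_ι {b : B} (hb : F.ι b = 0) : b ∈ F.I := F.ker F.grad_ι F.ιI hb

theorem hom {b : B} {i n : ℤ} {f : PowerSeries K} (hb : F.ι b = sg (i, n) f) :
    ∃ δ ∈ F.M, ∃ p ∈ R.P0, δ * b - p * R.D n ∈ F.I := by
  obtain ⟨δ, hδ, l, hl⟩ := F.span' b
  obtain ⟨α, w, hw, hm⟩ := F.grad_ι.mon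
  have h0 := F.ιI _ hl
  obtain ⟨j, f', hf', e⟩ := F.M_ι hδ
  rw [map_sub, map_mul, hb, e, sg_mul, sub_eq_zero] at h0
  have : ∀ i' j' n', n' ≠ n → l (i', j', n') = 0 := by
    intro i' j' n' hn
    refine RD.lc_zero hw hm l i' n' ?_ j'
    rw [← h0, co_sg, if_neg]
    intro h; apply hn
    have := congrArg Prod.snd h
    simpa using this.symm
  obtain ⟨p, hp, e⟩ := R.lc_P0 l n this
  exact ⟨δ, hδ, p, hp, by rwa [← e]⟩

theorem ρ_P0 {p : B} (hp : p ∈ R.P0) {m : ℕ} : ∀ {v}, v ∈ low K m → F.ρ p v ∈ low K m := by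
  refine R.P0_induct (p := fun p => ∀ {v}, v ∈ low K m → F.ρ p v ∈ low K m) ?_ ?_ ?_ ?_ ?_ hp
  · refine low_map fun k hk => ?_
    rw [F.ρx]; simp only [RD.rep, lmk_e]
    exact (low K m).smul_mem _ (e_low hk)
  · refine low_map fun k hk => ?_
    rw [F.ρt]; simp only [RD.rep, lmk_e]
    exact (low K m).smul_mem _ (e_low hk)
  · intro k v hv
    rw [AlgHom.commutes, Module.algebraMap_end_apply, ksmul]
    exact (low K m).smul_mem _ hv
  · intro a b h h' v hv
    rw [map_add]; exact (low K m).add_mem (h hv) (h' hv)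
  · intro a b h h' v hv
    rw [map_mul]; exact h (h' hv)

theorem ρ_d {m : ℕ} : ∀ {v}, v ∈ low K m → F.ρ R.d v ∈ low K (m + 1) := by
  refine low_map fun k hk => ?_
  rw [F.ρd]; simp only [RD.rep, lmk_e]
  exact e_low (by omega)

theorem ρ_u {m : ℕ} : ∀ {v}, v ∈ low K m → F.ρ R.u v ∈ low K (m - 1) := by
  refine low_map fun k hk => ?_
  rw [F.ρu]; simp only [RD.rep, lmk_e]
  rcases k with _ | k
  · exact Submodule.zero_mem _
  · rw [RD.uf_succ]
    exact (low K _).smul_mem _ (e_low (by omega))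

theorem ρ_D (n : ℤ) {m m' : ℕ} (h : (m' : ℤ) = m + n) {v} (hv : v ∈ low K m) :
    F.ρ (R.D n) v ∈ low K m' := by
  rcases n with n | n
  · change F.ρ (R.d ^ n) v ∈ _
    have e : m' = m + n := by have := h; simp at this; omega
    clear h; subst e
    induction n with
    | zero => simpa using hv
    | succ n ih => rw [pow_succ', map_mul]; exact F.ρ_d ih
  · change F.ρ (R.u ^ (n + 1)) v ∈ _
    have e : m = m' + (n + 1) := by rw [Int.negSucc_eq] at h; omega
    clear h; subst e
    generalize n + 1 = k at *
    induction k generalizing m' with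
    | zero => simpa using hv
    | succ n ih =>
      rw [pow_succ', map_mul]
      have := F.ρ_u (ih (m' := m' + 1) (by convert hv using 2; omega))
      simpa using this

theorem ρ_M {δ : B} (hδ : δ ∈ F.M) : ∃ N : ℕ, ∀ m, N ≤ m → ∀ v ∈ low K m, F.ρ δ v ∈ low K m := by
  refine F.M_induct (p := fun δ => ∃ N : ℕ, ∀ m, N ≤ m → ∀ v ∈ low K m, F.ρ δ v ∈ low K m)
    ?_ ?_ ?_ ?_ ?_ hδ
  · exact ⟨0, fun m _ v hv => F.ρ_P0 R.x_P0 hv⟩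
  · intro k
    obtain ⟨N, hN, -⟩ := F.ρI _ (F.gI k)
    refine ⟨N, fun m hm v hv => ?_⟩
    have h1 := low_mono hm (hN v)
    have h2 := F.ρ_P0 (R.P0.sub_mem R.t_P0 (R.P0.smul_mem R.P0.one_mem (c * ((q ^ k : Kˣ) : K)))) hv
    have := (low K m).add_mem h1 h2
    rwa [← LinearMap.add_apply, ← map_add, sub_add_cancel] at this
  · intro k
    refine ⟨0, fun m _ v hv => ?_⟩
    rw [AlgHom.commutes, Module.algebraMap_end_apply, ksmul]
    exact (low K m).smul_mem _ hv
  · exact ⟨0, fun m _ v hv => by simpa using hv⟩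
  · rintro a b _ _ ⟨N, h⟩ ⟨N', h'⟩
    refine ⟨N + N', fun m hm v hv => ?_⟩
    rw [map_mul]
    exact h m (by omega) _ (h' m (by omega) v hv)

theorem ρ_unit {δ : B} (hδ : IsUnit δ) : Function.Bijective (F.ρ δ) :=
  (Module.End.isUnit_iff _).1 (hδ.map F.ρ)

theorem band {b : B} {i n : ℤ} {f : PowerSeries K} (hb : F.ι b = sg (i, n) f) :
    ∃ N : ℕ, ∀ m m' : ℕ, N ≤ m → N ≤ m' → (m' : ℤ) = m + n → ∀ v ∈ low K m, F.ρ b v ∈ low K m' := by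
  obtain ⟨δ, hδ, p, hp, h⟩ := F.hom hb
  obtain ⟨N, hN⟩ := F.ρ_M hδ
  obtain ⟨N', hN', -⟩ := F.ρI _ h
  refine ⟨N + N', fun m m' hm hm' e v hv => ?_⟩
  refine reflect (F.ρ_unit (F.M_unit hδ)).1 (hN m' (by omega)) ?_
  have h1 := low_mono (show N' ≤ m' by omega) (hN' v)
  have h2 := F.ρ_P0 hp (F.ρ_D n e hv)
  have := (low K m').add_mem h1 h2
  rw [← Module.End.mul_apply, ← map_mul, ← LinearMap.add_apply, ← map_add, sub_add_cancel, map_mul] at this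
  exact this

theorem band_inj {b : B} {i n : ℤ} {f : PowerSeries K} (hb : F.ι b = sg (i, n) f)
    (hi : Function.Injective (F.ρ b)) : 0 ≤ n := by
  obtain ⟨N, hN⟩ := F.band hb
  by_contra hn
  obtain ⟨k, rfl⟩ : ∃ k : ℕ, n = -(k : ℤ) := ⟨n.natAbs, by omega⟩
  have h := hN (N + k) N (by omega) le_rfl (by push_cast; ring)
  let T : low K (N + k) →ₗ[RatFunc K] low K N := (F.ρ b).restrict h
  have hT : Function.Injective T := fun a b hab => Subtype.ext (hi (congrArg Subtype.val hab))
  have := LinearMap.finrank_le_finrank_of_injective hT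
  rw [finrank_low, finrank_low] at this
  omega

theorem unit_deg {b : B} {i n : ℤ} {f : PowerSeries K} (hf : f ≠ 0) (hb : F.ι b = sg (i, n) f) (hu : IsUnit b) :
    n = 0 := by
  obtain ⟨v, rfl⟩ := hu
  have h1 := F.band_inj hb (F.ρ_unit v.isUnit).1
  have e : F.ι v * F.ι ((v⁻¹ : Bˣ) : B) = sg 0 1 := by rw [← map_mul]; simp [one_def]
  obtain ⟨g, ⟨i', n'⟩, f1, f2, hf1, hf2, e1, e2, e3, -⟩ := mono_of_mul one_ne_zero e
  have h2 := F.band_inj e2 (F.ρ_unit (v⁻¹).isUnit).1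
  rw [hb] at e1
  obtain ⟨rfl, rfl⟩ := sg_inj hf e1
  have := congrArg Prod.snd e3
  simp at this
  omega

end Frame

open TW VV

namespace TW
variable {K : Type} [Field K] {q s : Kˣ}

theorem co_mul_sg (a : TW K q s) (i j n : ℤ) (f : PowerSeries K) :
    (a * sg (i, 0) f).co (j + i, n) =
      a.co (j, n) * act q n f * PowerSeries.C ((s ^ (n * i) : Kˣ) : K) := by
  induction a using induct with
  | h0 => simp
  | ha a b h h' => rw [add_mul, co_add, h, h', co_add]; ring
  | hs g f' =>
    obtain ⟨j', n'⟩ := g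
    rw [sg_mul, co_sg, co_sg]
    by_cases h : (j', n') = (j, n)
    · rw [if_pos h]
      simp only [Prod.mk.injEq] at h
      obtain ⟨rfl, rfl⟩ := h
      rw [if_pos (by simp)]; rfl
    · rw [if_neg h, if_neg (by simpa using h)]; simp

theorem co_sg_mul (a : TW K q s) (i j n : ℤ) (f : PowerSeries K) :
    (sg (i, 0) f * a).co (j + i, n) = f * a.co (j, n) := by
  induction a using induct with
  | h0 => simp
  | ha a b h h' => rw [mul_add, co_add, h, h', co_add]; ring
  | hs g f' =>
    obtain ⟨j', n'⟩ := g
    rw [sg_mul, co_sg, co_sg]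
    by_cases h : (j', n') = (j, n)
    · rw [if_pos h]
      simp only [Prod.mk.injEq] at h
      obtain ⟨rfl, rfl⟩ := h
      rw [if_pos (by simp [add_comm])]; simp [chi]
    · rw [if_neg h, if_neg (by simpa [add_comm i] using h)]; simp

theorem unit_mono {a : TW K q s} (h : IsUnit a) : ∃ g f, f ≠ 0 ∧ a = sg g f := by
  obtain ⟨v, rfl⟩ := h
  have e : (v : TW K q s) * ((v⁻¹ : (TW K q s)ˣ) : TW K q s) = sg 0 1 := by simp [one_def]
  obtain ⟨g, _, f, _, hf, _, e1, _⟩ := mono_of_mul one_ne_zero e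
  exact ⟨g, f, hf, e1⟩

theorem const_of_units {a : TW K q s} {k k' : K} (hk : k ≠ k') (h : IsUnit (a - k • (1 : TW K q s)))
    (h' : IsUnit (a - k' • (1 : TW K q s))) : ∃ τ, a = sg (0, 0) τ := by
  have e1 : ∀ k : K, k • (1 : TW K q s) = sg 0 (PowerSeries.C k) := fun k => by
    rw [one_def, smul_sg, PowerSeries.smul_eq_C_mul, mul_one]
  obtain ⟨g, f, hf, e⟩ := unit_mono h
  obtain ⟨g', f', hf', e'⟩ := unit_mono h'
  rw [e1] at e e'
  by_cases hg : g = 0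
  · subst hg
    refine ⟨f + PowerSeries.C k, ?_⟩
    rw [sub_eq_iff_eq_add] at e
    rw [e, ← sg_add]; rfl
  by_cases hg' : g' = 0
  · subst hg'
    refine ⟨f' + PowerSeries.C k', ?_⟩
    rw [sub_eq_iff_eq_add] at e'
    rw [e', ← sg_add]; rfl
  exfalso
  have h1 := congrArg (fun a => co a 0) e
  have h2 := congrArg (fun a => co a 0) e'
  simp only [co_sub, co_sg, if_neg hg, if_neg hg', if_true] at h1 h2
  have : PowerSeries.C k = PowerSeries.C k' := (sub_eq_zero.1 h1).symm.trans (sub_eq_zero.1 h2)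
  exact hk (by simpa using congrArg PowerSeries.constantCoeff this)

theorem twist_coeff (hind : ∀ a b : ℤ, q ^ a * s ^ b = 1 → a = 0 ∧ b = 0) {n i a b : ℤ}
    {f : PowerSeries K}
    (h : act q n f * PowerSeries.C ((s ^ i : Kˣ) : K) = PowerSeries.C ((q ^ a * s ^ b : Kˣ) : K) * f)
    {k : ℕ} (hk : PowerSeries.coeff k f ≠ 0) : n * k = a ∧ i = b := by
  have h1 := congrArg (PowerSeries.coeff k) h
  rw [PowerSeries.coeff_mul_C, PowerSeries.coeff_C_mul] at h1
  simp only [act, PowerSeries.coeff_rescale] at h1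
  have h2 : ((q ^ n) ^ k * s ^ i : Kˣ) = q ^ a * s ^ b := by
    apply Units.ext
    apply mul_right_cancel₀ hk
    rw [← h1]; push_cast; ring
  rw [← zpow_natCast, ← zpow_mul] at h2
  have h3 : q ^ (n * k - a) * s ^ (i - b) = 1 := by
    rw [zpow_sub, zpow_sub]
    calc q ^ (n * ↑k) * (q ^ a)⁻¹ * (s ^ i * (s ^ b)⁻¹) = (q ^ (n * ↑k) * s ^ i) * (q ^ a * s ^ b)⁻¹ := by
          rw [mul_inv]; exact mul_mul_mul_comm _ _ _ _
      _ = 1 := by rw [h2, mul_inv_cancel]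
  have := hind _ _ h3
  omega

end TW

namespace Frame
variable {K : Type} [Field K] {q s : Kˣ} {κ c : K} {B : Type} [Ring B] [Algebra K B]
  {R : RD q s κ c B} (F : Frame R)

theorem q_ne (F : Frame R) : (q : K) ≠ 1 := by
  intro h
  have := F.hind 1 0 (by simpa using Units.ext h)
  omega

theorem qc_ne (F : Frame R) : (q : K) * c ≠ 1 := by
  intro h
  refine F.hcr 0 ?_
  rw [zero_add, pow_one]
  exact eq_inv_of_mul_eq_one_right h

theorem main1 (θ : B →ₐ[K] B) (hτ : F.ι (θ R.t) = 0 → IsUnit (θ R.t - 1)) :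
    ∃ (l μ : K) (a a' : ℤ) (f f' : PowerSeries K), l ≠ 0 ∧ f ≠ 0 ∧ f' ≠ 0 ∧
      F.ι (θ R.x) = sg (1, 0) (PowerSeries.C l) ∧
      F.ι (θ R.t) = sg (0, 0) (PowerSeries.C μ * PowerSeries.X) ∧
      F.ι (θ R.d) = sg (a, 1) f ∧ F.ι (θ R.u) = sg (a', -1) f' := by
  let S : RD q s κ c (TW K q s) := R.map (F.ι.comp θ)
  have hind := F.hind
  obtain ⟨τ, hτ'⟩ : ∃ τ, S.t = sg (0, 0) τ := by
    refine const_of_units (k := c) (k' := q * c) ?_ S.isUnit_tc (S.unit_up F.hκ F.qc_ne S.isUnit_tc)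
    intro h
    have : ((q : K) - 1) * c = 0 := by rw [sub_mul, ← h]; ring
    rcases mul_eq_zero.1 this with h | h
    · exact F.q_ne (sub_eq_zero.1 h)
    · exact F.hc0 h
  obtain ⟨⟨i, l⟩, g, hg, hx⟩ := unit_mono S.isUnit_x
  obtain rfl : l = 0 := F.unit_deg (b := θ R.x) hg hx (R.isUnit_x.map θ)
  have hD : S.d ≠ 0 := by
    intro h0
    have h1 := S.ud
    have h2 := S.du
    rw [h0, mul_zero] at h1
    rw [h0, zero_mul] at h2
    have hxne : S.x ≠ 0 := S.isUnit_x.ne_zero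
    have h1' := (smul_eq_zero.1 h1.symm).resolve_left F.hκ
    have h2' := (smul_eq_zero.1 h2.symm).resolve_left (mul_ne_zero F.hκ s.ne_zero)
    have h3 := sub_eq_zero.1 ((mul_eq_zero.1 h1').resolve_left hxne)
    have h4 := sub_eq_zero.1 ((mul_eq_zero.1 h2').resolve_left hxne)
    rw [h3] at h4
    have : ((q : K) - 1) • (1 : TW K q s) = 0 := by rw [sub_smul, h4, one_smul, sub_self]
    exact F.q_ne (sub_eq_zero.1 ((smul_eq_zero.1 this).resolve_right one_ne_zero))
  -- twisted commutation on coefficients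
  have ct : ∀ j n, S.d.co (j, n) ≠ 0 →
      act q n τ * PowerSeries.C ((s ^ (0 : ℤ) : Kˣ) : K) =
        PowerSeries.C ((q ^ (1 : ℤ) * s ^ (0 : ℤ) : Kˣ) : K) * τ := by
    intro j n hj
    have h1 := congrArg (fun a => co a (j + 0, n)) S.dt
    simp only [hτ', co_smul, co_mul_sg, co_sg_mul] at h1
    apply mul_left_cancel₀ hj
    rw [PowerSeries.smul_eq_C_mul] at h1
    simp at h1
    simp only [zpow_zero, zpow_one, mul_one, Units.val_one, map_one]
    rw [h1]; ring
  have cx : ∀ j n, S.d.co (j, n) ≠ 0 →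
      act q n g * PowerSeries.C ((s ^ (n * i) : Kˣ) : K) =
        PowerSeries.C ((q ^ (0 : ℤ) * s ^ (1 : ℤ) : Kˣ) : K) * g := by
    intro j n hj
    have h1 := congrArg (fun a => co a (j + i, n)) S.dx
    simp only [hx, co_smul, co_mul_sg, co_sg_mul] at h1
    apply mul_left_cancel₀ hj
    rw [PowerSeries.smul_eq_C_mul] at h1
    rw [← mul_assoc, h1]
    simp; ring
  obtain ⟨k, hk⟩ : ∃ k, PowerSeries.coeff k g ≠ 0 := by
    by_contra h
    push Not at h
    exact hg (PowerSeries.ext (by simpa using h))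
  have key : (∃ μ : K, τ = PowerSeries.C μ * PowerSeries.X) ∧ ∀ j n, S.d.co (j, n) ≠ 0 → n = 1 := by
    by_cases hz : τ = 0
    · refine ⟨⟨0, by simp [hz]⟩, ?_⟩
      have hu := hτ (by
        have : F.ι (θ R.t) = _ := hτ'
        rw [this, hz, sg_zero])
      have hun : IsUnit (θ R.u * θ R.d) := by
        rw [← map_mul, R.ud, map_smul, map_mul, map_sub, map_one, Algebra.smul_def]
        exact ((Units.mk0 κ F.hκ).isUnit.map (algebraMap K B)).mul ((R.isUnit_x.map θ).mul hu)
      obtain ⟨⟨j0, n0⟩, f0, hf0, e0⟩ := unit_mono (hun.map F.ι)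
      rw [map_mul] at e0
      obtain ⟨_, ⟨j1, n1⟩, _, f1, _, hf1, _, e1, -, -⟩ := mono_of_mul hf0 e0
      have hinj : Function.Injective (F.ρ (θ R.d)) := by
        have := (F.ρ_unit hun).1
        rw [map_mul] at this
        exact Function.Injective.of_comp (f := F.ρ (θ R.u)) this
      have hn := F.band_inj e1 hinj
      intro j n hj
      have e1' : S.d = _ := e1
      rw [e1', co_sg] at hj
      have hjn : (j1, n1) = (j, n) := by by_contra h; simp [h] at hj
      simp only [Prod.mk.injEq] at hjn
      obtain ⟨rfl, rfl⟩ := hjn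
      have := (twist_coeff hind (cx j1 n1 (by rw [e1', co_sg_self]; exact hf1)) hk).2
      exact Int.eq_one_of_mul_eq_one_right hn this
    · obtain ⟨k', hk'⟩ : ∃ k, PowerSeries.coeff k τ ≠ 0 := by
        by_contra h
        push Not at h
        exact hz (PowerSeries.ext (by simpa using h))
      have hn : ∀ j n, S.d.co (j, n) ≠ 0 → n = 1 := by
        intro j n hj
        have := (twist_coeff hind (ct j n hj) hk').1
        rcases Int.eq_one_or_neg_one_of_mul_eq_one this with h | h
        · exact h
        · rw [h] at this; omega
      refine ⟨⟨PowerSeries.coeff 1 τ, ?_⟩, hn⟩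
      obtain ⟨⟨j, n⟩, hjn⟩ := su_nonempty hD
      rw [mem_su] at hjn
      obtain rfl := hn j n hjn
      ext k2
      rw [PowerSeries.coeff_C_mul, PowerSeries.coeff_X]
      by_cases h1 : k2 = 1
      · simp [h1]
      · rw [if_neg h1, mul_zero]
        by_contra hne
        have := (twist_coeff hind (ct j 1 hjn) hne).1
        omega
  obtain ⟨⟨μ, rfl⟩, hn⟩ := key
  obtain ⟨⟨j, n⟩, hjn⟩ := su_nonempty hD
  rw [mem_su] at hjn
  obtain rfl := hn j n hjn
  obtain ⟨-, hi⟩ := twist_coeff hind (cx j 1 hjn) hk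
  rw [one_mul] at hi
  subst hi
  have hgC : g = PowerSeries.C (PowerSeries.coeff 0 g) := by
    ext k2
    rw [PowerSeries.coeff_C]
    by_cases h1 : k2 = 0
    · simp [h1]
    · rw [if_neg h1]
      by_contra hne
      have := (twist_coeff hind (cx j 1 hjn) hne).1
      omega
  set l := PowerSeries.coeff 0 g with hl
  have hl0 : l ≠ 0 := by
    intro h0; rw [h0] at hgC; exact hg (by simpa using hgC)
  have hud := S.ud
  rw [hx, hτ', hgC, one_def, Prod.zero_eq_mk, ← sg_sub, sg_mul, smul_sg] at hud
  obtain ⟨g1, g2, f1, f2, hf1, hf2, e1, e2, e3, -⟩ := mono_of_mul (by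
    simp only [chi, act_zero]
    intro h0
    have := congrArg PowerSeries.constantCoeff h0
    simp [PowerSeries.smul_eq_C_mul, F.hκ, hl0] at this) hud
  have hg2 : g2.2 = 1 := hn g2.1 g2.2 (by rw [e2, co_sg_self]; exact hf2)
  have hg1 : g1.2 = -1 := by
    have := congrArg Prod.snd e3
    simp at this; omega
  refine ⟨l, μ, g2.1, g1.1, f2, f1, hl0, hf2, hf1, ?_, hτ', ?_, ?_⟩
  · rw [← hgC]; exact hx
  · rw [← hg2]; exact e2
  · rw [← hg1]; exact e1

end Frame

open TW VV

theorem absorb_aux {K T : Type} [Field K] [Ring T] [Algebra K T] [NoZeroDivisors T]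
    {l : K} {δ δ' δ1 D U dd uu P P' P1 : T}
    (h1 : δ * D = P * dd) (h2 : δ' * U = P' * uu) (h3 : D * U = l • (dd * uu))
    (h4 : D * δ' = δ1 * D) (h5 : dd * P' = P1 * dd) (h6 : δ * δ1 = δ1 * δ) (h7 : P * P1 = P1 * P)
    (hd : dd ≠ 0) (hu : uu ≠ 0) :
    l • (δ * δ1 * dd) = P1 * (δ * D) := by
  have e : (P * P1) * (dd * uu) = (l • (δ * δ1)) * (dd * uu) := by
    calc (P * P1) * (dd * uu) = P * (P1 * dd) * uu := by simp only [mul_assoc]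
      _ = (P * dd) * (P' * uu) := by rw [← h5]; simp only [mul_assoc]
      _ = δ * (D * δ') * U := by rw [← h1, ← h2]; simp only [mul_assoc]
      _ = δ * δ1 * (D * U) := by rw [h4]; simp only [mul_assoc]
      _ = _ := by rw [h3, mul_smul_comm, smul_mul_assoc]
  have e' := sub_eq_zero.2 e
  rw [← sub_mul] at e'
  have e2 := sub_eq_zero.1 ((mul_eq_zero.1 e').resolve_right (mul_ne_zero hd hu))
  rw [h1, ← mul_assoc, ← h7, e2, smul_mul_assoc]

namespace TW
variable {K : Type} [Field K] {q s : Kˣ}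

theorem sg_twist (a n i : ℤ) (f h : PowerSeries K) :
    (sg (a, n) f * sg (i, 0) h : TW K q s) =
      sg (i, 0) (act q n h * PowerSeries.C ((s ^ (n * i) : Kˣ) : K)) * sg (a, n) f := by
  rw [sg_mul, sg_mul]
  simp only [chi, act_zero, Prod.mk_add_mk, add_comm, zero_mul, zpow_zero, Units.val_one, map_one, mul_one]
  congr 1
  ring

theorem twist_eq {a n a' i : ℤ} {f f' : PowerSeries K} (hf' : f' ≠ 0) {z z1 : TW K q s}
    (hz : ∃ i h, h ≠ 0 ∧ z = sg (i, 0) h) (h : sg (a', n) f' * z = z1 * sg (a', n) f') :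
    sg (a, n) f * z = z1 * sg (a, n) f := by
  obtain ⟨i, h', -, rfl⟩ := hz
  rw [sg_twist] at h ⊢
  have e := sub_eq_zero.2 h
  rw [← sub_mul] at e
  rw [sub_eq_zero.1 ((mul_eq_zero.1 e).resolve_right ?_)]
  intro h0
  apply hf'
  have := congrArg (fun z => co z (a', n)) h0
  simpa using this

end TW

namespace Frame
variable {K : Type} [Field K] {q s : Kˣ} {κ c : K} {B : Type} [Ring B] [Algebra K B]
  {R : RD q s κ c B} (F : Frame R)

theorem main2 (θ : B →ₐ[K] B) (hG : R.Grad (F.ι.comp θ)) (hI : ∀ i ∈ F.I, F.ι (θ i) = 0) :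
    (∀ b, θ b = 0 → b ∈ F.I) ∧ ∀ b, ∃ b', θ b' - b ∈ F.I := by
  refine ⟨fun b hb => F.ker hG hI (by simp [hb]), ?_⟩
  obtain ⟨l, a, a', f, f', hl, hf, hf', hx, ht, hd, hu⟩ := hG
  set φ := F.ι.comp θ with hφ
  let R0 := φ.range
  have mR (b : B) : φ b ∈ R0 := ⟨b, rfl⟩
  have hxx : φ R.x = l • F.ι R.x := by
    rw [hx, F.ιx, smul_sg, PowerSeries.smul_eq_C_mul, mul_one]
  have htt : φ R.t = F.ι R.t := by rw [ht, F.ιt]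
  have r_x : F.ι R.x ∈ R0 := by
    have := R0.smul_mem (mR R.x) l⁻¹
    rwa [hxx, smul_smul, inv_mul_cancel₀ hl, one_smul] at this
  have r_t : F.ι R.t ∈ R0 := htt ▸ mR R.t
  have r_xi : F.ι R.xi ∈ R0 := by
    have : F.ι R.xi = l • φ R.xi := by
      calc F.ι R.xi = F.ι R.xi * (φ R.x * φ R.xi) := by rw [← map_mul, R.x_xi, map_one, mul_one]
        _ = l • (F.ι (R.xi * R.x) * φ R.xi) := by
          rw [hxx, smul_mul_assoc, mul_smul_comm, map_mul, mul_assoc]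
        _ = _ := by rw [R.xi_x, map_one, one_mul]
    rw [this]; exact R0.smul_mem (mR _) _
  have r_ti : F.ι R.ti ∈ R0 := by
    have h1 : φ (R.t - c • (1 : B)) = F.ι (R.t - c • (1 : B)) := by
      simp only [map_sub, map_smul, map_one, htt]
    have : F.ι R.ti = φ R.ti := by
      calc F.ι R.ti = F.ι R.ti * (φ (R.t - c • (1 : B)) * φ R.ti) := by
            rw [← map_mul, R.t_ti, map_one, mul_one]
        _ = _ := by rw [h1, ← mul_assoc, ← map_mul, R.ti_t, map_one, one_mul]
    rw [this]; exact mR _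
  have r_P {p : B} (hp : p ∈ R.P0) : F.ι p ∈ R0 := by
    refine R.P0_induct (p := fun p => F.ι p ∈ R0) r_x r_t ?_ ?_ ?_ hp
    · intro k; rw [AlgHom.commutes]; exact R0.algebraMap_mem k
    · intro a b h h'; rw [map_add]; exact R0.add_mem h h'
    · intro a b h h'; rw [map_mul]; exact R0.mul_mem h h'
  have hg (k : ℤ) : φ (F.g k) = F.ι (F.g k) := by
    have h1 := hI _ (F.gI k)
    have h2 := F.ιI _ (F.gI k)
    change φ _ = 0 at h1
    rw [map_sub, sub_eq_zero] at h1 h2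
    rw [h1, h2]
    simp only [map_sub, map_smul, map_one, htt]
  have r_M {δ : B} (hδ : δ ∈ F.M) : ∃ δ' ∈ F.M, φ δ' = F.ι δ := by
    refine F.M_induct (p := fun δ => ∃ δ' ∈ F.M, φ δ' = F.ι δ) ?_ ?_ ?_ ?_ ?_ hδ
    · exact ⟨l⁻¹ • R.x, F.smul_mem (inv_ne_zero hl) F.x_mem, by
        rw [map_smul, hxx, smul_smul, inv_mul_cancel₀ hl, one_smul]⟩
    · intro k; exact ⟨_, F.g_mem k, hg k⟩
    · intro k; exact ⟨_, F.k_mem k, by rw [AlgHom.commutes, AlgHom.commutes]⟩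
    · exact ⟨1, F.M.one_mem, by rw [map_one, map_one]⟩
    · rintro a b - - ⟨a', h1, e1⟩ ⟨b', h2, e2⟩
      exact ⟨a' * b', F.M.mul_mem h1 h2, by rw [map_mul, map_mul, e1, e2]⟩
  have r_Mm {δ : B} (hδ : δ ∈ F.M) : F.ι δ ∈ R0 := by
    obtain ⟨δ', -, e⟩ := r_M hδ; rw [← e]; exact mR _
  have r_Mc {δ : B} (hδ : δ ∈ F.M) {z : TW K q s} (h : F.ι δ * z ∈ R0) : z ∈ R0 := by
    obtain ⟨δ', h', e⟩ := r_M hδ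
    obtain ⟨v, rfl⟩ := F.M_unit h'
    have := R0.mul_mem (mR ((v⁻¹ : Bˣ) : B)) h
    rwa [← e, ← mul_assoc, ← map_mul, Units.inv_mul, map_one, one_mul] at this
  have hκX : PowerSeries.C κ * (PowerSeries.X - 1) ≠ 0 := by
    intro h
    have := congrArg PowerSeries.constantCoeff h
    simp [F.hκ] at this
  have sgne : ∀ (g : ℤ × ℤ) {f : PowerSeries K}, f ≠ 0 → (sg g f : TW K q s) ≠ 0 := by
    intro g f hf h0
    apply hf
    have := congrArg (fun z => co z g) h0
    simpa using this
  have dd0 : F.ι R.d ≠ 0 := by rw [F.ιd]; exact sgne _ one_ne_zero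
  have uu0 : F.ι R.u ≠ 0 := by rw [F.ιu]; exact sgne _ hκX
  have hdu : φ R.d * φ R.u = l • (F.ι R.d * F.ι R.u) := by
    rw [← map_mul, ← map_mul, R.du]
    simp only [map_smul, map_mul, map_sub, map_one, hxx, htt, smul_mul_assoc]
    rw [smul_comm]
  have hud : φ R.u * φ R.d = l • (F.ι R.u * F.ι R.d) := by
    rw [← map_mul, ← map_mul, R.ud]
    simp only [map_smul, map_mul, map_sub, map_one, hxx, htt, smul_mul_assoc]
    rw [smul_comm]
  have hD1 : R.D 1 = R.d := pow_one _
  have hU1 : R.D (-1) = R.u := pow_one _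
  obtain ⟨δ, hδ, p, hp, e⟩ := F.hom (b := θ R.d) hd
  obtain ⟨δ', hδ', p', hp', e'⟩ := F.hom (b := θ R.u) hu
  have e := F.ιI _ e
  have e' := F.ιI _ e'
  rw [map_sub, sub_eq_zero, map_mul, map_mul, hD1] at e
  rw [map_sub, sub_eq_zero, map_mul, map_mul, hU1] at e'
  change F.ι δ * φ R.d = _ at e
  change F.ι δ' * φ R.u = _ at e'
  have r_d : F.ι R.d ∈ R0 := by
    obtain ⟨p1, hp1, e1⟩ := R.P0_d hp'
    obtain ⟨δ1, hδ1, e2⟩ := F.M_d hδ'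
    have e2 := F.ιI _ e2
    rw [map_sub, sub_eq_zero, map_mul, map_mul, F.ιd] at e2
    have h4 : φ R.d * F.ι δ' = F.ι δ1 * φ R.d := by
      rw [hd]; exact twist_eq (i := 0) one_ne_zero (F.M_ι hδ') e2.symm
    have := absorb_aux (K := K) e e' hdu h4 (by rw [← map_mul, e1, map_mul])
      (by rw [← map_mul, (F.M_comm hδ hδ1).eq, map_mul])
      (by rw [← map_mul, (R.P0_comm hp hp1).eq, map_mul]) dd0 uu0
    have h := R0.mul_mem (r_P hp1) (R0.mul_mem (r_Mm hδ) (mR R.d))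
    rw [← this] at h
    have h := R0.smul_mem h l⁻¹
    rw [smul_smul, inv_mul_cancel₀ hl, one_smul, ← map_mul] at h
    exact r_Mc (F.M.mul_mem hδ hδ1) h
  have r_u : F.ι R.u ∈ R0 := by
    obtain ⟨p1, hp1, e1⟩ := R.P0_u hp
    obtain ⟨δ1, hδ1, e2⟩ := F.M_u hδ
    have e2 := F.ιI _ e2
    rw [map_sub, sub_eq_zero, map_mul, map_mul, F.ιu] at e2
    have h4 : φ R.u * F.ι δ = F.ι δ1 * φ R.u := by
      rw [hu]; exact twist_eq (i := 0) hκX (F.M_ι hδ) e2.symm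
    have := absorb_aux (K := K) e' e hud h4 (by rw [← map_mul, e1, map_mul])
      (by rw [← map_mul, (F.M_comm hδ' hδ1).eq, map_mul])
      (by rw [← map_mul, (R.P0_comm hp' hp1).eq, map_mul]) uu0 dd0
    have h := R0.mul_mem (r_P hp1) (R0.mul_mem (r_Mm hδ') (mR R.u))
    rw [← this] at h
    have h := R0.smul_mem h l⁻¹
    rw [smul_smul, inv_mul_cancel₀ hl, one_smul, ← map_mul] at h
    exact r_Mc (F.M.mul_mem hδ' hδ1) h
  have key : (⊤ : Subalgebra K B) ≤ R0.comap F.ι := by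
    rw [← show Algebra.adjoin K _ = ⊤ from F.gen]
    apply Algebra.adjoin_le
    rintro y (rfl | rfl | rfl | rfl | rfl | rfl)
    exacts [r_d, r_u, r_x, r_xi, r_t, r_ti]
  intro b
  obtain ⟨b', hb'⟩ := key (trivial : b ∈ (⊤ : Subalgebra K B))
  refine ⟨b', F.ker_ι ?_⟩
  have hb' : F.ι (θ b') = F.ι b := hb'
  rw [map_sub, hb', sub_self]

end Frame

open TW VV

namespace Frame
variable {K : Type} [Field K] {q s : Kˣ} {κ c : K} {B : Type} [Ring B] [Algebra K B]
  {R : RD q s κ c B} (F : Frame R)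

theorem ρd_e (k : ℕ) : F.ρ R.d (e k) = e (k + 1) := by rw [F.ρd]; simp only [RD.rep, lmk_e]
theorem ρx_e (k : ℕ) : F.ρ R.x (e k) = (RatFunc.X * (Cc (s : K))⁻¹ ^ k) • e k := by
  rw [F.ρx]; simp only [RD.rep, lmk_e]
theorem ρt_e (k : ℕ) : F.ρ R.t (e k) = ((Cc (q : K))⁻¹ ^ (k + 1)) • e k := by
  rw [F.ρt]; simp only [RD.rep, lmk_e]
theorem ρu_e0 : F.ρ R.u (e 0) = 0 := by rw [F.ρu]; simp only [RD.rep, lmk_e]; rfl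
theorem e_ne (k : ℕ) : (e k : VV K) ≠ 0 := by
  intro h
  have := DFunLike.congr_fun h k
  simp [e] at this

end Frame

namespace RD
variable {K : Type} [Field K] {q s : Kˣ} {κ c : K} {B : Type} [Ring B] [Algebra K B]

theorem gunits (R : RD q s κ c B) (hκ : κ ≠ 0) (hc : ∀ k : ℤ, c ≠ ((q ^ k : Kˣ) : K)) (k : ℤ) :
    IsUnit (R.t - (c * ((q ^ k : Kˣ) : K)) • (1 : B)) := by
  have hne : ∀ k : ℤ, c * ((q ^ k : Kˣ) : K) ≠ 1 := by
    intro k h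
    apply hc (-k)
    rw [zpow_neg]
    exact (Units.mul_eq_one_iff_eq_inv).1 h
  induction k with
  | zero => simpa using R.isUnit_tc
  | succ n ih =>
    have e : (q : K) * (c * ((q ^ (n : ℤ) : Kˣ) : K)) = c * ((q ^ (n + 1 : ℤ) : Kˣ) : K) := by
      rw [zpow_add_one]; push_cast; ring
    have := R.unit_up hκ (by rw [e]; exact hne _) ih
    rwa [e] at this
  | pred n ih =>
    have e : ((q⁻¹ : Kˣ) : K) * (c * ((q ^ (-n : ℤ) : Kˣ) : K)) = c * ((q ^ (-n - 1 : ℤ) : Kˣ) : K) := by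
      rw [zpow_sub_one]; push_cast; ring
    have := R.unit_down hκ (hne _) ih
    rwa [e] at this

theorem hcr_of (hc : ∀ k : ℤ, k < 0 → c ≠ ((q ^ k : Kˣ) : K)) (k : ℕ) : c ≠ ((q : K)⁻¹) ^ (k + 1) := by
  have := hc (-(k + 1 : ℕ)) (by omega)
  rw [zpow_neg, zpow_natCast] at this
  simpa using this

theorem generic_frame (R : RD q s κ c B) (hgen : R.Gen) (huniv : R.Univ)
    (hind : ∀ a b : ℤ, q ^ a * s ^ b = 1 → a = 0 ∧ b = 0) (hκ : κ ≠ 0) (hc0 : c ≠ 0)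
    (hc : ∀ k : ℤ, c ≠ ((q ^ k : Kˣ) : K)) : ∃ F : Frame R, F.I = ⊥ := by
  have hcr : ∀ k : ℕ, c ≠ ((q : K)⁻¹) ^ (k + 1) := hcr_of fun k _ => hc k
  obtain ⟨ι, ιd, ιu, ιx, ιt⟩ := huniv _ (RD.tw q s κ c hc0)
  obtain ⟨ρ, ρd, ρu, ρx, ρt⟩ := huniv _ (RD.rep q s κ c hcr)
  refine ⟨{ gen := hgen, hind := hind, hκ := hκ, hc0 := hc0, hc1 := by simpa using hc 0, hcr := hcr,
            ι := ι, ιd := ιd, ιu := ιu, ιx := ιx, ιt := ιt, ρ := ρ, ρd := ρd, ρu := ρu, ρx := ρx,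
            ρt := ρt, I := ⊥, hl := ?_, hr := ?_, ιI := ?_, ρI := ?_,
            g := fun k => R.t - (c * ((q ^ k : Kˣ) : K)) • (1 : B), gunit := R.gunits hκ hc,
            gcomm := ?_, gx := ?_, gt := ?_, g0 := by simp, gI := by simp }, rfl⟩
  · simp
  · simp
  · simp
  · rintro i rfl; exact ⟨0, by simp, by simp⟩
  · intro a b; simp only [sub_mul, mul_sub, smul_mul_assoc, mul_smul_comm, one_mul, mul_one]
    module
  · intro a; simp [sub_mul, mul_sub, R.xt]
  · intro a; simp [sub_mul, mul_sub]

theorem generic (R : RD q s κ c B) (hgen : R.Gen) (huniv : R.Univ)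
    (hind : ∀ a b : ℤ, q ^ a * s ^ b = 1 → a = 0 ∧ b = 0) (hκ : κ ≠ 0) (hc0 : c ≠ 0)
    (hc : ∀ k : ℤ, c ≠ ((q ^ k : Kˣ) : K)) (θ : B →ₐ[K] B) : Function.Bijective θ := by
  obtain ⟨F, hF⟩ := R.generic_frame hgen huniv hind hκ hc0 hc
  have inj : ∀ {b}, F.ι b = 0 → b = 0 := fun h => by
    have := F.ker_ι h; rw [hF] at this; simpa using this
  have inj2 : ∀ {a b}, F.ι a = F.ι b → a = b := fun h => 
    sub_eq_zero.1 (inj (by rw [map_sub, h, sub_self]))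
  obtain ⟨l, μ, a, a', f, f', hl, hf, hf', hx, ht, hd, hu⟩ := F.main1 θ (fun h => by
    rw [inj h, zero_sub]; exact isUnit_one.neg)
  have hθx : θ R.x = l • R.x := inj2 (by
    rw [hx, map_smul, F.ιx, smul_sg, PowerSeries.smul_eq_C_mul, mul_one])
  have hθt : θ R.t = μ • R.t := inj2 (by
    rw [ht, map_smul, F.ιt, smul_sg, PowerSeries.smul_eq_C_mul])
  have hμ : μ = 1 := by
    obtain ⟨δ, hδ, p, hp, h⟩ := F.hom (b := θ R.u) hu
    rw [hF, Submodule.mem_bot, sub_eq_zero] at h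
    have h0 : F.ρ (θ R.u) (e 0) = 0 := by
      apply (F.ρ_unit (F.M_unit hδ)).1
      rw [map_zero, ← Module.End.mul_apply, ← map_mul, h, map_mul, Module.End.mul_apply,
        show R.D (-1) = R.u from pow_one _, F.ρu_e0, map_zero]
    have h1 := congrArg (fun b => F.ρ (θ b) (e 0)) R.du
    simp only [map_mul, Module.End.mul_apply, h0, map_zero, map_smul, map_sub, map_one, hθx, hθt,
      LinearMap.smul_apply, LinearMap.sub_apply, Module.End.one_apply, F.ρt_e, F.ρx_e, ksmul,
      smul_smul, ← sub_smul] at h1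
    have h2 := (smul_eq_zero.1 h1.symm).resolve_right (Frame.e_ne 0)
    have h3 : Cc (μ : K) = 1 := by
      have hX := RatFunc.X_ne_zero (K := K)
      have hk : Cc κ ≠ 0 := (map_ne_zero _).2 hκ
      have hl' : Cc l ≠ 0 := (map_ne_zero _).2 hl
      have hs := Cne s
      have hq := Cne q
      have h4 : Cc κ * Cc (s : K) * Cc l * RatFunc.X * (Cc μ - 1) = 0 := by
        rw [← h2, zero_add, pow_one, pow_zero]
        field_simp
      have := (mul_eq_zero.1 h4).resolve_left (by positivity)
      exact sub_eq_zero.1 this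
    exact (algebraMap K (RatFunc K)).injective (h3.trans (map_one _).symm)
  subst hμ
  have hG : R.Grad (F.ι.comp θ) := ⟨l, a, a', f, f', hl, hf, hf', hx, by
    rw [AlgHom.comp_apply, ht, map_one, one_mul], hd, hu⟩
  obtain ⟨h1, h2⟩ := F.main2 θ hG (by rw [hF]; rintro i rfl; simp)
  constructor
  · rw [injective_iff_map_eq_zero]
    intro b hb
    have := h1 b hb; rw [hF] at this; simpa using this
  · intro b
    obtain ⟨b', hb'⟩ := h2 b
    rw [hF, Submodule.mem_bot, sub_eq_zero] at hb'
    exact ⟨b', hb'⟩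

end RD

open TW VV

/-- Special data: `t - 1` invertible. -/
structure Sp {K : Type} [Field K] {q s : Kˣ} {κ c : K} {B : Type} [Ring B] [Algebra K B]
    (R : RD q s κ c B) where
  v : B
  vd : v * R.d = 1
  vt : v * R.t = ((q⁻¹ : Kˣ) : K) • (R.t * v)
  vx : v * R.x = ((s⁻¹ : Kˣ) : K) • (R.x * v)
  uv : R.u = κ • (R.x * (R.t - 1) * v)
  tj : ∀ j : ℕ, IsUnit (R.t - ((q ^ j : Kˣ) : K) • (1 : B))
  m : ℕ
  hc : c = ((q ^ m : Kˣ) : K)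
  hκ : κ ≠ 0
  hind : ∀ a b : ℤ, q ^ a * s ^ b = 1 → a = 0 ∧ b = 0

theorem comm_pow_aux {K B : Type} [Field K] [Ring B] [Algebra K B] {a b : B} {k : K}
    (h : a * b = k • (b * a)) (n : ℕ) : a * b ^ n = k ^ n • (b ^ n * a) := by
  induction n with
  | zero => simp
  | succ n ih =>
    rw [pow_succ, ← mul_assoc, ih, smul_mul_assoc, mul_assoc, h, mul_smul_comm, smul_smul, pow_succ,
      mul_assoc]

theorem comm_pow_aux' {K B : Type} [Field K] [Ring B] [Algebra K B] {a b : B} {k : K}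
    (h : b * a = k • (a * b)) (n : ℕ) : b ^ n * a = k ^ n • (a * b ^ n) := by
  induction n with
  | zero => simp
  | succ n ih =>
    rw [pow_succ', mul_assoc, ih, mul_smul_comm, ← mul_assoc, h, smul_mul_assoc, smul_smul, mul_assoc,
      ← pow_succ, ← pow_succ']

namespace Sp
variable {K : Type} [Field K] {q s : Kˣ} {κ c : K} {B : Type} [Ring B] [Algebra K B]
  {R : RD q s κ c B} (Z : Sp R)

theorem exist (R : RD q s κ c B) (hκ : κ ≠ 0) (hind : ∀ a b : ℤ, q ^ a * s ^ b = 1 → a = 0 ∧ b = 0)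
    (m : ℕ) (hc : c = ((q ^ m : Kˣ) : K)) : Nonempty (Sp R) := by
  have hq : ∀ j : ℕ, j ≠ 0 → ((q ^ j : Kˣ) : K) ≠ 1 := by
    intro j hj h
    have := hind j 0 (by rw [zpow_natCast, zpow_zero, mul_one]; exact Units.ext h)
    omega
  have tm : IsUnit (R.t - ((q ^ m : Kˣ) : K) • (1 : B)) := hc ▸ R.isUnit_tc
  have up : ∀ j : ℕ, IsUnit (R.t - ((q ^ j : Kˣ) : K) • (1 : B)) →
      IsUnit (R.t - ((q ^ (j + 1) : Kˣ) : K) • (1 : B)) := by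
    intro j h
    have e : ((q ^ (j + 1) : Kˣ) : K) = (q : K) * ((q ^ j : Kˣ) : K) := by rw [pow_succ']; simp
    have := R.unit_up hκ (a := ((q ^ j : Kˣ) : K)) (by rw [← e]; exact hq _ (by omega)) h
    rwa [← e] at this
  have down : ∀ j : ℕ, IsUnit (R.t - ((q ^ (j + 1) : Kˣ) : K) • (1 : B)) →
      IsUnit (R.t - ((q ^ j : Kˣ) : K) • (1 : B)) := by
    intro j h
    have e : ((q ^ j : Kˣ) : K) = ((q⁻¹ : Kˣ) : K) * ((q ^ (j + 1) : Kˣ) : K) := by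
      rw [← Units.val_mul, pow_succ', inv_mul_cancel_left]
    have := R.unit_down hκ (hq _ (by omega)) h
    rwa [← e] at this
  have t0 : IsUnit (R.t - ((q ^ 0 : Kˣ) : K) • (1 : B)) := by
    revert tm; clear hc
    induction m with
    | zero => exact id
    | succ m ih => exact fun h => ih (down _ h)
  have tj : ∀ j : ℕ, IsUnit (R.t - ((q ^ j : Kˣ) : K) • (1 : B)) := by
    intro j
    induction j with
    | zero => exact t0
    | succ j ih => exact up _ ih
  have t1 : IsUnit (R.t - 1) := by simpa using t0
  obtain ⟨w, hw⟩ : IsUnit (R.u * R.d) := by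
    rw [R.ud, Algebra.smul_def]
    exact ((Units.mk0 κ hκ).isUnit.map (algebraMap K B)).mul (R.isUnit_x.mul t1)
  have wx : Commute ((w⁻¹ : Bˣ) : B) R.x := by
    apply Commute.units_inv_left
    rw [hw, R.ud, commute_iff_eq, smul_mul_assoc, mul_smul_comm, mul_assoc, sub_mul, R.xt.symm]
    simp [mul_sub]
  have wt : Commute ((w⁻¹ : Bˣ) : B) R.t := by
    apply Commute.units_inv_left
    rw [hw, R.ud, commute_iff_eq, smul_mul_assoc, mul_smul_comm, ← mul_assoc, ← R.xt, mul_assoc, mul_assoc]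
    simp [mul_sub, sub_mul]
  refine ⟨{ v := ((w⁻¹ : Bˣ) : B) * R.u, vd := ?_, vt := ?_, vx := ?_, uv := ?_, tj := tj, m := m,
            hc := hc, hκ := hκ, hind := hind }⟩
  · rw [mul_assoc, ← hw, Units.inv_mul]
  · rw [mul_assoc, R.ut, mul_smul_comm, ← mul_assoc, wt.eq, mul_assoc]
  · rw [mul_assoc, R.ux, mul_smul_comm, ← mul_assoc, wx.eq, mul_assoc]
  · rw [← smul_mul_assoc, ← R.ud, ← hw, ← mul_assoc, Units.mul_inv, one_mul]

/-- the idempotent -/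
def e : B := 1 - R.d * Z.v

theorem ed : Z.e * R.d = 0 := by rw [e, sub_mul, mul_assoc, Z.vd]; simp
theorem ve : Z.v * Z.e = 0 := by rw [e, mul_sub, ← mul_assoc, Z.vd]; simp
theorem ee : Z.e * Z.e = Z.e := by
  nth_rw 1 [e]
  rw [sub_mul, mul_assoc, Z.ve]; simp

theorem dv : R.d * Z.v = 1 - Z.e := by rw [e]; abel

theorem vdn (n : ℕ) : Z.v ^ n * R.d ^ n = 1 := by
  induction n with
  | zero => simp
  | succ n ih => rw [pow_succ, pow_succ', mul_assoc, ← mul_assoc Z.v, Z.vd, one_mul, ih]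

theorem vdn' (n k : ℕ) : Z.v ^ n * R.d ^ (n + k) = R.d ^ k := by
  rw [pow_add, ← mul_assoc, Z.vdn, one_mul]

theorem vdn'' (n k : ℕ) : Z.v ^ (k + n) * R.d ^ n = Z.v ^ k := by
  rw [pow_add, mul_assoc, Z.vdn, mul_one]

/-- `dⁿvⁿ` -/
def f (n : ℕ) : B := R.d ^ n * Z.v ^ n

theorem f_comm_t (n : ℕ) : Z.f n * R.t = R.t * Z.f n := by
  have h1 := comm_pow_aux' Z.vt n
  have h2 := comm_pow_aux R.td n
  rw [f, mul_assoc, h1, ← mul_assoc R.t, h2, mul_smul_comm, smul_mul_assoc, mul_assoc]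

theorem f_comm_x (n : ℕ) : Z.f n * R.x = R.x * Z.f n := by
  have h1 := comm_pow_aux' Z.vx n
  have h2 := comm_pow_aux R.xd n
  rw [f, mul_assoc, h1, ← mul_assoc R.x, h2, mul_smul_comm, smul_mul_assoc, mul_assoc]

theorem f_mul (a k : ℕ) : Z.f a * Z.f (a + k) = Z.f (a + k) := by
  rw [f, f, mul_assoc, ← mul_assoc (Z.v ^ a), Z.vdn', ← mul_assoc, ← pow_add]

theorem f_mul' (a k : ℕ) : Z.f (k + a) * Z.f a = Z.f (k + a) := by
  rw [f, f, mul_assoc, ← mul_assoc (Z.v ^ (k + a)), Z.vdn'', ← pow_add]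

theorem f_comm (a b : ℕ) : Z.f a * Z.f b = Z.f b * Z.f a := by
  rcases le_total a b with h | h
  · obtain ⟨k, rfl⟩ := Nat.exists_eq_add_of_le h
    rw [f_mul, add_comm, f_mul']
  · obtain ⟨k, rfl⟩ := Nat.exists_eq_add_of_le h
    rw [f_mul, add_comm, f_mul']

/-- `eₖ` -/
def ek (k : ℕ) : B := Z.f k - Z.f (k + 1)

theorem ek_eq (k : ℕ) : Z.ek k = R.d ^ k * Z.e * Z.v ^ k := by
  rw [ek, f, f, e, pow_succ, pow_succ']; noncomm_ring

theorem ek_comm_t (n : ℕ) : Z.ek n * R.t = R.t * Z.ek n := by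
  rw [ek, sub_mul, mul_sub, f_comm_t, f_comm_t]
theorem ek_comm_x (n : ℕ) : Z.ek n * R.x = R.x * Z.ek n := by
  rw [ek, sub_mul, mul_sub, f_comm_x, f_comm_x]
theorem ek_comm (a b : ℕ) : Z.ek a * Z.ek b = Z.ek b * Z.ek a := by
  simp only [ek, sub_mul, mul_sub, Z.f_comm a, Z.f_comm (a + 1)]; abel

theorem e_eq : Z.e = Z.ek 0 := by simp [ek_eq]
theorem xe : R.x * Z.e = Z.e * R.x := by rw [e_eq, ek_comm_x]

theorem te : R.t * Z.e = ((q⁻¹ : Kˣ) : K) • Z.e := by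
  have h : R.d * R.u * Z.e = 0 := by
    rw [Z.uv, mul_smul_comm, smul_mul_assoc, mul_assoc, mul_assoc, Z.ve]; simp
  rw [R.du, smul_mul_assoc] at h
  have h2 := (smul_eq_zero.1 h).resolve_left (mul_ne_zero Z.hκ s.ne_zero)
  have h3 := congrArg (fun z => R.xi * z) h2
  simp only [mul_zero, ← mul_assoc, R.xi_x, one_mul] at h3
  rw [sub_mul, one_mul, smul_mul_assoc, sub_eq_zero] at h3
  rw [← h3, smul_smul, ← Units.val_mul]
  simp [h3]

theorem unit_move {g : B} (hg : IsUnit g) {γ : K} (hγ : γ ≠ 0) : IsUnit (R.d * g * Z.v + γ • Z.e) := by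
  obtain ⟨w, rfl⟩ := hg
  have key : ∀ (a b : B) (α β : K), a * b = 1 → α * β = 1 →
      (R.d * a * Z.v + α • Z.e) * (R.d * b * Z.v + β • Z.e) = 1 := by
    intro a b α β h h'
    rw [mul_add, add_mul, add_mul]
    have e1 : R.d * a * Z.v * (R.d * b * Z.v) = R.d * Z.v := by
      calc _ = R.d * a * (Z.v * R.d) * b * Z.v := by noncomm_ring
        _ = R.d * (a * b) * Z.v := by rw [Z.vd]; noncomm_ring
        _ = _ := by rw [h, mul_one]
    have e2 : α • Z.e * (R.d * b * Z.v) = 0 := by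
      rw [smul_mul_assoc, ← mul_assoc, ← mul_assoc, Z.ed]; simp
    have e3 : R.d * a * Z.v * (β • Z.e) = 0 := by
      rw [mul_smul_comm, mul_assoc, Z.ve]; simp
    rw [e1, e2, e3, smul_mul_smul_comm, Z.ee, h', one_smul, Z.dv]; abel
  exact ⟨⟨_, R.d * ((w⁻¹ : Bˣ) : B) * Z.v + γ⁻¹ • Z.e, key _ _ _ _ (by simp) (mul_inv_cancel₀ hγ),
    key _ _ _ _ (by simp) (inv_mul_cancel₀ hγ)⟩, rfl⟩

/-- corrected elements -/
def hh (j : ℕ) : B :=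
  R.t - ((q⁻¹ ^ (j + 1) : Kˣ) : K) • (1 : B) + ((q⁻¹ ^ j : Kˣ) : K) • Z.ek j

theorem dtv : R.d * R.t * Z.v = (q : K) • R.t - Z.e := by
  rw [R.dt, smul_mul_assoc, mul_assoc, Z.dv, mul_sub, mul_one, Z.te, smul_sub, smul_smul,
    ← Units.val_mul]
  simp

theorem d_ek_v (j : ℕ) : R.d * Z.ek j * Z.v = Z.ek (j + 1) := by
  rw [ek_eq, ek_eq, pow_succ', pow_succ]; noncomm_ring

theorem unit_smul {a : B} (h : IsUnit ((q : K) • a)) : IsUnit a := by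
  have h2 : IsUnit (algebraMap K B ((q⁻¹ : Kˣ) : K)) := (q⁻¹).isUnit.map _
  have := h2.mul h
  rw [← Algebra.smul_def, smul_smul, ← Units.val_mul] at this
  simpa using this

theorem hh_unit (j : ℕ) : IsUnit (Z.hh j) := by
  induction j with
  | zero =>
    have h := Z.unit_move (Z.tj 0) q.ne_zero
    apply unit_smul (q := q)
    convert h using 1
    rw [hh, ← e_eq, mul_sub, sub_mul, Z.dtv, smul_add, smul_sub, smul_smul]
    simp [Z.dv]
  | succ j ih =>
    have hne : 1 - ((q⁻¹ ^ (j + 1) : Kˣ) : K) ≠ 0 := by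
      rw [sub_ne_zero]
      intro h
      have h1 : q⁻¹ ^ (j + 1) = 1 := Units.ext h.symm
      rw [inv_pow, inv_eq_one] at h1
      have := Z.hind (j + 1 : ℕ) 0 (by rw [zpow_natCast, h1]; simp)
      omega
    have h := Z.unit_move ih hne
    apply unit_smul (q := q)
    convert h using 1
    have e1 : (q : K) * ((q⁻¹ ^ (j + 1 + 1) : Kˣ) : K) = ((q⁻¹ ^ (j + 1) : Kˣ) : K) := by
      rw [← Units.val_mul, pow_succ' _ (j + 1), mul_inv_cancel_left]
    have e2 : (q : K) * ((q⁻¹ ^ (j + 1) : Kˣ) : K) = ((q⁻¹ ^ j : Kˣ) : K) := by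
      rw [← Units.val_mul, pow_succ' _ j, mul_inv_cancel_left]
    rw [hh, hh, mul_add, mul_sub, add_mul, sub_mul, Z.dtv, smul_add, smul_sub, smul_smul, smul_smul, e1, e2,
      mul_smul_comm, mul_smul_comm, smul_mul_assoc, smul_mul_assoc, Z.d_ek_v, mul_one, Z.dv]
    module

/-- the ideal -/
def I : Submodule K B where
  carrier := {b | ∃ n, Z.v ^ n * b = 0 ∧ b * R.d ^ n = 0}
  zero_mem' := ⟨0, by simp, by simp⟩
  add_mem' := by
    rintro a b ⟨n, h1, h2⟩ ⟨n', h1', h2'⟩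
    refine ⟨n + n', ?_, ?_⟩
    · have e1 : Z.v ^ (n' + n) * a = 0 := by rw [pow_add, mul_assoc, h1, mul_zero]
      have e2 : Z.v ^ (n + n') * b = 0 := by rw [pow_add, mul_assoc, h1', mul_zero]
      rw [mul_add, e2, add_comm n, e1, add_zero]
    · have e1 : a * R.d ^ (n + n') = 0 := by rw [pow_add, ← mul_assoc, h2, zero_mul]
      have e2 : b * R.d ^ (n' + n) = 0 := by rw [pow_add, ← mul_assoc, h2', zero_mul]
      rw [add_mul, e1, add_comm n, e2, add_zero]
  smul_mem' := by
    rintro k a ⟨n, h1, h2⟩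
    exact ⟨n, by rw [mul_smul_comm, h1, smul_zero], by rw [smul_mul_assoc, h2, smul_zero]⟩

theorem mem_I {b : B} : b ∈ Z.I ↔ ∃ n, Z.v ^ n * b = 0 ∧ b * R.d ^ n = 0 := Iff.rfl

theorem ek_I (k : ℕ) : Z.ek k ∈ Z.I := by
  refine ⟨k + 1, ?_, ?_⟩
  · rw [ek_eq, ← mul_assoc, ← mul_assoc, pow_succ', mul_assoc _ _ (R.d ^ k), Z.vdn, mul_one, Z.ve, zero_mul]
  · rw [ek_eq, pow_succ, mul_assoc, ← mul_assoc (Z.v ^ k), Z.vdn, one_mul, mul_assoc, Z.ed, mul_zero]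

/-- good elements -/
def Good (c : B) : Prop :=
  (∀ n, ∃ N z, c * R.d ^ N = R.d ^ n * z) ∧ (∀ n, ∃ N z, Z.v ^ N * c = z * Z.v ^ n)

theorem good_unit {a ai : B} (h1 : a * ai = 1) (h2 : ai * a = 1)
    (hd : ∀ n : ℕ, ∃ z zi : B, a * R.d ^ n = R.d ^ n * z ∧ z * zi = 1)
    (hv : ∀ n : ℕ, ∃ z zi : B, Z.v ^ n * a = z * Z.v ^ n ∧ zi * z = 1) : Z.Good ai := by
  refine ⟨fun n => ?_, fun n => ?_⟩
  · obtain ⟨z, zi, e, e'⟩ := hd n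
    refine ⟨n, zi, ?_⟩
    calc ai * R.d ^ n = ai * (R.d ^ n * z) * zi := by rw [mul_assoc, mul_assoc, e', mul_one]
      _ = R.d ^ n * zi := by rw [← e, ← mul_assoc, h2, one_mul]
  · obtain ⟨z, zi, e, e'⟩ := hv n
    refine ⟨n, zi, ?_⟩
    calc Z.v ^ n * ai = zi * (z * Z.v ^ n) * ai := by rw [← mul_assoc, e', one_mul]
      _ = zi * Z.v ^ n := by rw [← e, mul_assoc, mul_assoc, h1, mul_one]

theorem good_add {a b : B} (ha : Z.Good a) (hb : Z.Good b) : Z.Good (a + b) := by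
  refine ⟨fun n => ?_, fun n => ?_⟩
  · obtain ⟨N, z, e⟩ := ha.1 n
    obtain ⟨N', z', e'⟩ := hb.1 n
    refine ⟨N + N', z * R.d ^ N' + z' * R.d ^ N, ?_⟩
    rw [add_mul, pow_add, ← mul_assoc, e, ← pow_add, add_comm N, pow_add, ← mul_assoc, e']
    noncomm_ring
  · obtain ⟨N, z, e⟩ := ha.2 n
    obtain ⟨N', z', e'⟩ := hb.2 n
    refine ⟨N + N', Z.v ^ N' * z + Z.v ^ N * z', ?_⟩
    rw [mul_add, pow_add, mul_assoc _ _ b, e', ← pow_add, add_comm N, pow_add, mul_assoc, e]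
    noncomm_ring

theorem good_mul {a b : B} (ha : Z.Good a) (hb : Z.Good b) : Z.Good (a * b) := by
  refine ⟨fun n => ?_, fun n => ?_⟩
  · obtain ⟨N, z, e⟩ := ha.1 n
    obtain ⟨N', z', e'⟩ := hb.1 N
    exact ⟨N', z * z', by rw [mul_assoc, e', ← mul_assoc, e, mul_assoc]⟩
  · obtain ⟨N, z, e⟩ := hb.2 n
    obtain ⟨N', z', e'⟩ := ha.2 N
    exact ⟨N', z' * z, by rw [← mul_assoc, e', mul_assoc, e, mul_assoc]⟩

theorem good_comm {a : B} {k k' : K} (h : a * R.d = k • (R.d * a)) (h' : Z.v * a = k' • (a * Z.v)) :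
    Z.Good a := by
  refine ⟨fun n => ⟨n, k ^ n • a, ?_⟩, fun n => ⟨n, k' ^ n • a, ?_⟩⟩
  · rw [comm_pow_aux h, mul_smul_comm]
  · rw [comm_pow_aux' h', smul_mul_assoc]

theorem good_d : Z.Good R.d := by
  refine ⟨fun n => ⟨n, R.d, by rw [← pow_succ', ← pow_succ]⟩, fun n => ⟨n + 1, 1, ?_⟩⟩
  rw [pow_succ, mul_assoc, Z.vd, mul_one, one_mul]
theorem good_v : Z.Good Z.v := by
  refine ⟨fun n => ⟨n + 1, 1, ?_⟩, fun n => ⟨n, Z.v, by rw [← pow_succ', ← pow_succ]⟩⟩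
  rw [pow_succ', ← mul_assoc, Z.vd, mul_one, one_mul]
theorem good_x : Z.Good R.x := Z.good_comm R.xd Z.vx
theorem good_t : Z.Good R.t := Z.good_comm R.td Z.vt
theorem good_k (k : K) : Z.Good (algebraMap K B k) :=
  Z.good_comm (k := 1) (k' := 1) (by rw [one_smul, Algebra.commutes]) (by rw [one_smul, Algebra.commutes])
theorem good_u : Z.Good R.u := by
  rw [Z.uv, Algebra.smul_def]
  refine Z.good_mul (Z.good_k _) (Z.good_mul (Z.good_mul Z.good_x ?_) Z.good_v)
  rw [sub_eq_add_neg]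
  have := Z.good_add Z.good_t (Z.good_k (-1))
  simpa using this

theorem xi_d : R.xi * R.d = (s : K) • (R.d * R.xi) := by
  calc R.xi * R.d = R.xi * (R.d * R.x) * R.xi := by rw [mul_assoc, mul_assoc, R.x_xi, mul_one]
    _ = _ := by
      rw [R.dx, mul_smul_comm, ← mul_assoc, R.xi_x, one_mul, smul_mul_assoc]
theorem v_xi : Z.v * R.xi = (s : K) • (R.xi * Z.v) := by
  have h : R.x * Z.v = (s : K) • (Z.v * R.x) := by rw [Z.vx, smul_smul, ← Units.val_mul]; simp
  calc Z.v * R.xi = R.xi * (R.x * Z.v) * R.xi := by rw [← mul_assoc, R.xi_x, one_mul]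
    _ = _ := by
      rw [h, mul_smul_comm, smul_mul_assoc, mul_assoc, mul_assoc, R.x_xi, mul_one]
theorem good_xi : Z.Good R.xi := Z.good_comm xi_d Z.v_xi

theorem good_ti : Z.Good R.ti := by
  have key : ∀ n : ℕ, ∃ z zi : B, z = ((q⁻¹ ^ n : Kˣ) : K) • R.t - c • (1 : B) ∧ z * zi = 1 ∧ zi * z = 1 := by
    intro n
    have h1 : IsUnit (((q⁻¹ ^ n : Kˣ) : K) • R.t - c • (1 : B)) := by
      have h2 : IsUnit (algebraMap K B ((q⁻¹ ^ n : Kˣ) : K)) := (q⁻¹ ^ n).isUnit.map _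
      have := h2.mul (Z.tj (n + Z.m))
      rw [← Algebra.smul_def, smul_sub, smul_smul, ← Units.val_mul, pow_add, ← mul_assoc, ← mul_pow] at this
      have hc' : c = (((q⁻¹ * q) ^ n * q ^ Z.m : Kˣ) : K) := Z.hc.trans (by simp)
      rwa [← hc'] at this
    obtain ⟨w, hw⟩ := h1
    exact ⟨w, ((w⁻¹ : Bˣ) : B), hw, by simp, by simp⟩
  refine Z.good_unit R.t_ti R.ti_t (fun n => ?_) (fun n => ?_)
  · obtain ⟨z, zi, rfl, h, -⟩ := key n
    refine ⟨_, zi, ?_, h⟩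
    rw [sub_mul, mul_sub, comm_pow_aux R.td]
    simp
  · obtain ⟨z, zi, rfl, -, h⟩ := key n
    refine ⟨_, zi, ?_, h⟩
    rw [sub_mul, mul_sub, comm_pow_aux' Z.vt]
    simp

theorem good (hgen : R.Gen) (b : B) : Z.Good b := by
  have : b ∈ Algebra.adjoin K {R.d, R.u, R.x, R.xi, R.t, R.ti} := by
    rw [show Algebra.adjoin K _ = ⊤ from hgen]; trivial
  refine Algebra.adjoin_induction (p := fun b _ => Z.Good b) ?_ Z.good_k
    (fun a b _ _ => Z.good_add) (fun a b _ _ => Z.good_mul) this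
  rintro y (rfl | rfl | rfl | rfl | rfl | rfl)
  exacts [Z.good_d, Z.good_u, Z.good_x, Z.good_xi, Z.good_t, Z.good_ti]

theorem I_max {b : B} {n N : ℕ} (h : n ≤ N) (h1 : Z.v ^ n * b = 0) : Z.v ^ N * b = 0 := by
  obtain ⟨k, rfl⟩ := Nat.exists_eq_add_of_le' h
  rw [pow_add, mul_assoc, h1, mul_zero]
theorem I_max' {b : B} {n N : ℕ} (h : n ≤ N) (h1 : b * R.d ^ n = 0) : b * R.d ^ N = 0 := by
  obtain ⟨k, rfl⟩ := Nat.exists_eq_add_of_le h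
  rw [pow_add, ← mul_assoc, h1, zero_mul]

theorem I_l (hgen : R.Gen) (b : B) (i : B) (hi : i ∈ Z.I) : b * i ∈ Z.I := by
  obtain ⟨n, h1, h2⟩ := hi
  obtain ⟨N, z, e⟩ := (Z.good hgen b).2 n
  refine ⟨N + n, Z.I_max (n := N) (by omega) ?_, I_max' (n := n) (by omega) ?_⟩
  · rw [← mul_assoc, e, mul_assoc, h1, mul_zero]
  · rw [mul_assoc, h2, mul_zero]

theorem I_r (hgen : R.Gen) (b : B) (i : B) (hi : i ∈ Z.I) : i * b ∈ Z.I := by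
  obtain ⟨n, h1, h2⟩ := hi
  obtain ⟨N, z, e⟩ := (Z.good hgen b).1 n
  refine ⟨N + n, Z.I_max (n := n) (by omega) ?_, I_max' (n := N) (by omega) ?_⟩
  · rw [← mul_assoc, h1, zero_mul]
  · rw [mul_assoc, e, ← mul_assoc, h2, zero_mul]

theorem I_dom {C : Type} [Ring C] [Algebra K C] [NoZeroDivisors C] [Nontrivial C] (ψ : B →ₐ[K] C)
    {i : B} (hi : i ∈ Z.I) : ψ i = 0 := by
  obtain ⟨n, h1, -⟩ := hi
  have := congrArg ψ h1
  rw [map_mul, map_zero, map_pow] at this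
  refine (mul_eq_zero.1 this).resolve_left (pow_ne_zero _ ?_)
  intro h0
  have := congrArg ψ Z.vd
  rw [map_mul, h0, zero_mul, map_one] at this
  exact zero_ne_one this

end Sp

open TW VV

namespace Sp
variable {K : Type} [Field K] {q s : Kˣ} {κ c : K} {B : Type} [Ring B] [Algebra K B]
  {R : RD q s κ c B} (Z : Sp R)

/-- denominators -/
def gg (k : ℤ) : B :=
  if 0 ≤ Z.m + k then R.t - ((q ^ (Z.m + k).toNat : Kˣ) : K) • (1 : B) else Z.hh (-(Z.m + k) - 1).toNat

theorem gg_cases (k : ℤ) : (∃ a : K, Z.gg k = R.t - a • (1 : B)) ∨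
    ∃ (a a' : K) (j : ℕ), Z.gg k = R.t - a • (1 : B) + a' • Z.ek j := by
  unfold gg hh
  split
  · exact Or.inl ⟨_, rfl⟩
  · exact Or.inr ⟨_, _, _, rfl⟩

theorem gg_t (k : ℤ) : Z.gg k * R.t = R.t * Z.gg k := by
  rcases Z.gg_cases k with ⟨a, h⟩ | ⟨a, a', j, h⟩ <;> rw [h] <;>
    simp [sub_mul, mul_sub, add_mul, mul_add, Z.ek_comm_t]
theorem gg_x (k : ℤ) : Z.gg k * R.x = R.x * Z.gg k := by
  rcases Z.gg_cases k with ⟨a, h⟩ | ⟨a, a', j, h⟩ <;> rw [h] <;>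
    simp [sub_mul, mul_sub, add_mul, mul_add, Z.ek_comm_x, R.xt]
theorem gg_ek (k : ℤ) (n : ℕ) : Z.gg k * Z.ek n = Z.ek n * Z.gg k := by
  rcases Z.gg_cases k with ⟨a, h⟩ | ⟨a, a', j, h⟩ <;> rw [h] <;>
    simp [sub_mul, mul_sub, add_mul, mul_add, Z.ek_comm_t, Z.ek_comm n]
theorem gg_comm (k l : ℤ) : Z.gg k * Z.gg l = Z.gg l * Z.gg k := by
  rcases Z.gg_cases k with ⟨a, h⟩ | ⟨a, a', j, h⟩ <;> rw [h] <;>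
    simp [sub_mul, mul_sub, add_mul, mul_add, Z.gg_ek, Z.gg_t]
theorem gg_unit (k : ℤ) : IsUnit (Z.gg k) := by
  unfold gg
  split
  · exact Z.tj _
  · exact Z.hh_unit _
theorem gg_zero : Z.gg 0 = R.t - c • (1 : B) := by
  unfold gg
  rw [if_pos (by omega)]
  have : ((Z.m : ℤ) + 0).toNat = Z.m := by omega
  rw [this, ← Z.hc]
theorem gg_I (k : ℤ) : Z.gg k - (R.t - (c * ((q ^ k : Kˣ) : K)) • (1 : B)) ∈ Z.I := by
  have h1 : c * ((q ^ k : Kˣ) : K) = ((q ^ (Z.m + k) : Kˣ) : K) := by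
    rw [zpow_add, Units.val_mul, zpow_natCast, ← Z.hc]
  rw [h1]
  unfold gg
  split
  · rename_i h
    obtain ⟨n, hn⟩ := Int.eq_ofNat_of_zero_le h
    rw [hn]; simp
  · obtain ⟨n, hn⟩ : ∃ n : ℕ, (Z.m : ℤ) + k = -(n + 1 : ℕ) := ⟨(-(Z.m + k) - 1).toNat, by omega⟩
    have h2 : (-(Z.m + k) - 1).toNat = n := by omega
    rw [h2, hn, hh, zpow_neg, zpow_natCast, ← inv_pow, sub_add_eq_add_sub, sub_sub_sub_cancel_right,
      add_sub_cancel_left]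
    exact Z.I.smul_mem _ (Z.ek_I _)

theorem ρ_v (ρ : B →ₐ[K] Module.End (RatFunc K) (VV K)) (hd : ∀ k, ρ R.d (VV.e k) = VV.e (k + 1))
    (hu : ρ R.u (VV.e 0) = 0) (w : VV K) (k : ℕ) : ρ Z.v w k = w (k + 1) := by
  have h1 : ∀ k, ρ Z.v (VV.e (k + 1)) = VV.e k := by
    intro k
    rw [← hd, ← Module.End.mul_apply, ← map_mul, Z.vd, map_one, Module.End.one_apply]
  have h0 : ρ Z.v (VV.e 0) = 0 := by
    have hU : IsUnit (κ • (R.x * (R.t - 1))) := by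
      rw [Algebra.smul_def]
      have := Z.tj 0
      exact ((Units.mk0 κ Z.hκ).isUnit.map (algebraMap K B)).mul (R.isUnit_x.mul (by simpa using this))
    have := ((Module.End.isUnit_iff _).1 (hU.map ρ)).1
    apply this
    rw [map_zero, ← hu, ← Module.End.mul_apply, ← map_mul, smul_mul_assoc, ← Z.uv]
  have : (Finsupp.lapply k : VV K →ₗ[RatFunc K] _) ∘ₗ ρ Z.v = (Finsupp.lapply (k + 1) : VV K →ₗ[RatFunc K] _) := by
    ext j : 2
    simp only [LinearMap.comp_apply, Finsupp.lsingle_apply]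
    change Finsupp.lapply k (ρ Z.v (VV.e j)) = Finsupp.lapply (k + 1) (VV.e j)
    rcases j with _ | j
    · simp [h0, VV.e]
    · simp [h1, VV.e, Finsupp.single_apply]
  exact LinearMap.congr_fun this w

theorem ρ_vn (ρ : B →ₐ[K] Module.End (RatFunc K) (VV K)) (hd : ∀ k, ρ R.d (VV.e k) = VV.e (k + 1))
    (hu : ρ R.u (VV.e 0) = 0) (n : ℕ) (w : VV K) (k : ℕ) : ρ (Z.v ^ n) w k = w (k + n) := by
  induction n generalizing k w with
  | zero => simp
  | succ n ih =>
    rw [pow_succ, map_mul, Module.End.mul_apply, ih, Z.ρ_v ρ hd hu, add_assoc]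

theorem ρ_dn (ρ : B →ₐ[K] Module.End (RatFunc K) (VV K)) (hd : ∀ k, ρ R.d (VV.e k) = VV.e (k + 1))
    (n : ℕ) (k : ℕ) : ρ (R.d ^ n) (VV.e k) = VV.e (k + n) := by
  induction n generalizing k with
  | zero => simp
  | succ n ih =>
    rw [pow_succ, map_mul, Module.End.mul_apply, hd, ih]; congr 1; omega

theorem frame (hgen : R.Gen) (huniv : R.Univ) (hm : 1 ≤ Z.m) : ∃ F : Frame R, F.I = Z.I := by
  have hc : ∀ k : ℤ, k ≠ Z.m → c ≠ ((q ^ k : Kˣ) : K) := by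
    intro k hk h
    rw [Z.hc] at h
    have h1 : q ^ (Z.m : ℤ) = q ^ k := by rw [zpow_natCast]; exact Units.ext h
    have := Z.hind (k - Z.m) 0 (by rw [zpow_sub, h1]; simp)
    omega
  have hc0 : c ≠ 0 := by intro h; exact (q ^ Z.m).ne_zero (Z.hc.symm.trans h)
  have hcr : ∀ k : ℕ, c ≠ ((q : K)⁻¹) ^ (k + 1) := RD.hcr_of fun k hk => hc k (by omega)
  obtain ⟨ι, ιd, ιu, ιx, ιt⟩ := huniv _ (RD.tw q s κ c hc0)
  obtain ⟨ρ, ρd, ρu, ρx, ρt⟩ := huniv _ (RD.rep q s κ c hcr)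
  have hd : ∀ k, ρ R.d (VV.e k) = VV.e (k + 1) := fun k => by rw [ρd]; simp only [RD.rep, lmk_e]
  have hu : ρ R.u (VV.e 0) = 0 := by rw [ρu]; simp only [RD.rep, lmk_e]; rfl
  refine ⟨{ gen := hgen, hind := Z.hind, hκ := Z.hκ, hc0 := hc0, hc1 := by simpa using hc 0 (by omega), hcr := hcr,
            ι := ι, ιd := ιd, ιu := ιu, ιx := ιx, ιt := ιt, ρ := ρ, ρd := ρd, ρu := ρu, ρx := ρx,
            ρt := ρt, I := Z.I, hl := Z.I_l hgen, hr := Z.I_r hgen, ιI := fun i hi => Z.I_dom ι hi, ρI := ?_,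
            g := Z.gg, gunit := Z.gg_unit, gcomm := Z.gg_comm, gx := Z.gg_x, gt := Z.gg_t, g0 := Z.gg_zero,
            gI := Z.gg_I }, rfl⟩
  rintro i ⟨n, h1, h2⟩
  refine ⟨n, fun w => ?_, fun k hk => ?_⟩
  · rw [mem_low]
    intro k hk
    obtain ⟨k, rfl⟩ := Nat.exists_eq_add_of_le' hk
    rw [← Z.ρ_vn ρ hd hu, ← Module.End.mul_apply, ← map_mul, h1]; simp
  · obtain ⟨k, rfl⟩ := Nat.exists_eq_add_of_le' hk
    rw [← ρ_dn ρ hd, ← Module.End.mul_apply, ← map_mul, h2]; simp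

end Sp

open TW VV

theorem laurent_indep {K L : Type} [Field K] [Field L] [Algebra K L] {ω : L} (h : Transcendental K ω)
    (l : ℤ →₀ K) (hl : (l.sum fun p k => algebraMap K L k * ω ^ p) = 0) : l = 0 := by
  have hω : ω ≠ 0 := by
    rintro rfl
    exact h (isAlgebraic_zero)
  obtain ⟨N, hN⟩ : ∃ N : ℕ, ∀ p ∈ l.support, 0 ≤ p + N := by
    refine ⟨l.support.sup Int.natAbs, fun p hp => ?_⟩
    have := Finset.le_sup (f := Int.natAbs) hp
    omega
  let P : Polynomial K := ∑ p ∈ l.support, Polynomial.monomial (p + N).toNat (l p)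
  have hP : Polynomial.aeval ω P = 0 := by
    rw [map_sum]
    have : ∀ p ∈ l.support, Polynomial.aeval ω (Polynomial.monomial (p + N).toNat (l p)) =
        ω ^ N * (algebraMap K L (l p) * ω ^ p) := by
      intro p hp
      rw [Polynomial.aeval_monomial, ← zpow_natCast, Int.toNat_of_nonneg (hN p hp), zpow_add₀ hω,
        zpow_natCast]
      ring
    rw [Finset.sum_congr rfl this, ← Finset.mul_sum]
    unfold Finsupp.sum at hl
    rw [hl, mul_zero]
  have hP0 : P = 0 := (transcendental_iff.1 h) P hP
  ext p
  by_contra hp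
  have hp' : p ∈ l.support := Finsupp.mem_support_iff.2 hp
  have := congrArg (fun P => Polynomial.coeff P (p + N).toNat) hP0
  simp only [P, Polynomial.finset_sum_coeff, Polynomial.coeff_zero] at this
  rw [Finset.sum_eq_single p] at this
  · simp at this; exact hp this
  · intro p' h' hne
    rw [Polynomial.coeff_monomial, if_neg]
    have := hN p hp'; have := hN p' h'; omega
  · intro h; exact absurd hp' h

namespace Sp
variable {K : Type} [Field K] {q s : Kˣ} {κ c : K} {B : Type} [Ring B] [Algebra K B]
  {R : RD q s κ c B} (Z : Sp R)

variable (R) in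
/-- `x` as a unit -/
def Xu : Bˣ := ⟨R.x, R.xi, R.x_xi, R.xi_x⟩

/-- basis of the minimal left ideal -/
def be (a : ℕ × ℤ) : B := R.d ^ a.1 * Z.e * ((Xu R ^ a.2 : Bˣ) : B)

/-- the left ideal -/
def L : Submodule K B := Submodule.span K (Set.range Z.be)

theorem L_of {b : B} (h : ∀ a, b * Z.be a ∈ Z.L) : ∀ l ∈ Z.L, b * l ∈ Z.L := by
  intro l hl
  induction hl using Submodule.span_induction with
  | mem y hy => obtain ⟨a, rfl⟩ := hy; exact h a
  | zero => simp
  | add y z _ _ h h' => rw [mul_add]; exact Z.L.add_mem h h'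
  | smul k y _ h => rw [mul_smul_comm]; exact Z.L.smul_mem _ h

theorem be_mem (a) : Z.be a ∈ Z.L := Submodule.subset_span ⟨a, rfl⟩

theorem t_be (i : ℕ) (p : ℤ) : R.t * Z.be (i, p) = (((q⁻¹ ^ (i + 1) : Kˣ)) : K) • Z.be (i, p) := by
  unfold be
  rw [← mul_assoc, ← mul_assoc, comm_pow_aux R.td, smul_mul_assoc, mul_assoc _ R.t, Z.te, mul_smul_comm, smul_smul,
    smul_mul_assoc]
  congr 1
  rw [pow_succ]; push_cast; ring

theorem x_be (i : ℕ) (p : ℤ) : R.x * Z.be (i, p) = (((s⁻¹ : Kˣ)) : K) ^ i • Z.be (i, p + 1) := by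
  unfold be
  have h : ((Xu R ^ (p + 1) : Bˣ) : B) = R.x * ((Xu R ^ p : Bˣ) : B) := by
    rw [zpow_add_one, ((Commute.refl (Xu R)).zpow_left p).eq]; rfl
  rw [← mul_assoc, ← mul_assoc, comm_pow_aux R.xd, smul_mul_assoc, mul_assoc _ R.x, Z.xe, h]
  simp only [mul_assoc, smul_mul_assoc]

theorem x_L : ∀ l ∈ Z.L, R.x * l ∈ Z.L :=
  Z.L_of fun ⟨i, p⟩ => by rw [x_be]; exact Z.L.smul_mem _ (Z.be_mem _)
theorem t_L : ∀ l ∈ Z.L, R.t * l ∈ Z.L :=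
  Z.L_of fun ⟨i, p⟩ => by rw [t_be]; exact Z.L.smul_mem _ (Z.be_mem _)
theorem v_L : ∀ l ∈ Z.L, Z.v * l ∈ Z.L :=
  Z.L_of fun ⟨i, p⟩ => by
    rcases i with _ | i
    · unfold be; rw [pow_zero, one_mul, ← mul_assoc, Z.ve, zero_mul]; exact Z.L.zero_mem
    · have : Z.v * Z.be (i + 1, p) = Z.be (i, p) := by
        unfold be; rw [pow_succ', ← mul_assoc, ← mul_assoc, ← mul_assoc, Z.vd, one_mul]
      rw [this]; exact Z.be_mem _
theorem d_L : ∀ l ∈ Z.L, R.d * l ∈ Z.L :=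
  Z.L_of fun ⟨i, p⟩ => by
    have : R.d * Z.be (i, p) = Z.be (i + 1, p) := by
      unfold be; rw [pow_succ', ← mul_assoc, ← mul_assoc]
    rw [this]; exact Z.be_mem _
theorem xi_L : ∀ l ∈ Z.L, R.xi * l ∈ Z.L :=
  Z.L_of fun ⟨i, p⟩ => by
    have h := Z.x_be i (p - 1)
    rw [sub_add_cancel] at h
    have h1 : R.xi * Z.be (i, p) = (s : K) ^ i • Z.be (i, p - 1) := by
      have : (s : K) ^ i • (R.xi * (R.x * Z.be (i, p - 1))) = R.xi * Z.be (i, p) := by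
        rw [h, mul_smul_comm, smul_smul, ← mul_pow]; simp
      rw [← this, ← mul_assoc, R.xi_x, one_mul]
    rw [h1]; exact Z.L.smul_mem _ (Z.be_mem _)
theorem ti_L : ∀ l ∈ Z.L, R.ti * l ∈ Z.L :=
  Z.L_of fun ⟨i, p⟩ => by
    have h := Z.t_be i p
    have hne : (((q⁻¹ ^ (i + 1) : Kˣ)) : K) - c ≠ 0 := by
      intro h
      have h1 := (sub_eq_zero.1 h).trans Z.hc
      have h2 : q⁻¹ ^ (i + 1) = q ^ Z.m := Units.ext h1
      have := Z.hind (Z.m + (i + 1 : ℕ)) 0 (by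
        rw [zpow_add, zpow_natCast, zpow_natCast, ← h2, inv_pow]; simp)
      omega
    have h1 : (((q⁻¹ ^ (i + 1) : Kˣ) : K) - c) • (R.ti * Z.be (i, p)) = Z.be (i, p) := by
      rw [← mul_smul_comm, sub_smul, ← h]
      have : R.t * Z.be (i, p) - c • Z.be (i, p) = (R.t - c • (1 : B)) * Z.be (i, p) := by
        rw [sub_mul]; simp
      rw [this, ← mul_assoc, R.ti_t, one_mul]
    rw [← inv_smul_smul₀ hne (R.ti * Z.be (i, p)), h1]
    exact Z.L.smul_mem _ (Z.be_mem _)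
theorem u_L : ∀ l ∈ Z.L, R.u * l ∈ Z.L := by
  intro l hl
  have h := Z.v_L l hl
  rw [Z.uv, smul_mul_assoc, mul_assoc, mul_assoc, sub_mul, one_mul]
  exact Z.L.smul_mem _ (Z.x_L _ (Z.L.sub_mem (Z.t_L _ h) h))

theorem all_L (hgen : R.Gen) (b : B) : ∀ l ∈ Z.L, b * l ∈ Z.L := by
  have : b ∈ Algebra.adjoin K {R.d, R.u, R.x, R.xi, R.t, R.ti} := by
    rw [hgen]; trivial
  induction this using Algebra.adjoin_induction with
  | mem y hy =>
    simp only [Set.mem_insert_iff, Set.mem_singleton_iff] at hy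
    rcases hy with rfl | rfl | rfl | rfl | rfl | rfl
    exacts [Z.d_L, Z.u_L, Z.x_L, Z.xi_L, Z.t_L, Z.ti_L]
  | algebraMap k => intro l hl; rw [← Algebra.smul_def]; exact Z.L.smul_mem _ hl
  | add a b _ _ h h' => intro l hl; rw [add_mul]; exact Z.L.add_mem (h l hl) (h' l hl)
  | mul a b _ _ h h' => intro l hl; rw [mul_assoc]; exact h _ (h' l hl)

theorem corner (hgen : R.Gen) (b : B) : ∃ l : ℤ →₀ K,
    Z.e * b * Z.e = l.sum fun p k => k • (Z.e * ((Xu R ^ p : Bˣ) : B)) := by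
  have h0 : b * Z.e ∈ Z.L := Z.all_L hgen b _ (by
    have := Z.be_mem (0, 0); simpa [be] using this)
  suffices h : ∀ y ∈ Z.L, Z.e * y ∈ Submodule.span K (Set.range fun p : ℤ => Z.e * ((Xu R ^ p : Bˣ) : B)) by
    have h1 := h _ h0
    rw [Finsupp.mem_span_range_iff_exists_finsupp] at h1
    obtain ⟨l, hl⟩ := h1
    exact ⟨l, by rw [hl, mul_assoc]⟩
  intro y hy
  induction hy using Submodule.span_induction with
  | mem y hy =>
    obtain ⟨⟨i, p⟩, rfl⟩ := hy
    rcases i with _ | i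
    · refine Submodule.subset_span ⟨p, ?_⟩
      simp only [be, pow_zero, one_mul, ← mul_assoc, Z.ee]
    · have : Z.e * Z.be (i + 1, p) = 0 := by
        unfold be; simp only [pow_succ', ← mul_assoc, Z.ed, zero_mul]
      rw [this]; exact Submodule.zero_mem _
  | zero => simp
  | add y z _ _ h h' => rw [mul_add]; exact Submodule.add_mem _ h h'
  | smul k y _ h => rw [mul_smul_comm]; exact Submodule.smul_mem _ _ h

theorem descend {v d E : B} (hE : E = 1 - d * v) {T : Submodule K B} (hd : ∀ y ∈ T, d * y ∈ T)
    {n : ℕ} {y : B} (hn : v ^ n * y = 0) (h : ∀ k, E * (v ^ k * y) ∈ T) : y ∈ T := by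
  suffices ∀ k, k ≤ n → v ^ (n - k) * y ∈ T by simpa using this n le_rfl
  intro k
  induction k with
  | zero => intro _; rw [Nat.sub_zero, hn]; exact T.zero_mem
  | succ k ih =>
    intro hk
    have h1 := T.add_mem (h (n - (k + 1))) (hd _ (ih (by omega)))
    have h2 : n - k = (n - (k + 1)) + 1 := by omega
    rw [h2, pow_succ', mul_assoc v, ← mul_assoc d, ← add_mul, hE, sub_add_cancel, one_mul] at h1
    exact h1

theorem descend' {v d E : B} (hE : E = 1 - d * v) {T : Submodule K B} (hd : ∀ y ∈ T, y * v ∈ T)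
    {n : ℕ} {y : B} (hn : y * d ^ n = 0) (h : ∀ k, y * d ^ k * E ∈ T) : y ∈ T := by
  suffices ∀ k, k ≤ n → y * d ^ (n - k) ∈ T by simpa using this n le_rfl
  intro k
  induction k with
  | zero => intro _; rw [Nat.sub_zero, hn]; exact T.zero_mem
  | succ k ih =>
    intro hk
    have h1 := T.add_mem (h (n - (k + 1))) (hd _ (ih (by omega)))
    have h2 : n - k = (n - (k + 1)) + 1 := by omega
    rw [h2, pow_succ, ← mul_assoc, mul_assoc _ d, ← mul_add, hE, sub_add_cancel, mul_one] at h1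
    exact h1

theorem faith (hgen : R.Gen) (σ : B →ₐ[K] Module.End (RatFunc K) (VV K)) {w : VV K} (hw : w ≠ 0)
    (hv : σ Z.v w = 0) {ω : RatFunc K} (hω : Transcendental K ω) (hx : σ R.x w = ω • w)
    {b : B} (hb : b ∈ Z.I) (h0 : σ b = 0) : b = 0 := by
  have hω0 : ω ≠ 0 := by rintro rfl; exact hω isAlgebraic_zero
  have he : σ Z.e w = w := by simp [e, hv]
  have hX : ∀ p : ℤ, σ ((Xu R ^ p : Bˣ) : B) w = ω ^ p • w := by
    have h1 : ∀ p : ℤ, σ ((Xu R ^ (p + 1) : Bˣ) : B) w = ω • σ ((Xu R ^ p : Bˣ) : B) w := by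
      intro p
      rw [zpow_add_one, Units.val_mul, map_mul, Module.End.mul_apply, show ((Xu R : Bˣ) : B) = R.x from rfl,
        hx, map_smul]
    intro p
    induction p with
    | zero => simp
    | succ n ih => rw [h1, ih, smul_smul, zpow_add_one₀ hω0, mul_comm]
    | pred n ih =>
      have := h1 (-n - 1)
      rw [sub_add_cancel, ih] at this
      rw [← inv_smul_smul₀ hω0 (σ ((Xu R ^ (-n - 1 : ℤ) : Bˣ) : B) w), ← this, smul_smul, zpow_sub_one₀ hω0,
        mul_comm]
  have key : ∀ y : B, σ y = 0 → Z.e * y * Z.e = 0 := by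
    intro y hy
    obtain ⟨l, hl⟩ := Z.corner hgen y
    have h1 := congrArg (fun b => σ b w) hl
    simp only [map_mul, hy, mul_zero, zero_mul, LinearMap.zero_apply] at h1
    unfold Finsupp.sum at h1
    rw [map_sum, LinearMap.sum_apply] at h1
    have h2 : (l.sum fun p k => algebraMap K (RatFunc K) k * ω ^ p) • w = 0 := by
      rw [h1]; unfold Finsupp.sum; rw [Finset.sum_smul]
      refine Finset.sum_congr rfl fun p _ => ?_
      rw [map_smul, LinearMap.smul_apply, map_mul, Module.End.mul_apply, hX, map_smul, he, ksmul, smul_smul]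
    have := laurent_indep hω l ((smul_eq_zero.1 h2).resolve_right hw)
    rw [hl, this, Finsupp.sum_zero_index]
  obtain ⟨n, h1, h2⟩ := hb
  have : b ∈ (⊥ : Submodule K B) := by
    refine descend' (n := n) (v := Z.v) (d := R.d) (E := Z.e) rfl (by simp) h2 fun j => ?_
    refine descend (n := n) (v := Z.v) (d := R.d) (E := Z.e) rfl (by simp) ?_ fun i => ?_
    · rw [mul_assoc, ← mul_assoc, h1, zero_mul]
    · have := key (Z.v ^ i * (b * R.d ^ j)) (by simp [h0])
      rw [Submodule.mem_bot, ← this]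
      simp only [mul_assoc]
  simpa using this

end Sp

open TW VV

theorem det_split {F V W : Type} [Field F] [AddCommGroup V] [Module F V] [AddCommGroup W] [Module F W]
    [FiniteDimensional F V] [FiniteDimensional F W] (hfr : Module.finrank F W = Module.finrank F V + 1)
    (j : V →ₗ[F] W) (z : W) (hinj : ∀ a (b : F), j a + b • z = 0 → a = 0 ∧ b = 0)
    (f : V →ₗ[F] V) (g : W →ₗ[F] W) {α γ : F} (h1 : ∀ a, g (j a) = α • j (f a)) (h2 : g z = γ • z) :
    LinearMap.det g = α ^ Module.finrank F V * LinearMap.det f * γ := by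
  let φ : (V × F) →ₗ[F] W := j.coprod (LinearMap.toSpanSingleton F W z)
  have hφ : Function.Injective φ := by
    rw [injective_iff_map_eq_zero]
    rintro ⟨a, b⟩ h
    simp only [φ, LinearMap.coprod_apply, LinearMap.toSpanSingleton_apply] at h
    obtain ⟨rfl, rfl⟩ := hinj a b h
    rfl
  let Φ : (V × F) ≃ₗ[F] W := LinearEquiv.ofInjectiveOfFinrankEq φ hφ (by simp [hfr])
  have hΦ : ∀ a, Φ a = φ a := fun a => rfl
  have hg : g = (Φ : (V × F) →ₗ[F] W) ∘ₗ ((α • f).prodMap (γ • (LinearMap.id : F →ₗ[F] F))) ∘ₗ (Φ.symm : W →ₗ[F] V × F) := by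
    ext y
    obtain ⟨⟨a, b⟩, rfl⟩ := Φ.surjective y
    simp only [LinearMap.comp_apply, LinearEquiv.coe_coe, LinearEquiv.symm_apply_apply]
    simp [hΦ, φ, h1, h2, mul_smul, smul_comm γ b]
  rw [hg, LinearMap.det_conj, LinearMap.det_prodMap]
  simp [LinearMap.det_smul]

theorem det_ne_of_inj {F W : Type} [Field F] [AddCommGroup W] [Module F W] [FiniteDimensional F W]
    (f : W →ₗ[F] W) (hf : Function.Injective f) : LinearMap.det f ≠ 0 := by
  intro h
  have := LinearMap.bot_lt_ker_of_det_eq_zero h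
  rw [LinearMap.ker_eq_bot.2 hf] at this
  exact lt_irrefl _ this

theorem coprod_surj {F V W : Type} [Field F] [AddCommGroup V] [Module F V] [AddCommGroup W] [Module F W]
    [FiniteDimensional F V] [FiniteDimensional F W] (hfr : Module.finrank F W = Module.finrank F V + 1)
    (j : V →ₗ[F] W) (z : W) (hinj : ∀ a (b : F), j a + b • z = 0 → a = 0 ∧ b = 0) (y : W) :
    ∃ a, ∃ b : F, y = j a + b • z := by
  let φ : (V × F) →ₗ[F] W := j.coprod (LinearMap.toSpanSingleton F W z)
  have hφ : Function.Injective φ := by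
    rw [injective_iff_map_eq_zero]
    rintro ⟨a, b⟩ h
    simp only [φ, LinearMap.coprod_apply, LinearMap.toSpanSingleton_apply] at h
    obtain ⟨rfl, rfl⟩ := hinj a b h
    rfl
  have hs := (LinearMap.injective_iff_surjective_of_finrank_eq_finrank (f := φ) (by simp [hfr])).1 hφ
  obtain ⟨⟨a, b⟩, h⟩ := hs y
  exact ⟨a, b, h.symm⟩

theorem det_zero {F W : Type} [Field F] [AddCommGroup W] [Module F W] [FiniteDimensional F W]
    (f g : W →ₗ[F] W) (hf : Function.Injective f) (hg : Function.Injective g) {α : F}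
    (h : ∀ y, f (g y) = α • g (f y)) (hα : ∀ n : ℕ, n ≠ 0 → α ^ n ≠ 1) : ∀ y : W, y = 0 := by
  have h1 : f ∘ₗ g = α • (g ∘ₗ f) := LinearMap.ext h
  have h2 := congrArg LinearMap.det h1
  rw [LinearMap.det_smul, LinearMap.det_comp, LinearMap.det_comp] at h2
  have h3 : α ^ Module.finrank F W = 1 := by
    have := mul_ne_zero (det_ne_of_inj f hf) (det_ne_of_inj g hg)
    apply mul_right_cancel₀ this
    rw [one_mul]; rw [mul_comm (LinearMap.det g)] at h2; exact h2.symm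
  have h4 : Module.finrank F W = 0 := by
    by_contra hn; exact hα _ hn h3
  have := Module.finrank_zero_iff.1 h4
  intro y; exact Subsingleton.elim _ _

/-- nilpotency -/
theorem nil_of {F W : Type} [Field F] [AddCommGroup W] [Module F W] [FiniteDimensional F W]
    (f g : Module.End F W) (hf : Function.Injective f) {α : F}
    (h : ∀ y, g (f y) = α • f (g y)) (hα : ∀ n : ℕ, n ≠ 0 → α ^ n ≠ 1) (hα0 : α ≠ 0) :
    g ^ Module.finrank F W = 0 := by
  have hn : ∀ (n : ℕ) y, (g ^ n) (f y) = α ^ n • f ((g ^ n) y) := by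
    intro n
    induction n with
    | zero => simp
    | succ n ih =>
      intro y
      rw [pow_succ, Module.End.mul_apply, h, map_smul, ih, smul_smul, pow_succ' α]; rfl
  obtain ⟨n, hn1, hc⟩ : ∃ n, 1 ≤ n ∧ IsCompl (LinearMap.ker (g ^ n)) (LinearMap.range (g ^ n)) := by
    have := (LinearMap.eventually_isCompl_ker_pow_range_pow g).and (Filter.eventually_ge_atTop 1)
    obtain ⟨n, h1, h2⟩ := this.exists
    exact ⟨n, h2, h1⟩
  let W' := LinearMap.range (g ^ n)
  have hg' : ∀ y ∈ W', g y ∈ W' := by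
    rintro _ ⟨y, rfl⟩
    refine ⟨g y, ?_⟩
    rw [← Module.End.mul_apply, ← Module.End.mul_apply, ← pow_succ, ← pow_succ']
  have hf' : ∀ y ∈ W', f y ∈ W' := by
    rintro _ ⟨y, rfl⟩
    refine ⟨(α ^ n)⁻¹ • f y, ?_⟩
    rw [map_smul, hn, inv_smul_smul₀ (pow_ne_zero _ hα0)]
  have key := det_zero (g.restrict hg') (f.restrict hf') ?_ ?_ (α := α) ?_ hα
  · have : g ^ n = 0 := by
      ext y
      exact congrArg Subtype.val (key ⟨_, ⟨y, rfl⟩⟩)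
    have h2 := Module.End.ker_pow_le_ker_pow_finrank g n
    rw [this, LinearMap.ker_zero, top_le_iff, LinearMap.ker_eq_top] at h2
    exact h2
  · rw [injective_iff_map_eq_zero]
    rintro ⟨y, hy⟩ h0
    have h0' : g y = 0 := congrArg Subtype.val h0
    have : y ∈ LinearMap.ker (g ^ n) := by
      obtain ⟨k, rfl⟩ := Nat.exists_eq_add_of_le' hn1
      rw [LinearMap.mem_ker, pow_succ, Module.End.mul_apply, h0', map_zero]
    exact Subtype.ext (Submodule.disjoint_def.1 hc.disjoint y this hy)
  · intro a b hab
    exact Subtype.ext (hf (congrArg Subtype.val hab))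
  · intro y; exact Subtype.ext (h _)

namespace VV
variable {K : Type} [Field K] {D v : Module.End (RatFunc K) (VV K)} {N : ℕ}

theorem exists_w (hvD : ∀ y, v (D y) = y) (hD : ∀ y ∈ low K N, D y ∈ low K (N + 1))
    (hv : ∀ y ∈ low K (N + 1), v y ∈ low K N) :
    ∃ w ∈ low K (N + 1), w ≠ 0 ∧ v w = 0 ∧ ∀ y ∈ low K (N + 1), v y = 0 → ∃ b : RatFunc K, y = b • w := by
  have hlt : ∃ a ∈ low K (N + 1), a ∉ (low K N).map D := by
    by_contra hcon
    push Not at hcon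
    have h1 : low K (N + 1) ≤ (low K N).map D := hcon
    have h2 := Submodule.finrank_mono h1
    have h3 := Submodule.finrank_map_le D (low K N)
    rw [finrank_low] at h2 h3
    omega
  obtain ⟨a, ha, hna⟩ := hlt
  have hw : a - D (v a) ∈ low K (N + 1) := (low K (N + 1)).sub_mem ha (hD _ (hv _ ha))
  have hw0 : a - D (v a) ≠ 0 := by
    intro h; exact hna ⟨v a, hv _ ha, (sub_eq_zero.1 h).symm⟩
  have hvw : v (a - D (v a)) = 0 := by rw [map_sub, hvD, sub_self]
  refine ⟨a - D (v a), hw, hw0, hvw, fun y hy hvy => ?_⟩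
  set w := a - D (v a)
  have hfr : Module.finrank (RatFunc K) (low K (N + 1)) = Module.finrank (RatFunc K) (low K N) + 1 := by
    rw [finrank_low, finrank_low]
  obtain ⟨a', b, hab⟩ := coprod_surj (V := low K N) (W := low K (N + 1)) hfr (D.restrict hD) ⟨w, hw⟩ (by
    intro a b h
    have h1 : D a + b • w = 0 := congrArg Subtype.val h
    have h2 := congrArg v h1
    rw [map_add, hvD, map_smul, hvw, smul_zero, add_zero, map_zero] at h2
    rw [h2, map_zero, zero_add] at h1
    exact ⟨Subtype.ext h2, (smul_eq_zero.1 h1).resolve_right hw0⟩) ⟨y, hy⟩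
  have h1 : y = D a' + b • w := congrArg Subtype.val hab
  have h2 := congrArg v h1
  rw [map_add, hvD, map_smul, hvw, smul_zero, add_zero, hvy] at h2
  exact ⟨b, by rw [h1, ← h2, map_zero, zero_add]⟩

theorem det_compare (hvD : ∀ y, v (D y) = y) (hD : ∀ y ∈ low K N, D y ∈ low K (N + 1))
    {w : VV K} (hw : w ∈ low K (N + 1)) (hw0 : w ≠ 0) (hvw : v w = 0)
    {T : Module.End (RatFunc K) (VV K)} (hT : Function.Injective T)
    (hTN : ∀ y ∈ low K N, T y ∈ low K N) (hTN' : ∀ y ∈ low K (N + 1), T y ∈ low K (N + 1))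
    {α β γ : RatFunc K} (hTD : ∀ y, T (D y) = α • D (T y)) (hTw : T w = γ • w) (hTe : T (e N) = β • e N) :
    α ^ N * γ = β := by
  have hfr : Module.finrank (RatFunc K) (low K (N + 1)) = Module.finrank (RatFunc K) (low K N) + 1 := by
    rw [finrank_low, finrank_low]
  have h1 := det_split (V := low K N) (W := low K (N + 1)) hfr (D.restrict hD) ⟨w, hw⟩ (by
    intro a b h
    have h1 : D a + b • w = 0 := congrArg Subtype.val h
    have h2 := congrArg v h1
    rw [map_add, hvD, map_smul, hvw, smul_zero, add_zero, map_zero] at h2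
    rw [h2, map_zero, zero_add] at h1
    exact ⟨Subtype.ext h2, (smul_eq_zero.1 h1).resolve_right hw0⟩) (T.restrict hTN) (T.restrict hTN') (α := α) (γ := γ)
    (fun a => Subtype.ext (hTD a)) (Subtype.ext hTw)
  have h2 := det_split (V := low K N) (W := low K (N + 1)) hfr (Submodule.inclusion (low_mono (K := K) (Nat.le_succ N))) ⟨e N, e_low (Nat.lt_succ_self N)⟩ (by
    intro a b h
    have h1 : (a : VV K) + b • e N = 0 := congrArg Subtype.val h
    have h2 : b = 0 := by
      have := DFunLike.congr_fun h1 N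
      simpa [mem_low.1 a.2 N le_rfl, e] using this
    rw [h2, zero_smul, add_zero] at h1
    exact ⟨Subtype.ext h1, h2⟩) (T.restrict hTN) (T.restrict hTN') (α := 1) (γ := β)
    (fun a => Subtype.ext (by simp)) (Subtype.ext hTe)
  have hdet : LinearMap.det (A := RatFunc K) (M := low K N) (T.restrict hTN) ≠ 0 :=
    det_ne_of_inj (W := low K N) _ fun a b hab => Subtype.ext (hT (congrArg Subtype.val hab))
  rw [h2, finrank_low, one_pow, one_mul, mul_assoc, mul_left_comm] at h1
  exact (mul_left_cancel₀ hdet h1).symm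

end VV

open TW VV

theorem no_indep {F W : Type} [Field F] [AddCommGroup W] [Module F W] [FiniteDimensional F W]
    (T : Module.End F W) (μ : ℕ → F) (hμ : Function.Injective μ) (z : ℕ → W)
    (hz : ∀ i, z i ≠ 0) (hT : ∀ i, T (z i) = μ i • z i) : False := by
  have := Module.End.eigenvectors_linearIndependent' T μ hμ z fun i =>
    ⟨Module.End.mem_eigenspace_iff.2 (hT i), hz i⟩
  have h := this.finite
  exact not_finite ℕ

structure Lin {K : Type} [Field K] (q s : Kˣ) (D v T X : Module.End (RatFunc K) (VV K)) (N : ℕ) (μ l : K) : Prop where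
  hind : ∀ a b : ℤ, q ^ a * s ^ b = 1 → a = 0 ∧ b = 0
  vD : ∀ y, v (D y) = y
  TD : ∀ y, T (D y) = (Cc (q : K))⁻¹ • D (T y)
  XD : ∀ y, X (D y) = (Cc (s : K))⁻¹ • D (X y)
  vT : ∀ y, v (T y) = (Cc (q : K))⁻¹ • T (v y)
  vX : ∀ y, v (X y) = (Cc (s : K))⁻¹ • X (v y)
  TE : ∀ y, v y = 0 → T y = (Cc (q : K))⁻¹ • y
  XT : ∀ y, X (T y) = T (X y)
  Xinj : Function.Injective X
  Dl : ∀ m, N ≤ m → ∀ y ∈ low K m, D y ∈ low K (m + 1)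
  vl : ∀ m, N ≤ m → ∀ y ∈ low K (m + 1), v y ∈ low K m
  Tl : ∀ m, N ≤ m → ∀ y ∈ low K m, T y ∈ low K m
  Xl : ∀ m, N ≤ m → ∀ y ∈ low K m, X y ∈ low K m
  Te : ∀ k, N ≤ k → T (e k) = (Cc μ * (Cc (q : K))⁻¹ ^ (k + 1)) • e k
  Xe : ∀ k, N ≤ k → X (e k) = (Cc l * (RatFunc.X * (Cc (s : K))⁻¹ ^ k)) • e k

namespace Lin
variable {K : Type} [Field K] {q s : Kˣ} {D v T X : Module.End (RatFunc K) (VV K)} {N : ℕ} {μ l : K}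

theorem qn (h : Lin q s D v T X N μ l) (n : ℤ) (hn : n ≠ 0) : (Cc (q : K)) ^ n ≠ 1 := by
  intro h1
  have h2 : Cc ((q ^ n : Kˣ) : K) = Cc 1 := by rw [map_one, ← h1]; simp
  have h3 : q ^ n = 1 := Units.ext ((algebraMap K (RatFunc K)).injective h2)
  exact hn (h.hind n 0 (by simp [h3])).1

theorem sn (h : Lin q s D v T X N μ l) (n : ℤ) (hn : n ≠ 0) : (Cc (s : K)) ^ n ≠ 1 := by
  intro h1
  have h2 : Cc ((s ^ n : Kˣ) : K) = Cc 1 := by rw [map_one, ← h1]; simp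
  have h3 : s ^ n = 1 := Units.ext ((algebraMap K (RatFunc K)).injective h2)
  exact hn (h.hind 0 n (by simp [h3])).2

theorem qinj (h : Lin q s D v T X N μ l) {a b : ℕ} (hab : (Cc (q : K))⁻¹ ^ a = (Cc (q : K))⁻¹ ^ b) : a = b := by
  by_contra hne
  apply h.qn ((b : ℤ) - a) (by omega)
  have hq := RD.Cne q
  rw [zpow_sub₀ hq, zpow_natCast, zpow_natCast, div_eq_one_iff_eq (pow_ne_zero _ hq)]
  rw [inv_pow, inv_pow, inv_inj] at hab
  exact hab.symm

theorem Dinj (h : Lin q s D v T X N μ l) : Function.Injective D := Function.LeftInverse.injective h.vD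

theorem TDn (h : Lin q s D v T X N μ l) (n : ℕ) (y : VV K) : T ((D ^ n) y) = (Cc (q : K))⁻¹ ^ n • (D ^ n) (T y) := by
  induction n generalizing y with
  | zero => simp
  | succ n ih => rw [pow_succ, Module.End.mul_apply, ih, h.TD, map_smul, smul_smul, Module.End.mul_apply, pow_succ]

theorem Tvn (h : Lin q s D v T X N μ l) (n : ℕ) (y : VV K) : T ((v ^ n) y) = Cc (q : K) ^ n • (v ^ n) (T y) := by
  have h1 : ∀ y, T (v y) = Cc (q : K) • v (T y) := by
    intro y; rw [h.vT, smul_smul, mul_inv_cancel₀ (RD.Cne q), one_smul]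
  induction n generalizing y with
  | zero => simp
  | succ n ih => rw [pow_succ, Module.End.mul_apply, ih, h1, map_smul, smul_smul, Module.End.mul_apply, pow_succ]

theorem Tcoord (h : Lin q s D v T X N μ l) (y : VV K) {k : ℕ} (hk : N ≤ k) : T y k = (Cc μ * (Cc (q : K))⁻¹ ^ (k + 1)) * y k := by
  have : (Finsupp.lapply k : VV K →ₗ[RatFunc K] _) ∘ₗ T =
      (Cc μ * (Cc (q : K))⁻¹ ^ (k + 1)) • (Finsupp.lapply k : VV K →ₗ[RatFunc K] _) := by
    ext j : 2
    simp only [LinearMap.comp_apply, Finsupp.lsingle_apply]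
    change Finsupp.lapply k (T (VV.e j)) = (Cc μ * (Cc (q : K))⁻¹ ^ (k + 1)) • Finsupp.lapply k (VV.e j)
    by_cases hj : N ≤ j
    · rw [h.Te j hj, map_smul]
      by_cases hjk : j = k
      · rw [hjk]
      · simp [e, Finsupp.single_apply, hjk]
    · have h1 := h.Tl N le_rfl (e j) (e_low (by omega))
      have h2 : (Finsupp.lapply k : VV K →ₗ[RatFunc K] _) (T (e j)) = (0 : RatFunc K) := mem_low.1 h1 k hk
      rw [h2]
      have hjk : j ≠ k := by omega
      simp [e, Finsupp.single_apply, hjk]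
  exact LinearMap.congr_fun this y

theorem low_of (h : Lin q s D v T X N μ l) {y : VV K} {α : RatFunc K} (hα : ∀ k, N ≤ k → α ≠ Cc μ * (Cc (q : K))⁻¹ ^ (k + 1))
    (hy : T y = α • y) : y ∈ low K N := by
  rw [mem_low]
  intro k hk
  have h1 := h.Tcoord y hk
  rw [hy, Finsupp.smul_apply, smul_eq_mul, ← sub_eq_zero, ← sub_mul] at h1
  exact (mul_eq_zero.1 h1).resolve_left (sub_ne_zero.2 (hα k hk))

theorem ex_w (h : Lin q s D v T X N μ l) : ∃ w ∈ low K (N + 1), w ≠ 0 ∧ v w = 0 ∧ ∃ ω : RatFunc K, X w = ω • w := by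
  obtain ⟨w, hw, hw0, hvw, hall⟩ := exists_w h.vD (h.Dl N le_rfl) (h.vl N le_rfl)
  exact ⟨w, hw, hw0, hvw, hall (X w) (h.Xl _ (by omega) _ hw) (by rw [h.vX, hvw, map_zero, smul_zero])⟩

theorem Dn_inj (h : Lin q s D v T X N μ l) (n : ℕ) {y : VV K} (hy : y ≠ 0) : (D ^ n) y ≠ 0 := by
  induction n with
  | zero => simpa
  | succ n ih =>
    rw [pow_succ', Module.End.mul_apply]
    intro h0
    exact ih (h.Dinj (h0.trans (map_zero D).symm))

theorem mu_ne (h : Lin q s D v T X N μ l) : μ ≠ 0 := by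
  rintro rfl
  obtain ⟨w, hw, hw0, hvw, -⟩ := h.ex_w
  have hT : ∀ i, T ((D ^ i) w) = (Cc (q : K))⁻¹ ^ (i + 1) • (D ^ i) w := by
    intro i
    rw [h.TDn, h.TE w hvw, map_smul, smul_smul, pow_succ]
  have hm : ∀ i, (D ^ i) w ∈ low K N := by
    intro i
    refine h.low_of (fun k _ => ?_) (hT i)
    rw [map_zero, zero_mul]
    exact pow_ne_zero _ (inv_ne_zero (RD.Cne q))
  exact no_indep (W := low K N) (T.restrict (h.Tl N le_rfl)) (fun i => (Cc (q : K))⁻¹ ^ (i + 1))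
    (fun a b hab => by have := h.qinj hab; omega) (fun i => ⟨_, hm i⟩)
    (fun i h0 => h.Dn_inj i hw0 (congrArg Subtype.val h0)) (fun i => Subtype.ext (hT i))

theorem Tinj (h : Lin q s D v T X N μ l) : Function.Injective T := by
  have hmu : Cc μ ≠ 0 := (map_ne_zero _).2 h.mu_ne
  have hlow : ∀ y, T y = 0 → y ∈ low K N := fun y hy => by
    refine h.low_of (α := 0) (fun k _ => ?_) (by rw [hy, zero_smul])
    exact (mul_ne_zero hmu (pow_ne_zero _ (inv_ne_zero (RD.Cne q)))).symm
  have hle : LinearMap.ker T ≤ low K N := fun y hy => hlow y hy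
  haveI : FiniteDimensional (RatFunc K) (LinearMap.ker T) := Submodule.finiteDimensional_of_le hle
  have hDk : ∀ y ∈ LinearMap.ker T, D y ∈ LinearMap.ker T := by
    intro y hy
    rw [LinearMap.mem_ker] at hy ⊢
    rw [h.TD, hy, map_zero, smul_zero]
  have hXk : ∀ y ∈ LinearMap.ker T, X y ∈ LinearMap.ker T := by
    intro y hy
    rw [LinearMap.mem_ker] at hy ⊢
    rw [← h.XT, hy, map_zero]
  have key := det_zero (W := LinearMap.ker T) (X.restrict hXk) (D.restrict hDk)
    (fun a b hab => Subtype.ext (h.Xinj (congrArg Subtype.val hab)))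
    (fun a b hab => Subtype.ext (h.Dinj (congrArg Subtype.val hab))) (α := (Cc (s : K))⁻¹)
    (fun y => Subtype.ext (h.XD y)) (fun n hn h1 => h.sn (-n) (by omega) (by
      rw [zpow_neg, zpow_natCast, ← inv_pow, h1]))
  rw [injective_iff_map_eq_zero]
  intro y hy
  exact congrArg Subtype.val (key ⟨y, hy⟩)

theorem main (h : Lin q s D v T X N μ l) : μ = 1 ∧ ∃ w, w ≠ 0 ∧ v w = 0 ∧ X w = (Cc l * RatFunc.X) • w := by
  obtain ⟨w, hw, hw0, hvw, ω, hω⟩ := h.ex_w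
  have hq := inv_ne_zero (RD.Cne q)
  have hs := inv_ne_zero (RD.Cne s)
  have h1 := det_compare h.vD (h.Dl N le_rfl) hw hw0 hvw h.Tinj (h.Tl N le_rfl) (h.Tl _ (by omega)) h.TD
    (h.TE w hvw) (h.Te N le_rfl)
  have h2 := det_compare h.vD (h.Dl N le_rfl) hw hw0 hvw h.Xinj (h.Xl N le_rfl) (h.Xl _ (by omega)) h.XD
    hω (h.Xe N le_rfl)
  refine ⟨?_, w, hw0, hvw, ?_⟩
  · apply (algebraMap K (RatFunc K)).injective
    rw [map_one]
    rw [← pow_succ] at h1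
    exact mul_right_cancel₀ (pow_ne_zero (N + 1) hq) (h1.symm.trans (one_mul _).symm)
  · rw [hω]
    congr 1
    apply mul_left_cancel₀ (pow_ne_zero N hs)
    rw [h2]; ring

theorem vnil (h : Lin q s D v T X N μ l) : ∀ y ∈ low K N, (v ^ N) y = 0 := by
  have hvN : ∀ y ∈ low K N, v y ∈ low K N := fun y hy => h.vl N le_rfl y (low_mono (by omega) hy)
  have key := nil_of (W := low K N) (T.restrict (h.Tl N le_rfl)) (v.restrict hvN)
    (fun a b hab => Subtype.ext (h.Tinj (congrArg Subtype.val hab))) (α := (Cc (q : K))⁻¹)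
    (fun y => Subtype.ext (h.vT y)) (fun n hn h1 => h.qn (-n) (by omega) (by
      rw [zpow_neg, zpow_natCast, ← inv_pow, h1])) (inv_ne_zero (RD.Cne q))
  rw [finrank_low] at key
  intro y hy
  have := congrArg Subtype.val (LinearMap.congr_fun key ⟨y, hy⟩)
  rw [Module.End.pow_restrict] at this
  exact this

theorem vn_low (h : Lin q s D v T X N μ l) (n : ℕ) : ∀ y ∈ low K (N + n), (v ^ n) y ∈ low K N := by
  induction n with
  | zero => simp
  | succ n ih =>
    intro y hy
    rw [pow_succ, Module.End.mul_apply]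
    exact ih _ (h.vl _ (by omega) y hy)

theorem vn_zero (h : Lin q s D v T X N μ l) (n : ℕ) (hn : N ≤ n) (k : ℕ) (hk : k < n) : (v ^ n) (e k) = 0 := by
  obtain ⟨n, rfl⟩ := Nat.exists_eq_add_of_le hn
  rw [pow_add, Module.End.mul_apply]
  exact h.vnil _ (h.vn_low _ _ (e_low hk))

theorem vDn (h : Lin q s D v T X N μ l) (n : ℕ) (y : VV K) : (v ^ n) ((D ^ n) y) = y := by
  induction n generalizing y with
  | zero => simp
  | succ n ih => rw [pow_succ, pow_succ', Module.End.mul_apply, Module.End.mul_apply, h.vD, ih]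

theorem Dv_id (h : Lin q s D v T X N μ l) (n : ℕ) (hn : N ≤ n) (k : ℕ) (hk : n ≤ k) : (D ^ n) ((v ^ n) (e k)) = e k := by
  have hmu := h.main.1
  have hTe := h.Te k (by omega)
  rw [hmu, map_one, one_mul] at hTe
  have hcomm : T ((D ^ n) ((v ^ n) (e k))) = (Cc (q : K))⁻¹ ^ (k + 1) • (D ^ n) ((v ^ n) (e k)) := by
    rw [h.TDn, h.Tvn, hTe, map_smul, map_smul, map_smul, smul_smul, smul_smul, ← mul_pow,
      inv_mul_cancel₀ (RD.Cne q), one_pow, one_mul]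
  set y := e k - (D ^ n) ((v ^ n) (e k)) with hy
  have hTy : T y = (Cc (q : K))⁻¹ ^ (k + 1) • y := by rw [hy, map_sub, hTe, hcomm, smul_sub]
  have hvy : (v ^ n) y = 0 := by rw [hy, map_sub, h.vDn, sub_self]
  have key : ∀ j, j ≤ n → (v ^ j) y = 0 → y = 0 := by
    intro j
    induction j with
    | zero => intro _ h0; simpa using h0
    | succ j ih =>
      intro hj h0
      apply ih (by omega)
      by_contra hz
      rw [pow_succ', Module.End.mul_apply] at h0
      have h1 := h.TE _ h0
      rw [h.Tvn, hTy, map_smul, smul_smul] at h1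
      have h2 := smul_left_injective _ hz h1
      have hq := RD.Cne q
      apply h.qn ((k : ℤ) - j) (by omega)
      rw [zpow_sub₀ hq, zpow_natCast, zpow_natCast, div_eq_one_iff_eq (pow_ne_zero _ hq)]
      simp only [inv_pow] at h2
      field_simp at h2
      exact (mul_right_cancel₀ hq (h2.trans (pow_succ _ _))).symm
  exact (sub_eq_zero.1 (key n le_rfl hvy)).symm
end Lin

open TW VV

namespace Sp
variable {K : Type} [Field K] {q s : Kˣ} {κ c : K} {B : Type} [Ring B] [Algebra K B]
  {R : RD q s κ c B} (Z : Sp R)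

theorem transc {l : K} (hl : l ≠ 0) : Transcendental K (Cc l * RatFunc.X : RatFunc K) := by
  intro h
  have h1 : IsAlgebraic K (Cc l⁻¹ * (Cc l * RatFunc.X) : RatFunc K) := (isAlgebraic_algebraMap l⁻¹).mul h
  rw [← mul_assoc, ← map_mul, inv_mul_cancel₀ hl, map_one, one_mul] at h1
  exact RatFunc.transcendental_X h1

theorem one_sub_f (n : ℕ) : 1 - Z.f n ∈ Z.I := by
  refine ⟨n, ?_, ?_⟩
  · rw [f, mul_sub, ← mul_assoc, Z.vdn]; simp
  · rw [f, sub_mul, mul_assoc, Z.vdn]; simp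

theorem cinv (q : Kˣ) : Cc (((q⁻¹ : Kˣ) : K)) = (Cc (q : K))⁻¹ := by simp

theorem lin (F : Frame R) (hF : F.I = Z.I) (θ : B →ₐ[K] B) :
    ∃ (l μ : K) (a a' : ℤ) (f f' : PowerSeries K) (N : ℕ), l ≠ 0 ∧ f ≠ 0 ∧ f' ≠ 0 ∧
      F.ι (θ R.x) = sg (1, 0) (PowerSeries.C l) ∧
      F.ι (θ R.t) = sg (0, 0) (PowerSeries.C μ * PowerSeries.X) ∧
      F.ι (θ R.d) = sg (a, 1) f ∧ F.ι (θ R.u) = sg (a', -1) f' ∧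
      θ R.x - l • R.x ∈ Z.I ∧
      Lin q s (F.ρ (θ R.d)) (F.ρ (θ Z.v)) (F.ρ (θ R.t)) (F.ρ (θ R.x)) N μ l := by
  obtain ⟨l, μ, a, a', f, f', hl, hf, hf', hx, ht, hd, hu⟩ := F.main1 θ (fun h => by
    have := (Z.tj 0).map θ
    simpa using this)
  have hθx : θ R.x - l • R.x ∈ F.I := F.ker_ι (by
    rw [map_sub, hx, map_smul, F.ιx, smul_sg, PowerSeries.smul_eq_C_mul, mul_one, sub_self])
  have hθt : θ R.t - μ • R.t ∈ F.I := F.ker_ι (by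
    rw [map_sub, ht, map_smul, F.ιt, smul_sg, PowerSeries.smul_eq_C_mul, sub_self])
  obtain ⟨f'', hv⟩ : ∃ f'', F.ι (θ Z.v) = sg (-a, -1) f'' := by
    have h1 : F.ι (θ Z.v) * F.ι (θ R.d) = sg 0 1 := by
      rw [← map_mul, ← map_mul, Z.vd, map_one, map_one, one_def]
    obtain ⟨g1, g2, f1, f2, hf1, hf2, e1, e2, e3, -⟩ := mono_of_mul one_ne_zero h1
    obtain ⟨rfl, -⟩ := sg_inj hf (hd.symm.trans e2)
    obtain rfl : g1 = (-a, -1) := eq_neg_of_add_eq_zero_left e3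
    exact ⟨f1, e1⟩
  obtain ⟨N1, -, hN1⟩ := F.ρI _ hθx
  obtain ⟨N2, -, hN2⟩ := F.ρI _ hθt
  obtain ⟨N3, hN3⟩ := F.band hx
  obtain ⟨N4, hN4⟩ := F.band ht
  obtain ⟨N5, hN5⟩ := F.band hd
  obtain ⟨N6, hN6⟩ := F.band hv
  have app : ∀ (a b c' d' : B) (k : K), a * b = k • (c' * d') → ∀ y, F.ρ (θ a) (F.ρ (θ b) y) = Cc k • F.ρ (θ c') (F.ρ (θ d') y) := by
    intro a b c' d' k h y
    rw [← Module.End.mul_apply, ← map_mul, ← map_mul, h, map_smul, map_smul, LinearMap.smul_apply, ksmul,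
      map_mul, map_mul, Module.End.mul_apply]
  refine ⟨l, μ, a, a', f, f', N1 + N2 + N3 + N4 + N5 + N6, hl, hf, hf', hx, ht, hd, hu, hF ▸ hθx, ?_⟩
  refine ⟨Z.hind, ?_, ?_, ?_, ?_, ?_, ?_, ?_, ?_, ?_, ?_, ?_, ?_, ?_, ?_⟩
  · intro y
    rw [← Module.End.mul_apply, ← map_mul, ← map_mul, Z.vd]; simp
  · intro y; rw [app _ _ _ _ _ R.td, cinv]
  · intro y; rw [app _ _ _ _ _ R.xd, cinv]
  · intro y; rw [app _ _ _ _ _ Z.vt, cinv]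
  · intro y; rw [app _ _ _ _ _ Z.vx, cinv]
  · intro y hy
    have he : F.ρ (θ Z.e) y = y := by simp [e, hy]
    have h1 := congrArg (fun b => F.ρ (θ b) y) Z.te
    simp only [map_mul, Module.End.mul_apply, he, map_smul, LinearMap.smul_apply, ksmul, cinv] at h1
    exact h1
  · intro y
    rw [← Module.End.mul_apply, ← map_mul, ← map_mul, R.xt]; simp
  · exact (F.ρ_unit (R.isUnit_x.map θ)).1
  · intro m hm; exact hN5 _ _ (by omega) (by omega) (by push_cast; ring)
  · intro m hm; exact hN6 _ _ (by omega) (by omega) (by push_cast; ring)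
  · intro m hm; exact hN4 _ _ (by omega) (by omega) (by push_cast; ring)
  · intro m hm; exact hN3 _ _ (by omega) (by omega) (by push_cast; ring)
  · intro k hk
    have := hN2 k (by omega)
    rw [map_sub, LinearMap.sub_apply, sub_eq_zero] at this
    rw [this, map_smul, LinearMap.smul_apply, ksmul, F.ρt_e, smul_smul]
  · intro k hk
    have := hN1 k (by omega)
    rw [map_sub, LinearMap.sub_apply, sub_eq_zero] at this
    rw [this, map_smul, LinearMap.smul_apply, ksmul, F.ρx_e, smul_smul]

theorem θf (F : Frame R) (hF : F.I = Z.I) (θ : B →ₐ[K] B) {N : ℕ} {l μ : K}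
    (h : Lin q s (F.ρ (θ R.d)) (F.ρ (θ Z.v)) (F.ρ (θ R.t)) (F.ρ (θ R.x)) N μ l) (n : ℕ) (hn : N ≤ n) :
    θ (Z.f n) = Z.f n := by
  have hI : θ (Z.f n) - Z.f n ∈ Z.I := by
    rw [← hF]
    apply F.ker_ι
    have h1 := Z.I_dom F.ι (Z.one_sub_f n)
    have h2 := Z.I_dom (F.ι.comp θ) (Z.one_sub_f n)
    rw [map_sub, map_one, sub_eq_zero] at h1 h2
    rw [map_sub, ← h1, sub_eq_zero]; exact h2.symm
  have h0 : F.ρ (θ (Z.f n) - Z.f n) = 0 := by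
    rw [map_sub, sub_eq_zero]
    apply VV.hom_ext
    intro k
    rw [f, map_mul, map_mul, map_pow, map_pow, map_pow, map_pow, map_mul, Module.End.mul_apply, Module.End.mul_apply]
    by_cases hk : k < n
    · rw [h.vn_zero n hn k hk, map_zero]
      have : F.ρ (Z.v ^ n) (VV.e k) = 0 := by
        ext j
        rw [Z.ρ_vn F.ρ F.ρd_e F.ρu_e0]
        exact Finsupp.single_eq_of_ne (by omega)
      rw [this, map_zero]
    · rw [h.Dv_id n hn k (by omega)]
      obtain ⟨k, rfl⟩ := Nat.exists_eq_add_of_le' (Nat.le_of_not_lt hk)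
      rw [← ρ_dn F.ρ F.ρd_e n k, ← Module.End.mul_apply (F.ρ (Z.v ^ n)), ← map_mul, Z.vdn, map_one, Module.End.one_apply]
  have := Z.faith F.gen F.ρ (w := VV.e 0) (Frame.e_ne 0) (by
    ext j
    rw [Z.ρ_v F.ρ F.ρd_e F.ρu_e0]
    exact Finsupp.single_eq_of_ne (by omega)) (ω := RatFunc.X) RatFunc.transcendental_X (by rw [F.ρx_e]; simp) hI h0
  exact sub_eq_zero.1 this

theorem X_v (k : ℕ) (p : ℤ) : ∃ γ : K, ((Xu R ^ p : Bˣ) : B) * Z.v ^ k = γ • (Z.v ^ k * ((Xu R ^ p : Bˣ) : B)) := by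
  have h1 : R.x * Z.v = (s : K) • (Z.v * R.x) := by rw [Z.vx, smul_smul, ← Units.val_mul]; simp
  have h2 : R.xi * Z.v = ((s⁻¹ : Kˣ) : K) • (Z.v * R.xi) := by rw [Z.v_xi, smul_smul, ← Units.val_mul]; simp
  induction p with
  | zero => exact ⟨1, by simp⟩
  | succ n ih =>
    obtain ⟨γ, hγ⟩ := ih
    refine ⟨(s : K) ^ k * γ, ?_⟩
    rw [zpow_add_one, Units.val_mul, mul_assoc, show ((Xu R : Bˣ) : B) = R.x from rfl, comm_pow_aux h1, mul_smul_comm,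
      ← mul_assoc, hγ, smul_mul_assoc, smul_smul, mul_assoc]
  | pred n ih =>
    obtain ⟨γ, hγ⟩ := ih
    refine ⟨((s⁻¹ : Kˣ) : K) ^ k * γ, ?_⟩
    rw [zpow_sub_one, Units.val_mul, mul_assoc, show (((Xu R)⁻¹ : Bˣ) : B) = R.xi from rfl, comm_pow_aux h2, mul_smul_comm,
      ← mul_assoc, hγ, smul_mul_assoc, smul_smul, mul_assoc]

theorem θX (θ : B →ₐ[K] B) {l : K} (hl : l ≠ 0) {k : ℕ} (hk : (θ R.x - l • R.x) * Z.ek k = 0) (p : ℤ) :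
    θ ((Xu R ^ p : Bˣ) : B) * Z.ek k = l ^ p • (((Xu R ^ p : Bˣ) : B) * Z.ek k) := by
  have h1 : θ R.x * Z.ek k = l • (Z.ek k * R.x) := by
    rw [sub_mul, sub_eq_zero] at hk
    rw [hk, smul_mul_assoc, Z.ek_comm_x]
  have h2 : ∀ p : ℤ, θ ((Xu R ^ (p + 1) : Bˣ) : B) * Z.ek k = l • (θ ((Xu R ^ p : Bˣ) : B) * Z.ek k * R.x) := by
    intro p
    rw [zpow_add_one, Units.val_mul, map_mul, mul_assoc, show ((Xu R : Bˣ) : B) = R.x from rfl, h1, mul_smul_comm, mul_assoc]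
  have h3 : ∀ p : ℤ, l ^ (p + 1) • (((Xu R ^ (p + 1) : Bˣ) : B) * Z.ek k) = l • (l ^ p • (((Xu R ^ p : Bˣ) : B) * Z.ek k) * R.x) := by
    intro p
    rw [zpow_add_one, Units.val_mul, mul_assoc, show ((Xu R : Bˣ) : B) = R.x from rfl, smul_mul_assoc, smul_smul, mul_assoc,
      Z.ek_comm_x, zpow_add_one₀ hl, mul_comm l]
  induction p with
  | zero => simp
  | succ n ih => rw [h2, h3, ih]
  | pred n ih =>
    have h4 := h2 (-n - 1)
    have h5 := h3 (-n - 1)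
    rw [sub_add_cancel, ih] at h4
    rw [sub_add_cancel, h4] at h5
    have h6 := smul_right_injective B hl h5
    exact (R.isUnit_x.mul_left_inj).1 h6

theorem bij (hgen : R.Gen) (huniv : R.Univ) (hm : 1 ≤ Z.m) (θ : B →ₐ[K] B) : Function.Bijective θ := by
  obtain ⟨F, hF⟩ := Z.frame hgen huniv hm
  obtain ⟨l, μ, a, a', f, f', N, hl, hf, hf', hx, ht, hd, hu, hxI, h⟩ := Z.lin F hF θ
  obtain ⟨hμ, w, hw0, hvw, hXw⟩ := h.main
  subst hμ
  have hG : R.Grad (F.ι.comp θ) := ⟨l, a, a', f, f', hl, hf, hf', hx, by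
    rw [AlgHom.comp_apply, ht, map_one, one_mul], hd, hu⟩
  obtain ⟨h1, h2⟩ := F.main2 θ hG (by rw [hF]; exact fun i hi => Z.I_dom (F.ι.comp θ) hi)
  rw [hF] at h1 h2
  -- the ideal lies in the range
  let S : Submodule K B := LinearMap.range θ.toLinearMap
  have hSmem : ∀ b, θ b ∈ S := fun b => ⟨b, rfl⟩
  have hSmul : ∀ x ∈ S, ∀ y ∈ S, x * y ∈ S := by
    rintro _ ⟨x, rfl⟩ _ ⟨y, rfl⟩
    exact ⟨x * y, map_mul θ x y⟩
  obtain ⟨k, hkN, hk⟩ : ∃ k, N ≤ k ∧ (θ R.x - l • R.x) * Z.ek k = 0 := by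
    obtain ⟨n, -, hn⟩ := hxI
    refine ⟨N + n, by omega, ?_⟩
    rw [ek_eq, ← mul_assoc, ← mul_assoc, Sp.I_max' (R := R) (by omega) hn]; simp
  have hek : θ (Z.ek k) = Z.ek k := by
    rw [ek, map_sub, Z.θf F hF θ h k hkN, Z.θf F hF θ h (k + 1) (by omega)]
  have hXek : ∀ p : ℤ, ((Xu R ^ p : Bˣ) : B) * Z.ek k ∈ S := by
    intro p
    have h3 := Z.θX θ hl hk p
    have h4 := hSmem (((Xu R ^ p : Bˣ) : B) * Z.ek k)
    rw [map_mul, hek, h3] at h4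
    have := S.smul_mem (l ^ p)⁻¹ h4
    rwa [inv_smul_smul₀ (zpow_ne_zero _ hl)] at this
  have hcorner : ∀ y, Z.ek k * y * Z.ek k ∈ S := by
    intro y
    obtain ⟨L, hL⟩ := Z.corner hgen (Z.v ^ k * y * R.d ^ k)
    have h3 : Z.ek k * y * Z.ek k = R.d ^ k * (Z.e * (Z.v ^ k * y * R.d ^ k) * Z.e) * Z.v ^ k := by
      rw [ek_eq]; simp only [mul_assoc]
    rw [h3, hL]
    unfold Finsupp.sum
    rw [Finset.mul_sum, Finset.sum_mul]
    refine S.sum_mem fun p _ => ?_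
    rw [mul_smul_comm, smul_mul_assoc]
    refine S.smul_mem _ ?_
    obtain ⟨γ, hγ⟩ := Z.X_v k p
    have hcomm : Z.ek k * ((Xu R ^ p : Bˣ) : B) = ((Xu R ^ p : Bˣ) : B) * Z.ek k :=
      (Commute.units_zpow_right (u := Xu R) (Z.ek_comm_x k) p).eq
    rw [← mul_assoc, mul_assoc (R.d ^ k * Z.e), hγ, mul_smul_comm, ← mul_assoc, ← ek_eq, hcomm]
    exact S.smul_mem _ (hXek p)
  have hE : θ Z.e = θ (Z.v ^ k) * Z.ek k * θ (R.d ^ k) := by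
    rw [← hek, ← map_mul, ← map_mul, ek_eq]
    congr 1
    rw [← mul_assoc, ← mul_assoc, Z.vdn, one_mul, mul_assoc, Z.vdn, mul_one]
  have hcorner' : ∀ y, θ Z.e * y * θ Z.e ∈ S := by
    intro y
    have h3 : θ Z.e * y * θ Z.e = θ (Z.v ^ k) * (Z.ek k * (θ (R.d ^ k) * y * θ (Z.v ^ k)) * Z.ek k) * θ (R.d ^ k) := by
      rw [hE]; simp only [mul_assoc]
    rw [h3]
    exact hSmul _ (hSmul _ (hSmem _) _ (hcorner _)) _ (hSmem _)
  have hIS : ∀ i ∈ Z.I, i ∈ S := by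
    rintro i ⟨n, hn1, hn2⟩
    have hn1' := Z.I_max (N := N + n) (by omega) hn1
    have hn2' := Sp.I_max' (R := R) (N := N + n) (by omega) hn2
    have hf := Z.θf F hF θ h (N + n) (by omega)
    have hv : θ Z.v ^ (N + n) * i = 0 := by
      have : θ (Z.v ^ (N + n)) * θ (Z.f (N + n)) * i = θ (Z.v ^ (N + n)) * i := by
        rw [← map_mul, Sp.f, ← mul_assoc, Z.vdn, one_mul]
      rw [← map_pow, ← this, hf, Sp.f, mul_assoc, mul_assoc, hn1']; simp
    have hd : i * θ R.d ^ (N + n) = 0 := by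
      have : i * (θ (Z.f (N + n)) * θ (R.d ^ (N + n))) = i * θ (R.d ^ (N + n)) := by
        rw [← map_mul, Sp.f, mul_assoc, Z.vdn, mul_one]
      rw [← map_pow, ← this, hf, Sp.f, ← mul_assoc, ← mul_assoc, hn2']; simp
    have hEE : θ Z.e = 1 - θ R.d * θ Z.v := by rw [e]; simp
    refine descend' (n := N + n) hEE (fun y hy => hSmul _ hy _ (hSmem _)) hd fun b => ?_
    refine descend (n := N + n) hEE (fun y hy => hSmul _ (hSmem _) _ hy) ?_ fun a => ?_
    · rw [mul_assoc, ← mul_assoc, hv, zero_mul]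
    · rw [← mul_assoc, ← mul_assoc, ← map_pow, mul_assoc (θ Z.e)]
      exact hcorner' _
  constructor
  · rw [injective_iff_map_eq_zero]
    intro b hb
    exact Z.faith hgen (F.ρ.comp θ) hw0 hvw (transc hl) hXw (h1 b hb) (by simp [hb])
  · intro b
    obtain ⟨b', hb'⟩ := h2 b
    obtain ⟨b'', hb''⟩ := hIS _ hb'
    refine ⟨b' - b'', ?_⟩
    rw [map_sub, show θ b'' = _ from hb'']; abel

end Sp

open TW VV

namespace DUL
section
variable {K : Type} [Field K] {B : Type} [Ring B] [Algebra K B]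

/-- From the down-up relations with inverses to the relation data. -/
def toRD (q s : Kˣ) (r κ c : K) (hr : (q : K) * s = r) (hκ : κ * (r - s) = 1)
    (hc : c * (1 - r * s) = 1 - s * s) (h0 : 1 - r * s ≠ 0)
    (d u xi yi : B) (h1 : d * d * u = (r + s) • (d * u * d) - (r * s) • (u * d * d))
    (h2 : d * u * u = (r + s) • (u * d * u) - (r * s) • (u * u * d))
    (h3 : (d * u - r • (u * d)) * xi = 1) (h4 : xi * (d * u - r • (u * d)) = 1)
    (h5 : (u * d - (s : K) • (d * u)) * yi = 1) (h6 : yi * (u * d - (s : K) • (d * u)) = 1) :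
    RD q s κ c B :=
  have hs : (s : K) ≠ 0 := s.ne_zero
  have hκ0 : κ ≠ 0 := left_ne_zero_of_mul_eq_one hκ
  have dx : d * (d * u - r • (u * d)) = (s : K) • ((d * u - r • (u * d)) * d) := by
    simp only [mul_sub, sub_mul, mul_smul_comm, smul_mul_assoc, ← mul_assoc, h1]; module
  have xu : (d * u - r • (u * d)) * u = (s : K) • (u * (d * u - r • (u * d))) := by
    simp only [mul_sub, sub_mul, mul_smul_comm, smul_mul_assoc, ← mul_assoc, h2]; module
  have dw : d * (d * u - (s : K) • (u * d)) = r • ((d * u - (s : K) • (u * d)) * d) := by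
    simp only [mul_sub, sub_mul, mul_smul_comm, smul_mul_assoc, ← mul_assoc, h1]; module
  have wu : (d * u - (s : K) • (u * d)) * u = r • (u * (d * u - (s : K) • (u * d))) := by
    simp only [mul_sub, sub_mul, mul_smul_comm, smul_mul_assoc, ← mul_assoc, h2]; module
  have hcm : (d * u) * (u * d) = (u * d) * (d * u) := by
    have e1 : (d * u) * (u * d) = (d * u * u) * d := by simp only [mul_assoc]
    have e2 : (u * d) * (d * u) = u * (d * d * u) := by simp only [mul_assoc]
    rw [e1, e2, h1, h2]
    simp only [mul_sub, sub_mul, mul_smul_comm, smul_mul_assoc, ← mul_assoc]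
  have xw : (d * u - r • (u * d)) * (d * u - (s : K) • (u * d)) = (d * u - (s : K) • (u * d)) * (d * u - r • (u * d)) := by
    simp only [mul_sub, sub_mul, mul_smul_comm, smul_mul_assoc, hcm]; module
  have wxi : (d * u - (s : K) • (u * d)) * xi = xi * (d * u - (s : K) • (u * d)) := by
    calc _ = xi * ((d * u - r • (u * d)) * (d * u - (s : K) • (u * d))) * xi := by
          rw [← mul_assoc, h4, one_mul]
      _ = _ := by rw [xw, mul_assoc, mul_assoc, h3, mul_one]
  have dxi : d * xi = ((s⁻¹ : Kˣ) : K) • (xi * d) := by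
    have : xi * d = (s : K) • (d * xi) := by
      calc xi * d = xi * (d * (d * u - r • (u * d))) * xi := by rw [mul_assoc, mul_assoc, h3, mul_one]
        _ = _ := by rw [dx, mul_smul_comm, ← mul_assoc xi, h4, one_mul, smul_mul_assoc]
    rw [this, smul_smul, ← Units.val_mul]; simp
  have xiu : xi * u = ((s⁻¹ : Kˣ) : K) • (u * xi) := by
    have : u * xi = (s : K) • (xi * u) := by
      calc u * xi = xi * ((d * u - r • (u * d)) * u) * xi := by rw [← mul_assoc, h4, one_mul]
        _ = _ := by rw [xu, mul_smul_comm, smul_mul_assoc, mul_assoc, mul_assoc, h3, mul_one]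
    rw [this, smul_smul, ← Units.val_mul]; simp
  have xt : (d * u - r • (u * d)) * ((d * u - (s : K) • (u * d)) * xi) = d * u - (s : K) • (u * d) := by
    rw [wxi, ← mul_assoc, h3, one_mul]
  have hy : (u * d - (s : K) • (d * u)) = (κ * (1 - r * s)) • ((d * u - r • (u * d)) * ((d * u - (s : K) • (u * d)) * xi - c • 1)) := by
    rw [mul_sub (d * u - r • (u * d)), xt, mul_smul_comm, mul_one]
    have e : (κ * (1 - r * s)) • (d * u - (s : K) • (u * d) - c • (d * u - r • (u * d)))
        = (κ * (1 - r * s) - κ * (c * (1 - r * s))) • (d * u)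
          + (κ * (c * (1 - r * s)) * r - κ * (1 - r * s) * s) • (u * d) := by module
    rw [e, hc, show κ * (1 - r * s) - κ * (1 - s * s) = - s * (κ * (r - s)) by ring,
      show κ * (1 - s * s) * r - κ * (1 - r * s) * s = κ * (r - s) by ring, hκ]
    module
  have hk : κ * (1 - r * s) ≠ 0 := mul_ne_zero hκ0 h0
  have htc : (d * u - (s : K) • (u * d)) * xi - c • 1 = (κ * (1 - r * s))⁻¹ • (xi * (u * d - (s : K) • (d * u))) := by
    rw [hy, mul_smul_comm, ← mul_assoc xi, h4, one_mul, inv_smul_smul₀ hk]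
  { d := d
    u := u
    x := d * u - r • (u * d)
    xi := xi
    t := (d * u - (s : K) • (u * d)) * xi
    ti := (κ * (1 - r * s)) • (yi * (d * u - r • (u * d)))
    dx := dx
    xu := xu
    dt := by
      rw [← mul_assoc, dw, smul_mul_assoc, mul_assoc, dxi, mul_smul_comm, smul_smul, ← hr, mul_assoc, mul_assoc]; simp
    tu := by
      rw [mul_assoc, xiu, mul_smul_comm, ← mul_assoc, wu, smul_mul_assoc, smul_smul, ← hr, mul_assoc, mul_comm]
      simp [mul_assoc]
    xt := by rw [xt, mul_assoc, h4, mul_one]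
    ud := by
      rw [mul_sub, xt, mul_one]
      have : κ • (d * u - (s : K) • (u * d) - (d * u - r • (u * d))) = (κ * (r - s)) • (u * d) := by module
      rw [this, hκ, one_smul]
    du := by
      rw [mul_sub, mul_smul_comm, xt, mul_one]
      have : (κ * s) • ((q : K) • (d * u - (s : K) • (u * d)) - (d * u - r • (u * d))) = (κ * (q * s - s)) • (d * u)
          + (κ * s * (r - q * s)) • (u * d) := by module
      rw [this, hr, hκ, one_smul, sub_self, mul_zero, zero_smul, add_zero]
    x_xi := h3
    xi_x := h4
    t_ti := by
      rw [htc, smul_mul_smul_comm, inv_mul_cancel₀ hk, one_smul, mul_assoc, ← mul_assoc _ yi, h5, one_mul, h4]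
    ti_t := by
      rw [htc, smul_mul_smul_comm, mul_inv_cancel₀ hk, one_smul, mul_assoc, ← mul_assoc _ xi, h3, one_mul, h6] }

theorem rels (r s : K) :
    (DUL.d K r s * DUL.d K r s * DUL.u K r s =
      (r + s) • (DUL.d K r s * DUL.u K r s * DUL.d K r s) - (r * s) • (DUL.u K r s * DUL.d K r s * DUL.d K r s)) ∧
    (DUL.d K r s * DUL.u K r s * DUL.u K r s =
      (r + s) • (DUL.u K r s * DUL.d K r s * DUL.u K r s) - (r * s) • (DUL.u K r s * DUL.u K r s * DUL.d K r s)) ∧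
    ((DUL.d K r s * DUL.u K r s - r • (DUL.u K r s * DUL.d K r s)) *
      RingQuot.mkAlgHom K (DULRel K r s) (FreeAlgebra.ι K 2) = 1) ∧
    (RingQuot.mkAlgHom K (DULRel K r s) (FreeAlgebra.ι K 2) *
      (DUL.d K r s * DUL.u K r s - r • (DUL.u K r s * DUL.d K r s)) = 1) ∧
    ((DUL.u K r s * DUL.d K r s - s • (DUL.d K r s * DUL.u K r s)) *
      RingQuot.mkAlgHom K (DULRel K r s) (FreeAlgebra.ι K 3) = 1) ∧
    (RingQuot.mkAlgHom K (DULRel K r s) (FreeAlgebra.ι K 3) *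
      (DUL.u K r s * DUL.d K r s - s • (DUL.d K r s * DUL.u K r s)) = 1) := by
  have h1 := RingQuot.mkAlgHom_rel K (DULRel.rel1 (K := K) (r := r) (s := s))
  have h2 := RingQuot.mkAlgHom_rel K (DULRel.rel2 (K := K) (r := r) (s := s))
  have h3 := RingQuot.mkAlgHom_rel K (DULRel.xinvr (K := K) (r := r) (s := s))
  have h4 := RingQuot.mkAlgHom_rel K (DULRel.xinvl (K := K) (r := r) (s := s))
  have h5 := RingQuot.mkAlgHom_rel K (DULRel.yinvr (K := K) (r := r) (s := s))
  have h6 := RingQuot.mkAlgHom_rel K (DULRel.yinvl (K := K) (r := r) (s := s))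
  simp only [map_mul, map_sub, map_smul, map_one] at h1 h2 h3 h4 h5 h6
  exact ⟨h1, h2, h3, h4, h5, h6⟩

/-- The relation data of the localized down-up algebra. -/
def rd (q s : Kˣ) (r κ c : K) (hr : (q : K) * s = r) (hκ : κ * (r - s) = 1)
    (hc : c * (1 - r * s) = 1 - s * s) (h0 : 1 - r * s ≠ 0) : RD q s κ c (DUL K r (s : K)) :=
  toRD q s r κ c hr hκ hc h0 (DUL.d K r s) (DUL.u K r s)
    (RingQuot.mkAlgHom K (DULRel K r s) (FreeAlgebra.ι K 2))
    (RingQuot.mkAlgHom K (DULRel K r s) (FreeAlgebra.ι K 3))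
    (rels r s).1 (rels r s).2.1 (rels r s).2.2.1 (rels r s).2.2.2.1 (rels r s).2.2.2.2.1 (rels r s).2.2.2.2.2

variable (q s : Kˣ) (r κ c : K) (hr : (q : K) * s = r) (hκ : κ * (r - s) = 1)
    (hc : c * (1 - r * s) = 1 - s * s) (h0 : 1 - r * s ≠ 0)

theorem rd_gen : (rd q s r κ c hr hκ hc h0).Gen := by
  unfold RD.Gen
  set R := rd q s r κ c hr hκ hc h0
  set A := Algebra.adjoin K {R.d, R.u, R.x, R.xi, R.t, R.ti} with hA
  have hm : ∀ w ∈ ({R.d, R.u, R.x, R.xi, R.t, R.ti} : Set (DUL K r (s : K))), w ∈ A :=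
    fun w hw => Algebra.subset_adjoin hw
  have hκ0 : κ ≠ 0 := left_ne_zero_of_mul_eq_one hκ
  have hk : κ * (1 - r * s) ≠ 0 := mul_ne_zero hκ0 h0
  have h3 : RingQuot.mkAlgHom K (DULRel K r s) (FreeAlgebra.ι K 3) = (κ * (1 - r * s))⁻¹ • (R.ti * R.xi) := by
    change _ = (κ * (1 - r * s))⁻¹ • ((κ * (1 - r * s)) • (_ * R.x) * R.xi)
    rw [smul_mul_assoc, inv_smul_smul₀ hk, mul_assoc, R.x_xi, mul_one]
  rw [eq_top_iff]
  intro z _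
  obtain ⟨w, rfl⟩ := RingQuot.mkAlgHom_surjective K (DULRel K r s) z
  induction w using FreeAlgebra.induction with
  | grade0 k => rw [AlgHom.commutes]; exact A.algebraMap_mem k
  | grade1 i =>
    fin_cases i
    · exact hm R.d (by simp)
    · exact hm R.u (by simp)
    · exact hm R.xi (by simp)
    · exact h3 ▸ A.smul_mem (A.mul_mem (hm R.ti (by simp)) (hm R.xi (by simp))) _
  | mul a b ha hb => rw [map_mul]; exact A.mul_mem (ha trivial) (hb trivial)
  | add a b ha hb => rw [map_add]; exact A.add_mem (ha trivial) (hb trivial)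

theorem rd_univ : (rd q s r κ c hr hκ hc h0).Univ := by
  intro C _ _ S
  have hκ0 : κ ≠ 0 := left_ne_zero_of_mul_eq_one hκ
  have hk : κ * (1 - r * s) ≠ 0 := mul_ne_zero hκ0 h0
  have ex : S.d * S.u - r • (S.u * S.d) = S.x := by
    rw [S.du, S.ud, mul_sub, mul_sub, mul_smul_comm, mul_one]
    have : (κ * s) • ((q : K) • (S.x * S.t) - S.x) - r • κ • (S.x * S.t - S.x) =
      (κ * (q * s - r)) • (S.x * S.t) + (κ * (r - s)) • S.x := by module
    rw [this, hr, hκ]; simp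
  have ew : S.d * S.u - (s : K) • (S.u * S.d) = S.x * S.t := by
    rw [S.du, S.ud, mul_sub, mul_sub, mul_smul_comm, mul_one]
    have : (κ * s) • ((q : K) • (S.x * S.t) - S.x) - (s : K) • κ • (S.x * S.t - S.x) =
      (κ * (q * s - s)) • (S.x * S.t) := by module
    rw [this, hr, hκ]; simp
  have ey : S.u * S.d - (s : K) • (S.d * S.u) = (κ * (1 - r * s)) • (S.x * (S.t - c • 1)) := by
    rw [S.du, S.ud, mul_sub S.x, mul_sub S.x, mul_sub S.x, mul_smul_comm, mul_smul_comm, mul_one]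
    have : κ • (S.x * S.t - S.x) - (s : K) • (κ * s) • ((q : K) • (S.x * S.t) - S.x) =
      (κ * (1 - (q * s) * s)) • (S.x * S.t) - (κ * (1 - s * s)) • S.x := by module
    rw [this, hr, ← hc]; module
  have hxtc : S.x * (S.t - c • 1) = (S.t - c • 1) * S.x := by
    rw [mul_sub, sub_mul, S.xt]; simp
  have e1 : S.d * S.d * S.u = (r + s) • (S.d * S.u * S.d) - (r * s) • (S.u * S.d * S.d) := by
    have := S.dx
    rw [← ex] at this
    simp only [mul_sub, sub_mul, mul_smul_comm, smul_mul_assoc, ← mul_assoc] at this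
    rw [sub_eq_iff_eq_add] at this
    rw [this]; module
  have e2 : S.d * S.u * S.u = (r + s) • (S.u * S.d * S.u) - (r * s) • (S.u * S.u * S.d) := by
    have := S.xu
    rw [← ex] at this
    simp only [mul_sub, sub_mul, mul_smul_comm, smul_mul_assoc, ← mul_assoc] at this
    rw [sub_eq_iff_eq_add] at this
    rw [this]; module
  let g : FreeAlgebra K (Fin 4) →ₐ[K] C := FreeAlgebra.lift K
    ![S.d, S.u, S.xi, (κ * (1 - r * s))⁻¹ • (S.ti * S.xi)]
  have g0 : g (FreeAlgebra.ι K 0) = S.d := by simp [g]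
  have g1 : g (FreeAlgebra.ι K 1) = S.u := by simp [g]
  have g2 : g (FreeAlgebra.ι K 2) = S.xi := by simp [g]
  have g3 : g (FreeAlgebra.ι K 3) = (κ * (1 - r * s))⁻¹ • (S.ti * S.xi) := by simp [g]
  have hg : ∀ ⦃a b⦄, DULRel K r (s : K) a b → g a = g b := by
    intro a b hab
    cases hab <;> simp only [map_mul, map_sub, map_smul, map_one, g0, g1, g2, g3]
    · exact e1
    · exact e2
    · rw [ex, S.x_xi]
    · rw [ex, S.xi_x]
    · rw [ey, smul_mul_smul_comm, mul_inv_cancel₀ hk, one_smul, mul_assoc, ← mul_assoc _ S.ti, S.t_ti, one_mul, S.x_xi]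
    · rw [ey, smul_mul_smul_comm, inv_mul_cancel₀ hk, one_smul, mul_assoc, ← mul_assoc S.xi, S.xi_x, one_mul, S.ti_t]
  let f := RingQuot.liftAlgHom K ⟨g, hg⟩
  have hf : ∀ w, f (RingQuot.mkAlgHom K (DULRel K r s) w) = g w := fun w =>
    RingQuot.liftAlgHom_mkAlgHom_apply K g hg w
  have f0 : f (DUL.d K r s) = S.d := by rw [DUL.d, hf, g0]
  have f1 : f (DUL.u K r s) = S.u := by rw [DUL.u, hf, g1]
  refine ⟨f, f0, f1, ?_, ?_⟩
  · change f (DUL.d K r s * DUL.u K r s - r • (DUL.u K r s * DUL.d K r s)) = _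
    simp only [map_mul, map_sub, map_smul, f0, f1, ex]
  · change f ((DUL.d K r s * DUL.u K r s - (s : K) • (DUL.u K r s * DUL.d K r s)) *
      RingQuot.mkAlgHom K (DULRel K r s) (FreeAlgebra.ι K 2)) = _
    simp only [map_mul, map_sub, map_smul, f0, f1, ew, hf, g2]
    rw [S.xt, mul_assoc, S.x_xi, mul_one]
end

theorem final {K : Type} [Field K] {B : Type} [Ring B] [Algebra K B] {q s : Kˣ} {κ c : K}
    (R : RD q s κ c B) (hgen : R.Gen) (huniv : R.Univ) (hκ : κ ≠ 0)
    (hind : ∀ a b : ℤ, q ^ a * s ^ b = 1 → a = 0 ∧ b = 0) (hc0 : c ≠ 0) (hc1 : c ≠ 1) (hc2 : c * q ≠ 1)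
    (θ : B →ₐ[K] B) : Function.Bijective θ := by
  by_cases hcq : ∀ k : ℤ, c ≠ ((q ^ k : Kˣ) : K)
  · exact R.generic hgen huniv hind hκ hc0 hcq θ
  push Not at hcq
  obtain ⟨k, hk⟩ := hcq
  by_cases hk0 : 0 ≤ k
  · obtain ⟨m, rfl⟩ := Int.eq_ofNat_of_zero_le hk0
    obtain ⟨Z⟩ := Sp.exist R hκ hind m (by rw [hk, zpow_natCast])
    refine Z.bij hgen huniv ?_ θ
    rw [Nat.one_le_iff_ne_zero]
    intro h
    apply hc1
    rw [Z.hc, h]; simp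
  · obtain ⟨m, hm⟩ := Int.eq_ofNat_of_zero_le (show 0 ≤ -k - 1 by omega)
    have hk' : k = - (m : ℤ) - 1 := by omega
    obtain ⟨Z⟩ := Sp.exist R.swap (mul_ne_zero hκ s.ne_zero) (fun a b h => by
      have := hind (-a) (-b) (by rw [zpow_neg, zpow_neg, ← inv_zpow, ← inv_zpow]; exact h)
      omega) m (by
      rw [hk, ← Units.val_mul, ← zpow_add_one, hk', sub_add_cancel, zpow_neg, zpow_natCast, inv_pow])
    refine Z.bij (RD.swap_gen hgen) (RD.swap_univ huniv) ?_ θ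
    rw [Nat.one_le_iff_ne_zero]
    intro h
    apply hc2
    rw [Z.hc, h]; simp

end DUL

/-- Assume `rᵐsⁿ = 1` implies `m = n = 0` (with `r ≠ s`).  Every `K`-algebra
endomorphism of the localized down-up algebra `A_S(r+s, -rs)` is an algebra
automorphism. -/
theorem stmt14 (K : Type) [Field K] [CharZero K] (r s : K) (hr : r ≠ 0) (hs : s ≠ 0)
    (h : ∀ m n : ℤ, r ^ m * s ^ n = 1 → m = 0 ∧ n = 0) (hne : r ≠ s)
    (θ : DUL K r s →ₐ[K] DUL K r s) :
    Function.Bijective θ := by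
  lift s to Kˣ using hs.isUnit
  have hrs : (1 - r * s : K) ≠ 0 := fun e => by
    have := h 1 1 (by rw [zpow_one, zpow_one]; exact (sub_eq_zero.1 e).symm)
    omega
  have hss : (1 - s * s : K) ≠ 0 := fun e => by
    have := h 0 2 (by rw [zpow_zero, one_mul, zpow_two]; exact (sub_eq_zero.1 e).symm)
    omega
  have hsub : r - s ≠ 0 := sub_ne_zero.2 hne
  have hq : ((Units.mk0 r hr / s : Kˣ) : K) * s = r := by simp
  have hκ : (r - s)⁻¹ * (r - s) = 1 := inv_mul_cancel₀ hsub
  have hc : ((1 - s * s) / (1 - r * s) : K) * (1 - r * s) = 1 - s * s := div_mul_cancel₀ _ hrs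
  refine DUL.final (DUL.rd (Units.mk0 r hr / s) s r _ _ hq hκ hc hrs) (DUL.rd_gen _ _ _ _ _ _ _ _ _)
    (DUL.rd_univ _ _ _ _ _ _ _ _ _) (inv_ne_zero hsub) ?_ (div_ne_zero hss hrs) ?_ ?_ θ
  · intro a b hab
    have h1 := congrArg (Units.val) hab
    rw [div_zpow, div_eq_mul_inv, ← zpow_neg, mul_assoc, ← zpow_add] at h1
    have := h a (-a + b) (by simpa using h1)
    omega
  · intro e
    rw [div_eq_one_iff_eq hrs, sub_right_inj] at e
    exact hne (mul_right_cancel₀ hs e).symm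
  · intro e
    have e1 : (1 - s * s : K) * r = (1 - r * s) * s := by
      have e2 : ((1 - s * s) / (1 - r * s) : K) * (((Units.mk0 r hr / s : Kˣ) : K) * s) * (1 - r * s) = s * (1 - r * s) := by
        rw [← mul_assoc, e, one_mul]
      rw [hq, mul_right_comm, hc] at e2
      rw [e2, mul_comm]
    apply hne
    linear_combination e1
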